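/- There exist two real numbers c and K with K > c > 0 such that for all x ≥ 2, one has c·x/log x ≤ f_a(x) ≤ K·x/log x. -/

import Mathlib

/-- `Pmax n` is the largest prime factor of `n`, with the convention `Pmax 1 = 1`. -/
def Pmax (n : ℕ) : ℕ := if n ≤ 1 then 1 else n.primeFactors.sup id

/-- The Schinzel–Szekeres function: if `n = p₁ p₂ ⋯ p_Ω` with `p₁ ≥ p₂ ≥ ⋯ ≥ p_Ω` prime,
`SS n = max_{1 ≤ k ≤ Ω} p₁ ⋯ p_{k-1} p_k²`, and `SS 1 = 1`.
(`Nat.primeFactorsList n` is the *increasing* list of prime factors with multiplicity;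
the value produced for the index `j` is the one for `k = Ω - j`.) -/
def SS (n : ℕ) : ℕ :=
  ((List.range n.primeFactorsList.length).map
    (fun j => (n.primeFactorsList.drop j).headI * (n.primeFactorsList.drop j).prod)).foldr max 1

/-- A chain in the divisor graph: a finite sequence of pairwise distinct positive
integers in which any two consecutive terms are adjacent in the divisor graph
(the smaller divides the larger). -/
def IsDivChain (l : List ℕ) : Prop :=
  l.Nodup ∧ (∀ n ∈ l, 0 < n) ∧ l.Chain' (fun a b => a ∣ b ∨ b ∣ a)

/-- `fa x` is the maximum length of a chain all of whose terms belong to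
`𝒜(x) = {n ≥ 1 : S(n) ≤ x}`. -/
noncomputable def fa (x : ℝ) : ℕ :=
  sSup {L : ℕ | ∃ l : List ℕ, IsDivChain l ∧
    (∀ n ∈ l, 1 ≤ n ∧ (SS n : ℝ) ≤ x) ∧ l.length = L}


/-! ### Mertens type estimates -/

/-- Primes in `(w, y]`. -/
def PrI (w y : ℕ) : Finset ℕ := (Finset.Ioc w y).filter Nat.Prime

lemma mem_PrI {w y p : ℕ} : p ∈ PrI w y ↔ (w < p ∧ p ≤ y) ∧ p.Prime := by
  simp [PrI]

lemma log_factorial_eq_sum (n : ℕ) :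
    Real.log (n.factorial : ℝ) = ∑ p ∈ PrI 0 n, (n.factorial.factorization p : ℝ) * Real.log p := by
  have h0 : n.factorial ≠ 0 := n.factorial_ne_zero
  conv_lhs => rw [← Nat.prod_factorization_pow_eq_self h0]
  rw [Finsupp.prod, Nat.cast_prod, Real.log_prod]
  · have hs : n.factorial.factorization.support ⊆ PrI 0 n := by
      intro p hp
      rw [Nat.support_factorization, Nat.mem_primeFactors] at hp
      rw [mem_PrI]
      exact ⟨⟨hp.1.pos, (hp.1.dvd_factorial).1 hp.2.1⟩, hp.1⟩
    rw [← Finset.sum_subset hs]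
    · refine Finset.sum_congr rfl fun p _ => ?_
      push_cast
      rw [Real.log_pow]
    · intro p _ hp
      rw [Finsupp.notMem_support_iff.1 hp]
      simp
  · intro p hp
    have : p.Prime := Nat.prime_of_mem_primeFactors (by simpa using hp)
    have := this.pos
    positivity

lemma mertens_upper_aux (n : ℕ) (hn : 1 ≤ n) :
    ∑ p ∈ PrI 0 n, Real.log p / p ≤ Real.log n + Real.log 4 := by
  have hn0 : (0 : ℝ) < n := by exact_mod_cast hn
  have h1 : Real.log (n.factorial : ℝ) ≤ n * Real.log n := by
    rw [← Real.log_pow]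
    apply Real.log_le_log (by exact_mod_cast n.factorial_pos)
    exact_mod_cast Nat.factorial_le_pow n
  rw [log_factorial_eq_sum] at h1
  have h2 : ∑ p ∈ PrI 0 n, ((n : ℝ) / p - 1) * Real.log p ≤
      ∑ p ∈ PrI 0 n, (n.factorial.factorization p : ℝ) * Real.log p := by
    refine Finset.sum_le_sum fun p hp => ?_
    rw [mem_PrI] at hp
    apply mul_le_mul_of_nonneg_right _ (Real.log_natCast_nonneg p)
    have : n / p ≤ n.factorial.factorization p := by
      rw [Nat.factorization_factorial hp.2 (Nat.lt_succ_self _)]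
      have : n / p = n / p ^ 1 := by simp
      rw [this]
      refine Finset.single_le_sum (f := fun i => n / p ^ i) (fun _ _ => Nat.zero_le _) ?_
      simp only [Finset.mem_Ico, le_refl, true_and]
      have := Nat.log_pos hp.2.one_lt hp.1.2
      omega
    have h3 : (n : ℝ) / p < (n / p : ℕ) + 1 := by
      have := Nat.lt_floor_add_one ((n : ℝ) / p)
      rwa [Nat.floor_div_eq_div] at this
    have h4 : ((n / p : ℕ) : ℝ) ≤ n.factorial.factorization p := by exact_mod_cast this
    linarith
  have h5 : ∑ p ∈ PrI 0 n, Real.log p ≤ Real.log 4 * n := by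
    have := Chebyshev.theta_le_log4_mul_x (x := n) hn0.le
    rw [Chebyshev.theta_eq_sum_Icc, Nat.floor_natCast] at this
    refine le_trans (le_of_eq ?_) this
    refine Finset.sum_congr ?_ fun _ _ => rfl
    ext p
    simp only [mem_PrI, Finset.mem_filter, Finset.mem_Icc]
    constructor
    · rintro ⟨⟨_, h⟩, h'⟩; exact ⟨⟨Nat.zero_le _, h⟩, h'⟩
    · rintro ⟨⟨_, h⟩, h'⟩; exact ⟨⟨h'.pos, h⟩, h'⟩
  have h6 : ∑ p ∈ PrI 0 n, ((n : ℝ) / p - 1) * Real.log p =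
      n * ∑ p ∈ PrI 0 n, Real.log p / p - ∑ p ∈ PrI 0 n, Real.log p := by
    rw [Finset.mul_sum, ← Finset.sum_sub_distrib]
    refine Finset.sum_congr rfl fun p _ => ?_
    ring
  have h7 : n * ∑ p ∈ PrI 0 n, Real.log p / p ≤ n * (Real.log n + Real.log 4) := by linarith
  exact le_of_mul_le_mul_left h7 hn0

lemma mertens_lower_aux (n : ℕ) (hn : 1 ≤ n) :
    Real.log n - 1 ≤ ∑ p ∈ PrI 0 n, Real.log p / (p - 1) := by
  have hn0 : (0 : ℝ) < n := by exact_mod_cast hn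
  have h1 : n * Real.log n - n ≤ Real.log (n.factorial : ℝ) := by
    have := Stirling.le_log_factorial_stirling (n := n) (by omega)
    have h2 : 0 ≤ Real.log n := Real.log_natCast_nonneg n
    have h3 : 0 ≤ Real.log (2 * Real.pi) := Real.log_nonneg (by nlinarith [Real.pi_gt_three])
    linarith
  rw [log_factorial_eq_sum] at h1
  have h2 : ∑ p ∈ PrI 0 n, (n.factorial.factorization p : ℝ) * Real.log p ≤
      ∑ p ∈ PrI 0 n, n * (Real.log p / (p - 1)) := by
    refine Finset.sum_le_sum fun p hp => ?_
    rw [mem_PrI] at hp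
    have hp1 : (1 : ℝ) < p := by exact_mod_cast hp.2.one_lt
    have h3 : (p - 1) * n.factorial.factorization p ≤ n := by
      rw [Nat.sub_one_mul_factorization_factorial hp.2]; omega
    have h4 : ((p : ℝ) - 1) * n.factorial.factorization p ≤ n := by
      have : (((p - 1) * n.factorial.factorization p : ℕ) : ℝ) ≤ n := by exact_mod_cast h3
      rw [Nat.cast_mul, Nat.cast_sub hp.2.one_lt.le] at this
      simpa using this
    have h5 : (n.factorial.factorization p : ℝ) ≤ n / (p - 1) := by
      rw [le_div_iff₀ (by linarith)]; linarith
    calc _ ≤ (n / (p - 1)) * Real.log p :=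
          mul_le_mul_of_nonneg_right h5 (Real.log_natCast_nonneg p)
      _ = _ := by ring
  rw [← Finset.mul_sum] at h2
  have : n * (Real.log n - 1) ≤ n * ∑ p ∈ PrI 0 n, Real.log p / (p - 1) := by linarith
  exact le_of_mul_le_mul_left this hn0

lemma exists_log_div_sq_bound : ∃ C : ℝ, 0 ≤ C ∧ ∀ s : Finset ℕ,
    ∑ n ∈ s, Real.log n / (n : ℝ) ^ 2 ≤ C := by
  have hs : Summable (fun n : ℕ => 2 * (1 / (n : ℝ) ^ (3 / 2 : ℝ))) :=
    (Real.summable_one_div_nat_rpow.2 (by norm_num)).mul_left 2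
  have hnn : ∀ n : ℕ, 0 ≤ 2 * (1 / (n : ℝ) ^ (3 / 2 : ℝ)) := fun n => by positivity
  refine ⟨∑' n : ℕ, 2 * (1 / (n : ℝ) ^ (3 / 2 : ℝ)), tsum_nonneg hnn, fun s => ?_⟩
  refine le_trans (Finset.sum_le_sum fun n _ => ?_) (hs.sum_le_tsum s fun n _ => hnn n)
  rcases Nat.eq_zero_or_pos n with rfl | hn
  · simp
  have hn0 : (0 : ℝ) < n := by exact_mod_cast hn
  have h1 := Real.log_le_rpow_div hn0.le (show (0 : ℝ) < 1 / 2 by norm_num)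
  have h2 : (n : ℝ) ^ (1 / 2 : ℝ) * (n : ℝ) ^ (3 / 2 : ℝ) = (n : ℝ) ^ 2 := by
    rw [← Real.rpow_add hn0, ← Real.rpow_natCast]; norm_num
  rw [div_le_iff₀ (by positivity), ← h2]
  have h3 : (0 : ℝ) < (n : ℝ) ^ (3 / 2 : ℝ) := by positivity
  calc Real.log n ≤ (n : ℝ) ^ (1 / 2 : ℝ) / (1 / 2) := h1
    _ = _ := by field_simp

lemma mertens1 : ∃ R : ℝ, 1 ≤ R ∧ ∀ n : ℕ, 1 ≤ n →
    |∑ p ∈ PrI 0 n, Real.log p / p - Real.log n| ≤ R := by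
  obtain ⟨C, hC, hb⟩ := exists_log_div_sq_bound
  refine ⟨2 + 2 * C, by linarith, fun n hn => ?_⟩
  have h1 := mertens_upper_aux n hn
  have h2 := mertens_lower_aux n hn
  have h3 : ∑ p ∈ PrI 0 n, Real.log p / ((p : ℝ) - 1) ≤
      ∑ p ∈ PrI 0 n, (Real.log p / p + 2 * (Real.log p / (p : ℝ) ^ 2)) := by
    refine Finset.sum_le_sum fun p hp => ?_
    rw [mem_PrI] at hp
    have hp1 : (2 : ℝ) ≤ p := by exact_mod_cast hp.2.two_le
    have h0 := Real.log_natCast_nonneg p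
    have : 1 / ((p : ℝ) - 1) ≤ 1 / p + 2 * (1 / (p : ℝ) ^ 2) := by
      rw [div_le_iff₀ (by linarith)]
      have : (1 / (p : ℝ) + 2 * (1 / (p : ℝ) ^ 2)) * (p - 1) - 1 = (p - 2) / p ^ 2 := by
        field_simp; ring
      have : 0 ≤ ((p : ℝ) - 2) / p ^ 2 := div_nonneg (by linarith) (by positivity)
      linarith
    calc Real.log p / ((p : ℝ) - 1) = Real.log p * (1 / ((p : ℝ) - 1)) := by ring
      _ ≤ Real.log p * (1 / p + 2 * (1 / (p : ℝ) ^ 2)) := mul_le_mul_of_nonneg_left this h0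
      _ = _ := by ring
  rw [Finset.sum_add_distrib, ← Finset.mul_sum] at h3
  have h4 := hb (PrI 0 n)
  have h5 : Real.log 4 ≤ 2 := by
    have : Real.log 4 = 2 * Real.log 2 := by
      rw [show (4 : ℝ) = 2 ^ 2 by norm_num, Real.log_pow]; norm_num
    have := Real.log_two_lt_d9
    linarith
  rw [abs_le]
  constructor <;> linarith

lemma PrI_zero_eq_union {w y : ℕ} (h : w ≤ y) (f : ℕ → ℝ) :
    ∑ p ∈ PrI 0 y, f p = ∑ p ∈ PrI 0 w, f p + ∑ p ∈ PrI w y, f p := by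
  rw [← Finset.sum_union]
  · refine Finset.sum_congr ?_ fun _ _ => rfl
    ext p
    simp only [Finset.mem_union, mem_PrI]
    constructor
    · rintro ⟨⟨h1, h2⟩, h3⟩
      rcases le_or_gt p w with h4 | h4
      · exact Or.inl ⟨⟨h1, h4⟩, h3⟩
      · exact Or.inr ⟨⟨h4, h2⟩, h3⟩
    · rintro (⟨⟨h1, h2⟩, h3⟩ | ⟨⟨h1, h2⟩, h3⟩)
      · exact ⟨⟨h1, h2.trans h⟩, h3⟩
      · exact ⟨⟨h3.pos, h2⟩, h3⟩
  · rw [Finset.disjoint_left]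
    intro p hp hp'
    rw [mem_PrI] at hp hp'
    omega

lemma PrI_succ (w y : ℕ) (f : ℕ → ℝ) : ∑ p ∈ PrI w (y + 1), f p =
    ∑ p ∈ PrI w y, f p + if (y + 1).Prime ∧ w < y + 1 then f (y + 1) else 0 := by
  have : PrI w (y + 1) = if (y + 1).Prime ∧ w < y + 1 then insert (y + 1) (PrI w y)
      else PrI w y := by
    ext p
    split_ifs with h
    · simp only [Finset.mem_insert, mem_PrI]
      constructor
      · rintro ⟨⟨h1, h2⟩, h3⟩
        rcases eq_or_ne p (y + 1) with h4 | h4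
        · exact Or.inl h4
        · exact Or.inr ⟨⟨h1, by omega⟩, h3⟩
      · rintro (rfl | ⟨⟨h1, h2⟩, h3⟩)
        · exact ⟨⟨h.2, le_rfl⟩, h.1⟩
        · exact ⟨⟨h1, by omega⟩, h3⟩
    · simp only [mem_PrI]
      constructor
      · rintro ⟨⟨h1, h2⟩, h3⟩
        refine ⟨⟨h1, ?_⟩, h3⟩
        rcases eq_or_ne p (y + 1) with rfl | h4
        · exact absurd ⟨h3, h1⟩ h
        · omega
      · rintro ⟨⟨h1, h2⟩, h3⟩; exact ⟨⟨h1, by omega⟩, h3⟩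
  rw [this]
  split_ifs with h
  · rw [Finset.sum_insert, add_comm]
    rw [mem_PrI]; omega
  · simp

/-- the sum of `log p / p` over `(w, y]`. -/
lemma mertens1' : ∃ R : ℝ, 1 ≤ R ∧ ∀ w y : ℕ, 1 ≤ w → w ≤ y →
    |∑ p ∈ PrI w y, Real.log p / p - Real.log (y / w)| ≤ R := by
  obtain ⟨R, hR, h⟩ := mertens1
  refine ⟨2 * R, by linarith, fun w y hw hy => ?_⟩
  have h1 := h w hw
  have h2 := h y (hw.trans hy)
  rw [PrI_zero_eq_union hy] at h2
  have hy0 : (y : ℝ) ≠ 0 := by exact_mod_cast (by omega : y ≠ 0)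
  have hw0 : (w : ℝ) ≠ 0 := by exact_mod_cast (by omega : w ≠ 0)
  rw [Real.log_div hy0 hw0]
  rw [abs_le] at *
  constructor <;> linarith [h1.1, h1.2, h2.1, h2.2]

lemma log_succ_sub_le (y : ℕ) (hy : 2 ≤ y) :
    (Real.log (y + 1) - Real.log y) / Real.log (y + 1) ≤
      Real.log (Real.log (y + 1)) - Real.log (Real.log y) ∧
    Real.log (Real.log (y + 1)) - Real.log (Real.log y) ≤
      (Real.log (y + 1) - Real.log y) / Real.log y ∧
    0 < Real.log y ∧ Real.log y ≤ Real.log (y + 1) ∧ Real.log (y + 1) - Real.log y ≤ 1 := by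
  have hy' : (2 : ℝ) ≤ y := by exact_mod_cast hy
  have h1 : 0 < Real.log y := Real.log_pos (by linarith)
  have h2 : Real.log y ≤ Real.log (y + 1) := Real.log_le_log (by linarith) (by linarith)
  have h3 : 0 < Real.log ((y : ℝ) + 1) := by linarith
  rw [← Real.log_div h3.ne' h1.ne']
  refine ⟨?_, ?_, h1, h2, ?_⟩
  · have := Real.one_sub_inv_le_log_of_pos (div_pos h3 h1)
    refine le_trans (le_of_eq ?_) this
    field_simp
  · have := Real.log_le_sub_one_of_pos (div_pos h3 h1)
    refine this.trans (le_of_eq ?_)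
    field_simp
  · rw [← Real.log_div (by linarith) (by linarith)]
    have := Real.log_le_sub_one_of_pos (show 0 < ((y : ℝ) + 1) / y by positivity)
    refine this.trans ?_
    rw [sub_le_iff_le_add, div_le_iff₀ (by linarith)]
    linarith

lemma mertens2 : ∃ C : ℝ, ∀ n : ℕ, 2 ≤ n →
    |∑ p ∈ PrI 0 n, 1 / (p : ℝ) - Real.log (Real.log n)| ≤ C := by
  obtain ⟨R, hR, hM⟩ := mertens1
  set A : ℕ → ℝ := fun n => ∑ p ∈ PrI 0 n, Real.log p / p with hA
  set S : ℕ → ℝ := fun n => ∑ p ∈ PrI 0 n, 1 / (p : ℝ) with hS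
  have hstep : ∀ y : ℕ, 2 ≤ y → S (y + 1) - S y = (A (y + 1) - A y) / Real.log (y + 1) := by
    intro y hy
    have hl : 0 < Real.log ((y : ℝ) + 1) := Real.log_pos (by
      have : (2 : ℝ) ≤ y := by exact_mod_cast hy
      linarith)
    simp only [hA, hS]
    rw [PrI_succ, PrI_succ]
    split_ifs
    · push_cast; field_simp; ring
    · simp
  have hup : ∀ y : ℕ, 2 ≤ y → S y ≤ Real.log (Real.log y) +
      (S 2 - Real.log (Real.log 2) - (A 2 - Real.log 2 - R) / Real.log 2)
      + (A y - Real.log y - R) / Real.log y := by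
    intro y hy
    induction y, hy using Nat.le_induction with
    | base => push_cast; linarith
    | succ y hy ih =>
      obtain ⟨h1, h2, h3, h4, h5⟩ := log_succ_sub_le y hy
      have hE : A y - Real.log y - R ≤ 0 := by
        have := (abs_le.1 (hM y (by omega))).2; simp only [hA]; linarith
      have h6 := hstep y hy
      have h7 : 1 / Real.log ((y : ℝ) + 1) ≤ 1 / Real.log y := one_div_le_one_div_of_le h3 h4
      have h8 : (A y - Real.log y - R) / Real.log y ≤
          (A y - Real.log y - R) / Real.log (y + 1) := by
        rw [div_eq_mul_one_div, div_eq_mul_one_div _ (Real.log ((y : ℝ) + 1))]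
        exact mul_le_mul_of_nonpos_left h7 hE
      push_cast
      have h9 : (A (y + 1) - Real.log (y + 1) - R) / Real.log (y + 1) =
        (A y - Real.log y - R) / Real.log (y + 1) + (A (y + 1) - A y) / Real.log (y + 1)
        - (Real.log (y + 1) - Real.log y) / Real.log (y + 1) := by ring
      rw [h9]
      linarith
  have hlo : ∀ y : ℕ, 2 ≤ y → Real.log (Real.log y) +
      (S 2 - Real.log (Real.log 2) - (A 2 - Real.log 2 + R) / Real.log 2 - 1 / Real.log 2)
      + (A y - Real.log y + R) / Real.log y + 1 / Real.log y ≤ S y := by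
    intro y hy
    induction y, hy using Nat.le_induction with
    | base => push_cast; linarith
    | succ y hy ih =>
      obtain ⟨h1, h2, h3, h4, h5⟩ := log_succ_sub_le y hy
      have hE : 0 ≤ A y - Real.log y + R := by
        have := (abs_le.1 (hM y (by omega))).1; simp only [hA]; linarith
      have h6 := hstep y hy
      have h7 : 1 / Real.log ((y : ℝ) + 1) ≤ 1 / Real.log y := one_div_le_one_div_of_le h3 h4
      have h8 : (A y - Real.log y + R) / Real.log (y + 1) ≤
          (A y - Real.log y + R) / Real.log y := by
        rw [div_eq_mul_one_div, div_eq_mul_one_div _ (Real.log (y : ℝ))]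
        exact mul_le_mul_of_nonneg_left h7 hE
      push_cast
      have h9 : (A (y + 1) - Real.log (y + 1) + R) / Real.log (y + 1) =
        (A y - Real.log y + R) / Real.log (y + 1) + (A (y + 1) - A y) / Real.log (y + 1)
        - (Real.log (y + 1) - Real.log y) / Real.log (y + 1) := by ring
      rw [h9]
      have h10 : (Real.log (y + 1) - Real.log y) * (1 / Real.log y - 1 / Real.log ((y : ℝ) + 1)) ≤
          1 * (1 / Real.log y - 1 / Real.log ((y : ℝ) + 1)) :=
        mul_le_mul_of_nonneg_right h5 (by linarith)
      have h11 : (Real.log (y + 1) - Real.log y) * (1 / Real.log y - 1 / Real.log ((y : ℝ) + 1)) =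
        (Real.log (y + 1) - Real.log y) / Real.log y
         - (Real.log (y + 1) - Real.log y) / Real.log (y + 1) := by ring
      linarith
  set c1 := S 2 - Real.log (Real.log 2) - (A 2 - Real.log 2 - R) / Real.log 2
  set c2 := S 2 - Real.log (Real.log 2) - (A 2 - Real.log 2 + R) / Real.log 2 - 1 / Real.log 2
  refine ⟨|c1| + |c2|, fun n hn => ?_⟩
  have hl : 0 < Real.log (n : ℝ) := Real.log_pos (by exact_mod_cast (by omega : 1 < n))
  have hE := abs_le.1 (hM n (by omega))
  have h1 : (A n - Real.log n - R) / Real.log n ≤ 0 :=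
    div_nonpos_of_nonpos_of_nonneg (by simp only [hA]; linarith [hE.2]) hl.le
  have h2 : 0 ≤ (A n - Real.log n + R) / Real.log n :=
    div_nonneg (by simp only [hA]; linarith [hE.1]) hl.le
  have h3 : 0 ≤ 1 / Real.log (n : ℝ) := by positivity
  have h4 := hup n hn
  have h5 := hlo n hn
  have := le_abs_self c1
  have := neg_abs_le c2
  have := abs_nonneg c1
  have := abs_nonneg c2
  rw [abs_le]
  constructor <;> simp only [hS] at * <;> linarith

/-- `W_w(y) = ∏_{w < p ≤ y} (1 + 1/p)`. -/
noncomputable def WW (w y : ℕ) : ℝ := ∏ p ∈ PrI w y, (1 + 1 / (p : ℝ))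

lemma WW_pos (w y : ℕ) : 0 < WW w y := Finset.prod_pos fun p _ => by positivity

lemma WW_zero_mul {w y : ℕ} (h : w ≤ y) : WW 0 y = WW 0 w * WW w y := by
  unfold WW
  have := PrI_zero_eq_union h (fun p => Real.log (1 + 1 / (p : ℝ)))
  rw [← Real.log_prod (fun p _ => by positivity), ← Real.log_prod (fun p _ => by positivity),
    ← Real.log_prod (fun p _ => by positivity), ← Real.log_mul] at this
  · exact Real.log_injOn_pos (WW_pos 0 y) (mul_pos (WW_pos 0 w) (WW_pos w y)) this
  · exact (WW_pos 0 w).ne'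
  · exact (WW_pos w y).ne'

lemma WW_bounds : ∃ c C : ℝ, 0 < c ∧ 0 < C ∧ ∀ y : ℕ, 2 ≤ y →
    c * Real.log y ≤ WW 0 y ∧ WW 0 y ≤ C * Real.log y := by
  obtain ⟨C, hC⟩ := mertens2
  obtain ⟨C', hC', hb⟩ := exists_log_div_sq_bound
  refine ⟨Real.exp (- C - 2 * C'), Real.exp C, Real.exp_pos _, Real.exp_pos _, fun y hy => ?_⟩
  have hl : 0 < Real.log (y : ℝ) := Real.log_pos (by exact_mod_cast (by omega : 1 < y))
  have h := abs_le.1 (hC y hy)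
  constructor
  · have h1 : Real.exp (∑ p ∈ PrI 0 y, (1 / (p : ℝ) - 2 * (Real.log p / (p : ℝ) ^ 2))) ≤ WW 0 y := by
      rw [Real.exp_sum]
      unfold WW
      refine Finset.prod_le_prod (fun _ _ => (Real.exp_pos _).le) fun p hp => ?_
      rw [mem_PrI] at hp
      have hp1 : (2 : ℝ) ≤ p := by exact_mod_cast hp.2.two_le
      have hl2 : 1 / 2 ≤ Real.log p := by
        have := Real.log_two_gt_d9
        have := Real.log_le_log (by norm_num) hp1
        linarith
      have h2 := Real.one_sub_inv_le_log_of_pos (show 0 < 1 + 1 / (p : ℝ) by positivity)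
      rw [← Real.le_log_iff_exp_le (by positivity)]
      refine le_trans ?_ h2
      have h3 : 1 / (p : ℝ) ^ 2 ≤ 2 * (Real.log p / (p : ℝ) ^ 2) := by
        rw [← mul_div_assoc]
        exact div_le_div_of_nonneg_right (by linarith) (by positivity)
      have h4 : 1 - (1 + 1 / (p : ℝ))⁻¹ - (1 / (p : ℝ) - 1 / (p : ℝ) ^ 2) =
          1 / ((p : ℝ) ^ 2 * (p + 1)) := by
        field_simp; ring
      have : 0 ≤ 1 / ((p : ℝ) ^ 2 * (p + 1)) := by positivity
      linarith
    refine le_trans ?_ h1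
    rw [Finset.sum_sub_distrib, ← Finset.mul_sum]
    have h2 := hb (PrI 0 y)
    calc Real.exp (-C - 2 * C') * Real.log y
        = Real.exp (-C - 2 * C' + Real.log (Real.log y)) := by rw [Real.exp_add, Real.exp_log hl]
      _ ≤ _ := Real.exp_le_exp.2 (by linarith [h.1])
  · calc WW 0 y ≤ ∏ p ∈ PrI 0 y, Real.exp (1 / (p : ℝ)) := by
          refine Finset.prod_le_prod (fun p _ => by positivity) fun p _ => ?_
          rw [add_comm]; exact Real.add_one_le_exp _
      _ = Real.exp (∑ p ∈ PrI 0 y, 1 / (p : ℝ)) := (Real.exp_sum _ _).symm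
      _ ≤ Real.exp (C + Real.log (Real.log y)) := Real.exp_le_exp.2 (by linarith [h.2])
      _ = _ := by rw [Real.exp_add, Real.exp_log hl]

/-- `V_w(y) = ∑_{w < p ≤ y} log p / (p+1)`. -/
noncomputable def VV (w y : ℕ) : ℝ := ∑ p ∈ PrI w y, Real.log p / ((p : ℝ) + 1)

lemma VV_nonneg (w y : ℕ) : 0 ≤ VV w y :=
  Finset.sum_nonneg fun p _ => div_nonneg (Real.log_natCast_nonneg p) (by positivity)

lemma VV_bound (w : ℕ) : ∃ R : ℝ, 1 ≤ R ∧ ∀ y : ℕ, 1 ≤ y → |VV w y - Real.log y| ≤ R := by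
  obtain ⟨R, hR, hM⟩ := mertens1
  obtain ⟨C, hC, hb⟩ := exists_log_div_sq_bound
  set S0 := ∑ p ∈ PrI 0 w, Real.log p / p with hS0
  have hS0n : 0 ≤ S0 := Finset.sum_nonneg fun p _ =>
    div_nonneg (Real.log_natCast_nonneg p) (by positivity)
  refine ⟨R + C + S0, by linarith, fun y hy => ?_⟩
  have h1 : VV w y ≤ ∑ p ∈ PrI 0 y, Real.log p / p := by
    unfold VV
    refine le_trans (Finset.sum_le_sum_of_subset_of_nonneg (t := PrI 0 y) ?_ ?_) ?_
    · intro p hp; rw [mem_PrI] at *; exact ⟨⟨hp.2.pos, hp.1.2⟩, hp.2⟩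
    · intro p _ _; exact div_nonneg (Real.log_natCast_nonneg p) (by positivity)
    · refine Finset.sum_le_sum fun p hp => ?_
      have : (0 : ℝ) < p := by exact_mod_cast (mem_PrI.1 hp).2.pos
      exact div_le_div_of_nonneg_left (Real.log_natCast_nonneg p) this (by linarith)
  have h2 : ∑ p ∈ PrI 0 y, Real.log p / p ≤ S0 + ∑ p ∈ PrI w y, Real.log p / p := by
    rcases le_total w y with h | h
    · rw [PrI_zero_eq_union h]
    · have : ∑ p ∈ PrI 0 y, Real.log p / p ≤ S0 := by
        refine Finset.sum_le_sum_of_subset_of_nonneg ?_ ?_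
        · intro p hp; rw [mem_PrI] at *; exact ⟨⟨hp.1.1, hp.1.2.trans h⟩, hp.2⟩
        · intro p _ _; exact div_nonneg (Real.log_natCast_nonneg p) (by positivity)
      have : 0 ≤ ∑ p ∈ PrI w y, Real.log p / p := Finset.sum_nonneg fun p _ =>
        div_nonneg (Real.log_natCast_nonneg p) (by positivity)
      linarith
  have h3 : ∑ p ∈ PrI w y, Real.log p / p ≤ VV w y + C := by
    refine le_trans ?_ (add_le_add le_rfl (hb (PrI w y)))
    unfold VV
    rw [← Finset.sum_add_distrib]
    refine Finset.sum_le_sum fun p hp => ?_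
    have : (0 : ℝ) < p := by exact_mod_cast (mem_PrI.1 hp).2.pos
    have h4 : 1 / (p : ℝ) ≤ 1 / (p + 1) + 1 / (p : ℝ) ^ 2 := by
      have : 1 / ((p : ℝ) + 1) + 1 / (p : ℝ) ^ 2 - 1 / p = 1 / ((p : ℝ) ^ 2 * (p + 1)) := by
        field_simp; ring
      have : 0 ≤ 1 / ((p : ℝ) ^ 2 * (p + 1)) := by positivity
      linarith
    calc Real.log p / p = Real.log p * (1 / p) := by ring
      _ ≤ Real.log p * (1 / (p + 1) + 1 / (p : ℝ) ^ 2) :=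
        mul_le_mul_of_nonneg_left h4 (Real.log_natCast_nonneg p)
      _ = _ := by ring
  have h4 := abs_le.1 (hM y hy)
  rw [abs_le]
  constructor <;> linarith [h4.1, h4.2]


/-! ### Smooth parts and dense integers -/

/-- The part of `n` composed of primes `< p`. -/
def sm (n p : ℕ) : ℕ := (n.primeFactorsList.filter (· < p)).prod

lemma sm_mul {a b : ℕ} (ha : a ≠ 0) (hb : b ≠ 0) (p : ℕ) : sm (a * b) p = sm a p * sm b p := by
  unfold sm
  rw [((Nat.perm_primeFactorsList_mul ha hb).filter _).prod_eq, List.filter_append,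
    List.prod_append]

lemma sm_pos (n p : ℕ) : 0 < sm n p := by
  unfold sm
  apply List.prod_pos
  intro q hq
  exact Nat.pos_of_mem_primeFactorsList (List.mem_of_mem_filter hq)

lemma sm_prime {q : ℕ} (hq : q.Prime) (p : ℕ) : sm q p = if q < p then q else 1 := by
  unfold sm
  rw [Nat.primeFactorsList_prime hq]
  by_cases h : q < p <;> simp [h]

lemma sm_one (p : ℕ) : sm 1 p = 1 := by simp [sm]

lemma sm_eq_self {n p : ℕ} (hn : n ≠ 0) (h : ∀ q : ℕ, q.Prime → q ∣ n → q < p) : sm n p = n := by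
  unfold sm
  rw [List.filter_eq_self.2, Nat.prod_primeFactorsList hn]
  intro q hq
  simpa using h q (Nat.prime_of_mem_primeFactorsList hq) (Nat.dvd_of_mem_primeFactorsList hq)

lemma sm_eq_one {n p : ℕ} (h : ∀ q : ℕ, q.Prime → q ∣ n → p ≤ q) : sm n p = 1 := by
  unfold sm
  rw [List.filter_eq_nil_iff.2, List.prod_nil]
  intro q hq
  simpa using h q (Nat.prime_of_mem_primeFactorsList hq) (Nat.dvd_of_mem_primeFactorsList hq)

lemma sm_dvd {n : ℕ} (hn : n ≠ 0) (p : ℕ) : sm n p ∣ n := by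
  conv_rhs => rw [← Nat.prod_primeFactorsList hn]
  exact (List.filter_sublist).prod_dvd_prod

/-- `t`-dense integers. -/
def Dns (t : ℕ) (n : ℕ) : Prop := ∀ p : ℕ, p.Prime → p ∣ n → p ≤ t * sm n p

/-- Squarefree `t`-dense integers with all prime factors in `(w, y]`. -/
def DD (w t : ℕ) : ℕ → Finset ℕ
  | 0 => {1}
  | y + 1 => if (y + 1).Prime ∧ w < y + 1 then
      DD w t y ∪ ((DD w t y).filter fun a => y + 1 ≤ t * a).image fun a => a * (y + 1)
    else DD w t y

lemma DD_mono_succ (w t y : ℕ) : DD w t y ⊆ DD w t (y + 1) := by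
  rw [DD]
  split_ifs
  · exact Finset.subset_union_left
  · exact subset_rfl

lemma DD_mono (w t : ℕ) {y y' : ℕ} (h : y ≤ y') : DD w t y ⊆ DD w t y' := by
  induction y', h using Nat.le_induction with
  | base => exact subset_rfl
  | succ y' h ih => exact ih.trans (DD_mono_succ _ _ _)

lemma one_mem_DD (w t y : ℕ) : 1 ∈ DD w t y := DD_mono w t (Nat.zero_le y) (by simp [DD])

lemma mem_DD {w t y n : ℕ} : n ∈ DD w t y ↔ Squarefree n ∧
    (∀ p : ℕ, p.Prime → p ∣ n → w < p ∧ p ≤ y) ∧ Dns t n := by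
  induction y generalizing n with
  | zero =>
    simp only [DD, Finset.mem_singleton]
    constructor
    · rintro rfl
      refine ⟨squarefree_one, fun p hp h => ?_, fun p hp h => ?_⟩
      · exact absurd (Nat.dvd_one.1 h) hp.ne_one
      · exact absurd (Nat.dvd_one.1 h) hp.ne_one
    · rintro ⟨h1, h2, h3⟩
      by_contra hne
      have := (h2 _ (Nat.minFac_prime hne) (Nat.minFac_dvd n)).2
      have := (Nat.minFac_prime hne).pos
      omega
  | succ y ih =>
    have hnp : ∀ a, a ∈ DD w t y → ¬ (y + 1) ∣ a ∨ ¬ (y + 1).Prime := by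
      intro a ha
      by_contra hcon
      push Not at hcon
      have := ((ih.1 ha).2.1 _ hcon.2 hcon.1).2
      omega
    rw [DD]
    constructor
    · intro h
      have hold : n ∈ DD w t y → Squarefree n ∧
        (∀ p : ℕ, p.Prime → p ∣ n → w < p ∧ p ≤ y + 1) ∧ Dns t n := by
        intro h
        obtain ⟨h1, h2, h3⟩ := ih.1 h
        exact ⟨h1, fun p hp hd => ⟨(h2 p hp hd).1, (h2 p hp hd).2.trans (Nat.le_succ y)⟩, h3⟩
      split_ifs at h with hp
      · rw [Finset.mem_union] at h
        rcases h with h | h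
        · exact hold h
        · rw [Finset.mem_image] at h
          obtain ⟨a, ha, rfl⟩ := h
          rw [Finset.mem_filter] at ha
          obtain ⟨h1, h2, h3⟩ := ih.1 ha.1
          have hnd : ¬ (y + 1) ∣ a := (hnp a ha.1).resolve_right (not_not.2 hp.1)
          have ha0 : a ≠ 0 := h1.ne_zero
          have hlt : ∀ q : ℕ, q.Prime → q ∣ a → q < y + 1 := fun q hq hqa => by
            have := (h2 q hq hqa).2; omega
          refine ⟨?_, ?_, ?_⟩
          · rw [Nat.squarefree_mul_iff]
            exact ⟨((Nat.Prime.coprime_iff_not_dvd hp.1).2 hnd).symm, h1, hp.1.squarefree⟩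
          · intro p hpp hd
            rcases (Nat.Prime.dvd_mul hpp).1 hd with hd | hd
            · exact ⟨(h2 p hpp hd).1, (h2 p hpp hd).2.trans (Nat.le_succ y)⟩
            · rw [(Nat.prime_dvd_prime_iff_eq hpp hp.1).1 hd]
              exact ⟨hp.2, le_rfl⟩
          · intro p hpp hd
            rw [sm_mul ha0 (by omega), sm_prime hp.1]
            rcases (Nat.Prime.dvd_mul hpp).1 hd with hd | hd
            · refine (h3 p hpp hd).trans (Nat.mul_le_mul_left _ (Nat.le_mul_of_pos_right _ ?_))
              split_ifs <;> omega
            · rw [(Nat.prime_dvd_prime_iff_eq hpp hp.1).1 hd, sm_eq_self ha0 hlt]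
              simpa using ha.2
      · exact hold h
    · rintro ⟨h1, h2, h3⟩
      have hnew : (∀ p : ℕ, p.Prime → p ∣ n → p ≠ y + 1) → n ∈ DD w t y := by
        intro h
        refine ih.2 ⟨h1, fun p hp hd => ⟨(h2 p hp hd).1, ?_⟩, h3⟩
        have := (h2 p hp hd).2
        have := h p hp hd
        omega
      split_ifs with hp
      · rw [Finset.mem_union]
        by_cases hd : (y + 1) ∣ n
        · right
          obtain ⟨a, rfl⟩ := hd
          rw [mul_comm] at h1 h2 h3 ⊢
          have hsq := Nat.squarefree_mul_iff.1 h1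
          have ha0 : a ≠ 0 := hsq.2.1.ne_zero
          have hnd : ¬ (y + 1) ∣ a := (Nat.Prime.coprime_iff_not_dvd hp.1).1 hsq.1.symm
          have hlt : ∀ q : ℕ, q.Prime → q ∣ a → q < y + 1 := fun q hq hqa => by
            have := (h2 q hq (hqa.mul_right _)).2
            rcases eq_or_ne q (y + 1) with rfl | h
            · exact absurd hqa hnd
            · omega
          rw [Finset.mem_image]
          refine ⟨a, ?_, rfl⟩
          rw [Finset.mem_filter]
          constructor
          · refine ih.2 ⟨hsq.2.1, fun p hpp hpd => ⟨(h2 p hpp (hpd.mul_right _)).1, ?_⟩, ?_⟩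
            · have := hlt p hpp hpd; omega
            · intro p hpp hpd
              have := h3 p hpp (hpd.mul_right _)
              rw [sm_mul ha0 (by omega), sm_prime hp.1, if_neg (by have := hlt p hpp hpd; omega),
                mul_one] at this
              exact this
          · have := h3 (y + 1) hp.1 (Dvd.intro_left a rfl)
            rw [sm_mul ha0 (by omega), sm_prime hp.1, if_neg (by omega), mul_one,
              sm_eq_self ha0 hlt] at this
            exact this
        · left
          apply hnew
          rintro p hpp hpd rfl
          exact hd hpd
      · apply hnew
        rintro p hpp hpd rfl
        exact hp ⟨hpp, (h2 _ hpp hpd).1⟩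

lemma DD_pos {w t y a : ℕ} (h : a ∈ DD w t y) : 0 < a :=
  Nat.pos_of_ne_zero (mem_DD.1 h).1.ne_zero

/-! ### The weighted process -/

/-- alive elements at `y`. -/
def BB (w t y : ℕ) : Finset ℕ := (DD w t y).filter fun a => y ≤ t * a

/-- elements alive at `y` which survive to `y+1`. -/
def CC (w t y : ℕ) : Finset ℕ := (DD w t y).filter fun a => y + 1 ≤ t * a

/-- elements dying at `y`. -/
def KK (w t y : ℕ) : Finset ℕ := (DD w t y).filter fun a => t * a = y

noncomputable def EE (w t y : ℕ) (f : ℕ → ℝ) : ℝ := (∑ a ∈ BB w t y, f a / a) / WW w y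
noncomputable def EC (w t y : ℕ) (f : ℕ → ℝ) : ℝ := (∑ a ∈ CC w t y, f a / a) / WW w y
noncomputable def EK (w t y : ℕ) (f : ℕ → ℝ) : ℝ := (∑ a ∈ KK w t y, f a / a) / WW w y

lemma EE_eq (w t y : ℕ) (f : ℕ → ℝ) : EE w t y f = EC w t y f + EK w t y f := by
  unfold EE EC EK
  rw [← add_div, ← Finset.sum_union]
  · congr 2
    ext a
    simp only [BB, CC, KK, Finset.mem_union, Finset.mem_filter]
    constructor
    · rintro ⟨h1, h2⟩
      rcases eq_or_ne (t * a) y with h | h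
      · exact Or.inr ⟨h1, h⟩
      · exact Or.inl ⟨h1, by omega⟩
    · rintro (⟨h1, h2⟩ | ⟨h1, h2⟩)
      · exact ⟨h1, by omega⟩
      · exact ⟨h1, by omega⟩
  · rw [Finset.disjoint_left]
    intro a ha hb
    simp only [CC, KK, Finset.mem_filter] at ha hb
    omega

lemma WW_succ (w y : ℕ) : WW w (y + 1) =
    WW w y * if (y + 1).Prime ∧ w < y + 1 then 1 + 1 / ((y : ℝ) + 1) else 1 := by
  have := PrI_succ w y (fun p => Real.log (1 + 1 / (p : ℝ)))
  unfold WW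
  rw [← Real.log_prod (fun p _ => by positivity), ← Real.log_prod (fun p _ => by positivity)] at this
  have h2 : (if (y + 1).Prime ∧ w < y + 1 then Real.log (1 + 1 / ((y + 1 : ℕ) : ℝ)) else 0) =
    Real.log (if (y + 1).Prime ∧ w < y + 1 then 1 + 1 / ((y : ℝ) + 1) else 1) := by
    split_ifs <;> simp
  rw [h2, ← Real.log_mul] at this
  · refine Real.log_injOn_pos (WW_pos w (y+1)) (mul_pos (WW_pos w y) ?_) this
    split_ifs <;> positivity
  · exact (WW_pos w y).ne'
  · split_ifs <;> positivity

lemma VV_succ (w y : ℕ) : VV w (y + 1) =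
    VV w y + if (y + 1).Prime ∧ w < y + 1 then Real.log ((y : ℝ) + 1) / ((y : ℝ) + 1 + 1) else 0 := by
  unfold VV
  rw [PrI_succ]
  push_cast
  rfl

lemma EE_succ {w t y : ℕ} (ht : 1 ≤ t) (f : ℕ → ℝ) : EE w t (y + 1) f =
    if (y + 1).Prime ∧ w < y + 1 then
      EC w t y (fun a => (f a + f (a * (y + 1)) / ((y : ℝ) + 1)) / (1 + 1 / ((y : ℝ) + 1)))
    else EC w t y f := by
  split_ifs with hp
  · unfold EE EC
    rw [WW_succ, if_pos hp]
    have hset : BB w t (y + 1) = CC w t y ∪ (CC w t y).image fun a => a * (y + 1) := by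
      ext n
      simp only [BB, CC, DD, if_pos hp, Finset.mem_filter, Finset.mem_union, Finset.mem_image]
      constructor
      · rintro ⟨h | ⟨a, h, rfl⟩, h2⟩
        · exact Or.inl ⟨h, h2⟩
        · exact Or.inr ⟨a, h, rfl⟩
      · rintro (⟨h, h2⟩ | ⟨a, h, rfl⟩)
        · exact ⟨Or.inl h, h2⟩
        · refine ⟨Or.inr ⟨a, h, rfl⟩, ?_⟩
          have := DD_pos h.1
          calc y + 1 = 1 * (1 * (y + 1)) := by ring
            _ ≤ t * (a * (y + 1)) := Nat.mul_le_mul ht (Nat.mul_le_mul_right _ this)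
    rw [hset, Finset.sum_union, Finset.sum_image, ← Finset.sum_add_distrib]
    · have hW := WW_pos w y
      have hp0 : (0 : ℝ) < 1 + 1 / ((y : ℝ) + 1) := by positivity
      rw [mul_comm (WW w y), ← div_div]
      congr 1
      rw [Finset.sum_div]
      refine Finset.sum_congr rfl fun a ha => ?_
      have ha0 : (a : ℝ) ≠ 0 := by
        have := DD_pos (Finset.mem_filter.1 ha).1
        positivity
      push_cast
      field_simp
    · intro a _ b _ h
      exact Nat.eq_of_mul_eq_mul_right (Nat.succ_pos y) h
    · rw [Finset.disjoint_left]
      intro a ha hb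
      rw [Finset.mem_image] at hb
      obtain ⟨b, hb, rfl⟩ := hb
      have := ((mem_DD.1 (Finset.mem_filter.1 ha).1).2.1 (y + 1) hp.1 (Dvd.intro_left b rfl)).2
      omega
  · unfold EE EC
    rw [WW_succ, if_neg hp, mul_one]
    congr 2
    unfold BB CC
    rw [DD, if_neg hp]

lemma EE_mono {w t y : ℕ} {f g : ℕ → ℝ} (h : ∀ a ∈ BB w t y, f a ≤ g a) :
    EE w t y f ≤ EE w t y g := by
  unfold EE
  refine div_le_div_of_nonneg_right (Finset.sum_le_sum fun a ha => ?_) (WW_pos w y).le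
  exact div_le_div_of_nonneg_right (h a ha) (by positivity)

lemma EC_mono {w t y : ℕ} {f g : ℕ → ℝ} (h : ∀ a ∈ CC w t y, f a ≤ g a) :
    EC w t y f ≤ EC w t y g := by
  unfold EC
  refine div_le_div_of_nonneg_right (Finset.sum_le_sum fun a ha => ?_) (WW_pos w y).le
  exact div_le_div_of_nonneg_right (h a ha) (by positivity)

lemma EK_nonneg {w t y : ℕ} {f : ℕ → ℝ} (h : ∀ a ∈ KK w t y, 0 ≤ f a) :
    0 ≤ EK w t y f := by
  unfold EK
  refine div_nonneg (Finset.sum_nonneg fun a ha => ?_) (WW_pos w y).le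
  exact div_nonneg (h a ha) (by positivity)

lemma EE_add (w t y : ℕ) (f g : ℕ → ℝ) :
    EE w t y (fun a => f a + g a) = EE w t y f + EE w t y g := by
  unfold EE
  rw [← add_div, ← Finset.sum_add_distrib]
  simp only [add_div]

lemma EE_mul (w t y : ℕ) (c : ℝ) (f : ℕ → ℝ) :
    EE w t y (fun a => c * f a) = c * EE w t y f := by
  unfold EE
  rw [← mul_div_assoc, Finset.mul_sum]
  simp only [mul_div_assoc]

lemma EE_zero (w t : ℕ) (f : ℕ → ℝ) : EE w t 0 f = f 1 := by
  simp [EE, BB, DD, WW, PrI]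

/-- supermartingale-type comparison. -/
lemma EE_step_le {w t y : ℕ} (ht : 1 ≤ t) {f g : ℕ → ℝ}
    (hK : ∀ a ∈ KK w t y, 0 ≤ f a)
    (hp : (y + 1).Prime → w < y + 1 → ∀ a ∈ CC w t y,
      g a + g (a * (y + 1)) / ((y : ℝ) + 1) ≤ (1 + 1 / ((y : ℝ) + 1)) * f a)
    (hnp : ¬ ((y + 1).Prime ∧ w < y + 1) → ∀ a ∈ CC w t y, g a ≤ f a) :
    EE w t (y + 1) g ≤ EE w t y f := by
  rw [EE_succ ht, EE_eq]
  have := EK_nonneg hK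
  split_ifs with h
  · refine le_trans (EC_mono (g := f) fun a ha => ?_) (by linarith)
    rw [div_le_iff₀ (by positivity)]
    have := hp h.1 h.2 a ha
    linarith
  · exact le_trans (EC_mono (g := f) (hnp h)) (by linarith)


/-! ### Moments of the process -/

lemma mem_KK_log {w t y a : ℕ} (ht : 1 ≤ t) (h : a ∈ KK w t y) :
    1 ≤ y ∧ Real.log t + Real.log a = Real.log y := by
  rw [KK, Finset.mem_filter] at h
  have ha := DD_pos h.1
  refine ⟨?_, ?_⟩
  · rw [← h.2]; exact Nat.mul_pos ht ha
  · rw [← h.2]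
    push_cast
    rw [Real.log_mul (by positivity) (by positivity)]

lemma mem_BB_log {w t y a : ℕ} (hy : 1 ≤ y) (ht : 1 ≤ t) (h : a ∈ BB w t y) :
    Real.log y ≤ Real.log t + Real.log a := by
  rw [BB, Finset.mem_filter] at h
  have ha := DD_pos h.1
  rw [← Real.log_mul (by positivity) (by positivity)]
  exact Real.log_le_log (by exact_mod_cast hy) (by exact_mod_cast h.2)

lemma log_mul_succ {a y : ℕ} (ha : 0 < a) : Real.log ((a * (y + 1) : ℕ) : ℝ) =
    Real.log a + Real.log ((y : ℝ) + 1) := by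
  push_cast
  rw [Real.log_mul (by positivity) (by positivity)]

lemma CC_pos {w t y a : ℕ} (h : a ∈ CC w t y) : 0 < a := DD_pos (Finset.mem_filter.1 h).1
lemma BB_pos {w t y a : ℕ} (h : a ∈ BB w t y) : 0 < a := DD_pos (Finset.mem_filter.1 h).1

lemma EE_one_le_one {w t : ℕ} (ht : 1 ≤ t) (y : ℕ) : EE w t y (fun _ => 1) ≤ 1 := by
  induction y with
  | zero => simp [EE_zero]
  | succ y ih =>
    refine le_trans (EE_step_le ht (f := fun _ => 1) ?_ ?_ ?_) ih
    · intros; norm_num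
    · intro _ _ a _; simp
    · intros; norm_num

lemma EE_nonneg {w t y : ℕ} {f : ℕ → ℝ} (h : ∀ a ∈ BB w t y, 0 ≤ f a) : 0 ≤ EE w t y f := by
  have := EE_mono (f := fun _ => 0) h
  simpa [EE] using this

lemma EE_upper_aux {w t : ℕ} {R : ℝ} (ht : 1 ≤ t)
    (hR : ∀ y : ℕ, 1 ≤ y → |VV w y - Real.log y| ≤ R) (y : ℕ) :
    EE w t y (fun a => Real.log t + Real.log a - VV w y + R) ≤ Real.log t + R := by
  induction y with
  | zero => simp [EE_zero, VV, PrI]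
  | succ y ih =>
    refine le_trans (EE_step_le ht ?_ ?_ ?_) ih
    · intro a ha
      obtain ⟨hy, h⟩ := mem_KK_log ht ha
      have := abs_le.1 (hR y hy)
      linarith [this.2]
    · intro hp hw a ha
      rw [log_mul_succ (CC_pos ha), VV_succ, if_pos ⟨hp, hw⟩]
      apply le_of_eq
      field_simp
      ring
    · intro hp a ha
      rw [VV_succ, if_neg hp, add_zero]

lemma EE_upper {w t : ℕ} {R : ℝ} (ht : 1 ≤ t)
    (hR : ∀ y : ℕ, 1 ≤ y → |VV w y - Real.log y| ≤ R) (y : ℕ) (hy : 1 ≤ y) :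
    EE w t y (fun a => Real.log t + Real.log a - Real.log y) ≤ Real.log t + R := by
  refine le_trans (EE_mono fun a ha => ?_) (EE_upper_aux ht hR y)
  have := abs_le.1 (hR y hy)
  linarith [this.2]

lemma EE_Z_succ {w t : ℕ} (ht : 1 ≤ t) (y : ℕ) :
    EE w t y (fun a => Real.log a - VV w y) - EK w t y (fun a => Real.log a - VV w y)
      ≤ EE w t (y + 1) (fun a => Real.log a - VV w (y + 1)) := by
  rw [EE_eq, EE_succ ht, add_sub_cancel_right]
  split_ifs with h
  · apply EC_mono
    intro a ha
    rw [log_mul_succ (CC_pos ha), VV_succ, if_pos h]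
    apply le_of_eq
    field_simp
    ring
  · rw [VV_succ, if_neg h, add_zero]

lemma EE_Z_mono {w t : ℕ} {R : ℝ} (ht : 1 ≤ t) 
    (hR : ∀ y : ℕ, 1 ≤ y → |VV w y - Real.log y| ≤ R) (htR : R ≤ Real.log t) (y : ℕ) :
    EE w t y (fun a => Real.log a - VV w y) 
      ≤ EE w t (y + 1) (fun a => Real.log a - VV w (y + 1)) := by
  refine le_trans ?_ (EE_Z_succ ht y)
  have : 0 ≤ EK w t y (fun a => - (Real.log a - VV w y)) := by
    apply EK_nonneg
    intro a ha
    obtain ⟨hy, h⟩ := mem_KK_log ht ha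
    have := abs_le.1 (hR y hy)
    linarith [this.1]
  have h2 : EK w t y (fun a => - (Real.log a - VV w y)) = - EK w t y (fun a => Real.log a - VV w y) := by
    unfold EK
    simp only [neg_div, Finset.sum_neg_distrib]
  linarith

lemma EE_lower {w t : ℕ} {R : ℝ} (ht : 1 ≤ t) 
    (hR : ∀ y : ℕ, 1 ≤ y → |VV w y - Real.log y| ≤ R) (htR : R ≤ Real.log t) (y : ℕ) (hy : t < y) :
    VV w t / WW w t ≤ EE w t y (fun a => Real.log a - VV w y) := by
  induction y, hy using Nat.le_induction with
  | base =>
    refine le_trans ?_ (EE_Z_succ ht t)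
    have h0 : 0 ≤ EE w t t (fun a => Real.log a - VV w t) := by
      have : ∀ y, 0 ≤ EE w t y (fun a => Real.log a - VV w y) := by
        intro y
        induction y with
        | zero => simp [EE_zero, VV, PrI]
        | succ y ih => exact ih.trans (EE_Z_mono ht hR htR y)
      exact this t
    have : KK w t t = {1} := by
      ext a
      simp only [KK, Finset.mem_filter, Finset.mem_singleton]
      constructor
      · rintro ⟨_, h⟩
        exact Nat.eq_of_mul_eq_mul_left ht (by omega)
      · rintro rfl
        exact ⟨one_mem_DD _ _ _, by omega⟩
    have : EK w t t (fun a => Real.log a - VV w t) = - (VV w t / WW w t) := by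
      unfold EK
      rw [this]
      simp [neg_div]
    linarith
  | succ y hy ih => exact ih.trans (EE_Z_mono ht hR htR y)

/-- bound for sum of `1/p`. -/
lemma sum_inv_le {R : ℝ} (hR : ∀ w y : ℕ, 1 ≤ w → w ≤ y →
    |∑ p ∈ PrI w y, Real.log p / p - Real.log (y / w)| ≤ R) {w y : ℕ} (hw : 2 ≤ w) (hy : w ≤ y) :
    ∑ p ∈ PrI w y, 1 / (p : ℝ) ≤ (Real.log y - Real.log w + R) / Real.log w := by
  have h := (abs_le.1 (hR w y (by omega) hy)).2
  have hy0 : (y : ℝ) ≠ 0 := by exact_mod_cast (by omega : y ≠ 0)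
  have hw0 : (w : ℝ) ≠ 0 := by exact_mod_cast (by omega : w ≠ 0)
  rw [Real.log_div hy0 hw0] at h
  have hlw : 0 < Real.log (w : ℝ) := Real.log_pos (by exact_mod_cast (by omega : 1 < w))
  rw [le_div_iff₀ hlw, Finset.sum_mul]
  refine le_trans (Finset.sum_le_sum fun p hp => ?_) (by linarith : _ ≤ _)
  rw [mem_PrI] at hp
  have : Real.log w ≤ Real.log p := Real.log_le_log (by positivity) (by exact_mod_cast hp.1.1.le)
  rw [one_div_mul_eq_div]
  exact div_le_div_of_nonneg_right this (by positivity)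

/-- survival probability. -/
lemma EE_one_bound_aux {w t : ℕ} {R R' : ℝ} (ht : 1 ≤ t) (hR' : 0 ≤ R')
    (hR : ∀ y : ℕ, 1 ≤ y → |VV w y - Real.log y| ≤ R) 
    (hM : ∀ w y : ℕ, 1 ≤ w → w ≤ y →
    |∑ p ∈ PrI w y, Real.log p / p - Real.log (y / w)| ≤ R') (y0 y : ℕ) (hy0 : 2 ≤ y0)
    (hy : y0 * y0 ≤ y) :
    EE w t y (fun _ => 1) ≤ (2 * (Real.log t + R) + R') / Real.log y0 := by
  classical
  have hl0 : 0 < Real.log (y0 : ℝ) := Real.log_pos (by exact_mod_cast (by omega : 1 < y0))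
  set φ : ℕ → ℕ → ℝ := fun z a => if a ∈ DD w t y0 then
    ∑ p ∈ PrI z (t * a), 1 / (p : ℝ) + (Real.log t + Real.log a - Real.log y0) / Real.log y0 
    else 1 with hφ
  have hmono : ∀ z, y0 ≤ z → EE w t z (φ z) ≤ EE w t y0 (φ y0) := by
    intro z hz
    induction z, hz using Nat.le_induction with
    | base => exact le_rfl
    | succ z hz ih =>
      refine le_trans (EE_step_le ht ?_ ?_ ?_) ih
      · intro a ha
        obtain ⟨hz1, h⟩ := mem_KK_log ht ha
        simp only [hφ]
        split_ifs
        · rw [h]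
          have : Real.log y0 ≤ Real.log z := Real.log_le_log (by positivity) (by exact_mod_cast hz)
          have h1 : 0 ≤ ∑ p ∈ PrI z (t * a), 1 / (p : ℝ) :=
            Finset.sum_nonneg fun p _ => by positivity
          have h2 : 0 ≤ (Real.log z - Real.log y0) / Real.log y0 := div_nonneg (by linarith) hl0.le
          linarith
        · norm_num
      · intro hp hw a ha
        have hpa : a * (z + 1) ∉ DD w t y0 := by
          intro h
          have := ((mem_DD.1 h).2.1 (z + 1) hp (Dvd.intro_left a rfl)).2
          omega
        simp only [hφ, if_neg hpa]
        split_ifs with h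
        · rw [CC, Finset.mem_filter] at ha
          have hS : ∑ p ∈ PrI z (t * a), 1 / (p : ℝ) = 1 / ((z : ℝ) + 1) + 
              ∑ p ∈ PrI (z + 1) (t * a), 1 / (p : ℝ) := by
            have : PrI z (t * a) = insert (z + 1) (PrI (z + 1) (t * a)) := by
              ext q
              simp only [Finset.mem_insert, mem_PrI]
              constructor
              · rintro ⟨⟨h1, h2⟩, h3⟩
                rcases eq_or_ne q (z + 1) with h4 | h4
                · exact Or.inl h4
                · exact Or.inr ⟨⟨by omega, h2⟩, h3⟩
              · rintro (rfl | ⟨⟨h1, h2⟩, h3⟩)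
                · exact ⟨⟨by omega, ha.2⟩, hp⟩
                · exact ⟨⟨by omega, h2⟩, h3⟩
            rw [this, Finset.sum_insert]
            · push_cast; ring
            · rw [mem_PrI]; omega
          rw [hS]
          have h1 : 0 ≤ ∑ p ∈ PrI (z + 1) (t * a), 1 / (p : ℝ) :=
            Finset.sum_nonneg fun p _ => by positivity
          have h2 : 0 ≤ (Real.log t + Real.log a - Real.log y0) / Real.log y0 := by
            apply div_nonneg _ hl0.le
            have ha0 := DD_pos ha.1
            rw [← Real.log_mul (by positivity) (by positivity)]
            have : Real.log y0 ≤ Real.log (t * a) := 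
              Real.log_le_log (by positivity) (by exact_mod_cast (by omega : y0 ≤ t * a))
            linarith
          have h3 : 0 < 1 / ((z : ℝ) + 1) := by positivity
          nlinarith [mul_nonneg h3.le h1, mul_nonneg h3.le h2, mul_pos h3 h3]
        · linarith
      · intro hnp a ha
        simp only [hφ]
        split_ifs
        · gcongr
          exact Finset.filter_subset_filter _ (Finset.Ioc_subset_Ioc_left (Nat.le_succ z))
        · exact le_rfl
  have hyy0 : y0 ≤ y := le_trans (Nat.le_mul_self y0) hy
  have h1 : EE w t y (fun _ => 1) ≤ EE w t y (φ y) := by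
    apply EE_mono
    intro a ha
    simp only [hφ]
    split_ifs
    · have h1 := mem_BB_log (by omega) ht ha
      have h2 : Real.log ((y0 * y0 : ℕ) : ℝ) ≤ Real.log y := 
        Real.log_le_log (by push_cast; positivity) (by exact_mod_cast hy)
      push_cast at h2
      rw [Real.log_mul (by positivity) (by positivity)] at h2
      have h3 : 0 ≤ ∑ p ∈ PrI y (t * a), 1 / (p : ℝ) :=
            Finset.sum_nonneg fun p _ => by positivity
      have h4 : 1 ≤ (Real.log t + Real.log a - Real.log y0) / Real.log y0 := by
        rw [le_div_iff₀ hl0]; linarith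
      linarith
    · exact le_rfl
  refine h1.trans ((hmono y hyy0).trans ?_)
  have h2 : EE w t y0 (φ y0) ≤ EE w t y0 (fun a => 
      (2 / Real.log y0) * (Real.log t + Real.log a - Real.log y0) + (R' / Real.log y0) * 1) := by
    apply EE_mono
    intro a ha
    have ha' := ha
    rw [BB, Finset.mem_filter] at ha'
    simp only [hφ, if_pos ha'.1]
    have := sum_inv_le hM hy0 ha'.2
    have ha0 := DD_pos ha'.1
    push_cast at this
    rw [Real.log_mul (by positivity) (by positivity)] at this
    refine (add_le_add this le_rfl).trans (le_of_eq ?_)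
    field_simp
    ring
  refine h2.trans ?_
  rw [EE_add, EE_mul, EE_mul]
  have h3 := EE_upper ht hR y0 (by omega)
  have h4 := EE_one_le_one (w := w) ht y0
  calc _ ≤ 2 / Real.log y0 * (Real.log t + R) + R' / Real.log y0 * 1 := by gcongr
    _ = _ := by ring

lemma EE_one_bound (w : ℕ) : ∃ C : ℝ, 1 ≤ C ∧ ∀ t y : ℕ, 1 ≤ t → 
    EE w t y (fun _ => 1) * Real.log (y + 1) ≤ C * (1 + Real.log t) := by
  obtain ⟨R, hR1, hR⟩ := VV_bound w
  obtain ⟨R', hR1', hM⟩ := mertens1'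
  refine ⟨5 * (2 * R + 2 + R'), by linarith, fun t y ht => ?_⟩
  have hlt : 0 ≤ Real.log (t : ℝ) := Real.log_natCast_nonneg t
  have hP := EE_one_le_one (w := w) ht y
  have hP0 : 0 ≤ EE w t y (fun _ => 1) := EE_nonneg fun _ _ => zero_le_one
  have hly : 0 ≤ Real.log ((y : ℝ) + 1) := Real.log_nonneg (by linarith [(Nat.cast_nonneg y : (0:ℝ) ≤ y)])
  rcases lt_or_ge y 4 with h | h
  · have h2 : Real.log ((y : ℝ) + 1) ≤ 3 := by
      have := Real.log_le_sub_one_of_pos (show (0 : ℝ) < (y : ℝ) + 1 by positivity)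
      have : (y : ℝ) ≤ 3 := by exact_mod_cast (by omega : y ≤ 3)
      linarith
    calc _ ≤ 1 * 3 := by gcongr
      _ ≤ 5 * (2 * R + 2 + R') * (1 + 0) := by linarith
      _ ≤ _ := by gcongr
  · set y0 := Nat.sqrt y with hy0
    have h2 : 2 ≤ y0 := Nat.le_sqrt.2 h
    have h3 := EE_one_bound_aux ht (by linarith) hR hM y0 y h2 (Nat.sqrt_le y)
    have hl0 : 0 < Real.log (y0 : ℝ) := Real.log_pos (by exact_mod_cast (by omega : 1 < y0))
    have h4 : Real.log ((y : ℝ) + 1) ≤ 4 * Real.log y0 := by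
      have : y + 1 ≤ y0 ^ 4 := by
        have h5 : y < (y0 + 1) * (y0 + 1) := Nat.lt_succ_sqrt y
        have h6 : y0 + 1 ≤ y0 * y0 := by nlinarith
        calc y + 1 ≤ (y0 + 1) * (y0 + 1) := h5
          _ ≤ (y0 * y0) * (y0 * y0) := Nat.mul_le_mul h6 h6
          _ = _ := by ring
      calc Real.log ((y : ℝ) + 1) ≤ Real.log ((y0 : ℝ) ^ 4) := 
            Real.log_le_log (by positivity) (by exact_mod_cast this)
        _ = _ := by rw [Real.log_pow]; norm_num
    rw [le_div_iff₀ hl0] at h3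
    calc _ ≤ EE w t y (fun _ => 1) * (4 * Real.log y0) := by gcongr
      _ ≤ 4 * (2 * (Real.log t + R) + R') := by linarith
      _ ≤ _ := by nlinarith

/-- second moment. -/
lemma EE_sq_bound (w : ℕ) : ∃ C : ℝ, 1 ≤ C ∧ ∀ t y : ℕ, 1 ≤ t → 2 ≤ y → 
    EE w t y (fun a => (Real.log a - VV w y) ^ 2) ≤ C * (1 + Real.log t) * Real.log y := by
  obtain ⟨C, hC1, hC⟩ := EE_one_bound w
  obtain ⟨R', hR1', hM⟩ := mertens1
  have key : ∀ t y : ℕ, 1 ≤ t → EE w t y (fun a => (Real.log a - VV w y) ^ 2) ≤ 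
      C * (1 + Real.log t) * ∑ p ∈ PrI 0 y, Real.log p / p := by
    intro t y ht
    have hlt : 0 ≤ Real.log (t : ℝ) := Real.log_natCast_nonneg t
    induction y with
    | zero => simp [EE_zero, VV, PrI]
    | succ y ih =>
      rw [PrI_succ]
      by_cases hp : (y + 1).Prime ∧ w < y + 1
      · have h1 : EE w t (y + 1) (fun a => (Real.log a - VV w (y + 1)) ^ 2) ≤
            EE w t y (fun a => (Real.log a - VV w y) ^ 2 + 
              (Real.log ((y : ℝ) + 1) ^ 2 / ((y : ℝ) + 1)) * 1) := by
          apply EE_step_le ht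
          · intro a _; positivity
          · intro _ _ a ha
            rw [log_mul_succ (CC_pos ha), VV_succ, if_pos hp]
            have hq : (0 : ℝ) < (y : ℝ) + 1 := by positivity
            set q : ℝ := (y : ℝ) + 1
            set l := Real.log q
            set L := Real.log a - VV w y
            have e1 : Real.log a - (VV w y + l / (q + 1)) = L - l / (q + 1) := by ring
            have e2 : Real.log a + l - (VV w y + l / (q + 1)) = L + q * (l / (q + 1)) := by
              field_simp; ring
            rw [e1, e2]
            set u := l / (q + 1)
            have e3 : (L - u) ^ 2 + (L + q * u) ^ 2 / q = (1 + 1 / q) * L ^ 2 + (q + 1) * u ^ 2 := by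
              field_simp; ring
            have e4 : (q + 1) * u ^ 2 = l ^ 2 / (q + 1) := by
              simp only [u]; field_simp
            have e5 : l ^ 2 / (q + 1) ≤ (1 + 1 / q) * (l ^ 2 / q) := by
              calc l ^ 2 / (q + 1) ≤ l ^ 2 / q := by gcongr; linarith
                _ = 1 * (l ^ 2 / q) := by ring
                _ ≤ _ := by gcongr; have : 0 < 1 / q := by positivity
                            linarith
            rw [e3, e4]
            linarith
          · intro h; exact absurd hp h
        rw [EE_add, EE_mul] at h1
        refine h1.trans ?_
        rw [if_pos ⟨hp.1, Nat.succ_pos y⟩, mul_add]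
        have h2 := hC t y ht
        have hly : 0 ≤ Real.log ((y : ℝ) + 1) := 
          Real.log_nonneg (by linarith [(Nat.cast_nonneg y : (0:ℝ) ≤ y)])
        have h3 : Real.log ((y : ℝ) + 1) ^ 2 / ((y : ℝ) + 1) * EE w t y (fun _ => 1) ≤
            C * (1 + Real.log t) * (Real.log ((y + 1 : ℕ) : ℝ) / ((y + 1 : ℕ) : ℝ)) := by
          push_cast
          calc _ = (EE w t y (fun _ => 1) * Real.log ((y : ℝ) + 1)) * 
                (Real.log ((y : ℝ) + 1) / ((y : ℝ) + 1)) := by ring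
            _ ≤ _ := by gcongr
        linarith
      · have h1 : EE w t (y + 1) (fun a => (Real.log a - VV w (y + 1)) ^ 2) ≤
            EE w t y (fun a => (Real.log a - VV w y) ^ 2) := by
          apply EE_step_le ht
          · intro a _; positivity
          · intro h1 h2; exact absurd ⟨h1, h2⟩ hp
          · intro _ a _
            rw [VV_succ, if_neg hp, add_zero]
        refine h1.trans (ih.trans ?_)
        gcongr
        have : 0 ≤ Real.log (((y + 1 : ℕ)) : ℝ) / ((y + 1 : ℕ) : ℝ) :=
          div_nonneg (Real.log_natCast_nonneg _) (by positivity)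
        split_ifs <;> linarith
  refine ⟨C * (1 + 2 * R'), by nlinarith, fun t y ht hy => ?_⟩
  refine (key t y ht).trans ?_
  have hlt : 0 ≤ Real.log (t : ℝ) := Real.log_natCast_nonneg t
  have h1 := (abs_le.1 (hM y (by omega))).2
  have h2 : 1 / 2 ≤ Real.log (y : ℝ) := by
    have := Real.log_two_gt_d9
    have := Real.log_le_log (by norm_num) (show (2 : ℝ) ≤ y by exact_mod_cast hy)
    linarith
  calc _ ≤ C * (1 + Real.log t) * ((1 + 2 * R') * Real.log y) := by
        gcongr
        nlinarith
    _ = _ := by ring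


/-! ### A sieve bound -/

/-- squarefree integers up to `z` all of whose prime factors exceed `q`. -/
noncomputable def Phi (z q : ℕ) : Finset ℕ :=
  open Classical in
  (Finset.Icc 1 z).filter fun b => Squarefree b ∧ ∀ p : ℕ, p.Prime → p ∣ b → q < p

lemma mem_Phi {z q b : ℕ} : b ∈ Phi z q ↔ (1 ≤ b ∧ b ≤ z) ∧ Squarefree b ∧
    ∀ p : ℕ, p.Prime → p ∣ b → q < p := by
  simp [Phi]

lemma sum_inv_Phi (z q : ℕ) (hz : 1 ≤ z) : ∑ b ∈ Phi z q, 1 / (b : ℝ) ≤ WW q z := by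
  have h1 : Phi z q ⊆ BB q z z := by
    intro b hb
    rw [mem_Phi] at hb
    rw [BB, Finset.mem_filter, mem_DD]
    have hle : ∀ p, p ∣ b → p ≤ z := fun p hd => (Nat.le_of_dvd hb.1.1 hd).trans hb.1.2
    refine ⟨⟨hb.2.1, fun p hp hd => ⟨hb.2.2 p hp hd, hle p hd⟩, fun p hp hd => ?_⟩, ?_⟩
    · exact (hle p hd).trans (Nat.le_mul_of_pos_right _ (sm_pos _ _))
    · exact Nat.le_mul_of_pos_right _ hb.1.1
  have h2 := EE_one_le_one (w := q) hz z
  unfold EE at h2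
  rw [div_le_one (WW_pos q z)] at h2
  exact le_trans (Finset.sum_le_sum_of_subset_of_nonneg h1 fun _ _ _ => by positivity) h2

lemma log_eq_sum_primes {b : ℕ} (hb : Squarefree b) :
    Real.log b = ∑ p ∈ b.primeFactors, Real.log p := by
  conv_lhs => rw [← Nat.prod_primeFactors_of_squarefree hb]
  rw [Nat.cast_prod, Real.log_prod]
  intro p hp
  have := (Nat.prime_of_mem_primeFactors hp).pos
  positivity

lemma sum_log_PrI_le (n : ℕ) : ∑ p ∈ PrI 0 n, Real.log p ≤ Real.log 4 * n := by
  have := Chebyshev.theta_le_log4_mul_x (x := n) (by positivity)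
  rw [Chebyshev.theta_eq_sum_Icc, Nat.floor_natCast] at this
  refine le_trans (le_of_eq ?_) this
  refine Finset.sum_congr ?_ fun _ _ => rfl
  ext p
  simp only [mem_PrI, Finset.mem_filter, Finset.mem_Icc]
  constructor
  · rintro ⟨⟨_, h⟩, h'⟩; exact ⟨⟨Nat.zero_le _, h⟩, h'⟩
  · rintro ⟨⟨_, h⟩, h'⟩; exact ⟨⟨h'.pos, h⟩, h'⟩

lemma sum_log_Phi (z q : ℕ) : ∑ b ∈ Phi z q, Real.log b ≤
    ∑ b ∈ Phi z q, Real.log 4 * ((z : ℝ) / b) := by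
  classical
  have h1 : ∑ b ∈ Phi z q, Real.log b =
      ∑ b ∈ Phi z q, ∑ p ∈ PrI 0 z, if p ∣ b then Real.log p else 0 := by
    refine Finset.sum_congr rfl fun b hb => ?_
    rw [mem_Phi] at hb
    rw [log_eq_sum_primes hb.2.1, ← Finset.sum_filter]
    refine Finset.sum_congr ?_ fun _ _ => rfl
    ext p
    rw [Nat.mem_primeFactors, Finset.mem_filter, mem_PrI]
    constructor
    · rintro ⟨h1, h2, h3⟩
      exact ⟨⟨⟨h1.pos, (Nat.le_of_dvd hb.1.1 h2).trans hb.1.2⟩, h1⟩, h2⟩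
    · rintro ⟨h1, h2⟩
      exact ⟨h1.2, h2, by omega⟩
  rw [h1, Finset.sum_comm]
  have h2 : ∀ p ∈ PrI 0 z, (∑ b ∈ Phi z q, if p ∣ b then Real.log p else 0) ≤
      ∑ b ∈ Phi z q, if p * b ≤ z then Real.log p else 0 := by
    intro p hp
    rw [mem_PrI] at hp
    rw [← Finset.sum_filter, ← Finset.sum_filter, Finset.sum_const, Finset.sum_const, nsmul_eq_mul,
      nsmul_eq_mul]
    refine mul_le_mul_of_nonneg_right ?_ (Real.log_natCast_nonneg p)
    norm_cast
    apply Finset.card_le_card_of_injOn (fun b => b / p)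
    · intro b hb
      simp only [Finset.coe_filter, Set.mem_ofPred_eq, mem_Phi] at hb ⊢
      obtain ⟨⟨h1, h2, h3⟩, c, rfl⟩ := hb
      rw [Nat.mul_div_cancel_left _ hp.2.pos]
      have hc : 1 ≤ c := Nat.pos_of_ne_zero (by rintro rfl; simp at h1)
      refine ⟨⟨⟨hc, le_trans (Nat.le_mul_of_pos_left c hp.2.pos) h1.2⟩,
        h2.squarefree_of_dvd (Dvd.intro_left p rfl), fun r hr hd => h3 r hr (hd.mul_left p)⟩, h1.2⟩
    · intro b hb c hc h
      simp only [Finset.coe_filter, Set.mem_ofPred_eq] at hb hc h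
      rw [← Nat.mul_div_cancel' hb.2, ← Nat.mul_div_cancel' hc.2, h]
  refine (Finset.sum_le_sum h2).trans ?_
  rw [Finset.sum_comm]
  refine Finset.sum_le_sum fun b hb => ?_
  rw [mem_Phi] at hb
  rw [← Finset.sum_filter]
  have h3 : (PrI 0 z).filter (fun p => p * b ≤ z) ⊆ PrI 0 (z / b) := by
    intro p hp
    rw [Finset.mem_filter, mem_PrI] at hp
    rw [mem_PrI]
    exact ⟨⟨hp.1.1.1, (Nat.le_div_iff_mul_le hb.1.1).2 hp.2⟩, hp.1.2⟩
  calc _ ≤ ∑ p ∈ PrI 0 (z / b), Real.log p :=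
        Finset.sum_le_sum_of_subset_of_nonneg h3 fun p _ _ => Real.log_natCast_nonneg p
    _ ≤ Real.log 4 * (z / b : ℕ) := sum_log_PrI_le _
    _ ≤ _ := by
      exact mul_le_mul_of_nonneg_left Nat.cast_div_le (Real.log_nonneg (by norm_num))

lemma prod_Icc_eq_fac (z : ℕ) : ∏ b ∈ Finset.Icc 1 z, b = z.factorial := by
  induction z with
  | zero => simp
  | succ z ih => rw [Finset.prod_Icc_succ_top (by omega), ih, Nat.factorial_succ, mul_comm]

lemma sieve_bound : ∃ C : ℝ, 0 < C ∧ ∀ z q : ℕ, 2 ≤ q → q ≤ z →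
    ((Phi z q).card : ℝ) ≤ C * z / Real.log q := by
  obtain ⟨c, C, hc, hC, hW⟩ := WW_bounds
  refine ⟨1 + Real.log 4 * (C / c), ?_, fun z q hq hz => ?_⟩
  · have : 0 < Real.log 4 := Real.log_pos (by norm_num)
    positivity
  have hlq : 0 < Real.log (q : ℝ) := Real.log_pos (by exact_mod_cast (by omega : 1 < q))
  have hlqz : Real.log (q : ℝ) ≤ Real.log z :=
    Real.log_le_log (by positivity) (by exact_mod_cast hz)
  have hlz : 0 < Real.log (z : ℝ) := by linarith
  have h4 : 0 < Real.log 4 := Real.log_pos (by norm_num)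
  have hz0 : (0 : ℝ) < z := by exact_mod_cast (by omega : 0 < z)
  have h1 : ∑ b ∈ Phi z q, (Real.log z - Real.log b) ≤ z := by
    have h2 : ∑ b ∈ Phi z q, (Real.log z - Real.log b) ≤
        ∑ b ∈ Finset.Icc 1 z, (Real.log z - Real.log b) := by
      refine Finset.sum_le_sum_of_subset_of_nonneg ?_ ?_
      · intro b hb; rw [mem_Phi] at hb; exact Finset.mem_Icc.2 hb.1
      · intro b hb _
        rw [Finset.mem_Icc] at hb
        have : Real.log b ≤ Real.log z := Real.log_le_log (by exact_mod_cast hb.1)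
          (by exact_mod_cast hb.2)
        linarith
    refine h2.trans ?_
    rw [Finset.sum_sub_distrib, Finset.sum_const, Nat.card_Icc, ← Real.log_prod, ← Nat.cast_prod,
      prod_Icc_eq_fac]
    · have := Stirling.le_log_factorial_stirling (n := z) (by omega)
      have h3 : 0 ≤ Real.log (2 * Real.pi) := Real.log_nonneg (by nlinarith [Real.pi_gt_three])
      simp only [add_tsub_cancel_right, nsmul_eq_mul]
      linarith
    · intro b hb
      rw [Finset.mem_Icc] at hb
      have := hb.1
      positivity
  rw [Finset.sum_sub_distrib, Finset.sum_const, nsmul_eq_mul] at h1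
  have h5 := sum_log_Phi z q
  have h6 : ∑ b ∈ Phi z q, Real.log 4 * ((z : ℝ) / b) ≤ Real.log 4 * z * WW q z := by
    have : ∑ b ∈ Phi z q, Real.log 4 * ((z : ℝ) / b) =
        Real.log 4 * z * ∑ b ∈ Phi z q, 1 / (b : ℝ) := by
      rw [Finset.mul_sum]
      refine Finset.sum_congr rfl fun b _ => by ring
    rw [this]
    gcongr
    exact sum_inv_Phi z q (by omega)
  have h7 : WW q z ≤ C / c * (Real.log z / Real.log q) := by
    have e := WW_zero_mul hz
    have h8 := (hW z (by omega)).2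
    have h9 := (hW q hq).1
    have h10 : c * Real.log q * WW q z ≤ C * Real.log z := by
      calc _ ≤ WW 0 q * WW q z := mul_le_mul_of_nonneg_right h9 (WW_pos q z).le
        _ ≤ _ := by rw [← e]; exact h8
    have : C / c * (Real.log z / Real.log q) = C * Real.log z / (c * Real.log q) := by
      field_simp
    rw [this, le_div_iff₀ (by positivity)]
    linarith
  have h11 : (z : ℝ) ≤ z * (Real.log z / Real.log q) :=
    le_mul_of_one_le_right hz0.le ((one_le_div hlq).2 hlqz)
  have h12 : ((Phi z q).card : ℝ) * Real.log z ≤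
      ((1 + Real.log 4 * (C / c)) * z / Real.log q) * Real.log z := by
    calc ((Phi z q).card : ℝ) * Real.log z ≤ z + Real.log 4 * z * WW q z := by linarith
      _ ≤ z * (Real.log z / Real.log q) +
          Real.log 4 * z * (C / c * (Real.log z / Real.log q)) := by gcongr
      _ = _ := by ring
  exact le_of_mul_le_mul_right h12 hlz

lemma pi_upper : ∃ C : ℝ, 0 < C ∧ ∀ n : ℕ, 2 ≤ n →
    ((PrI 0 n).card : ℝ) ≤ C * n / Real.log n := by
  refine ⟨2 * Real.log 4 + 2, by have : 0 < Real.log 4 := Real.log_pos (by norm_num)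
                                 positivity, fun n hn => ?_⟩
  have hn' : (1 : ℝ) < n := by exact_mod_cast (by omega : 1 < n)
  have hl : 0 < Real.log (n : ℝ) := Real.log_pos hn'
  have h := Chebyshev.pi_le_log4_mul_div hn'
  rw [Nat.floor_natCast] at h
  have h1 : (PrI 0 n).card = n.primeCounting := by
    rw [Nat.primeCounting, Nat.primeCounting', Nat.count_eq_card_filter_range]
    congr 1
    ext p
    simp only [mem_PrI, Finset.mem_filter, Finset.mem_range]
    constructor
    · rintro ⟨⟨_, h⟩, h'⟩; exact ⟨by omega, h'⟩
    · rintro ⟨h, h'⟩; exact ⟨⟨h'.pos, by omega⟩, h'⟩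
  rw [h1]
  refine h.trans ?_
  have hs : 0 < Real.sqrt n := Real.sqrt_pos.2 (by linarith)
  have hss : Real.sqrt n * Real.sqrt n = n := Real.mul_self_sqrt (by linarith)
  rw [Real.log_sqrt (by linarith)]
  have h2 : Real.sqrt n ≤ 2 * n / Real.log n := by
    rw [le_div_iff₀ hl]
    have : Real.log n ≤ 2 * Real.sqrt n := by
      have h3 := Real.log_le_sub_one_of_pos hs
      rw [Real.log_sqrt (by linarith)] at h3
      linarith
    nlinarith
  calc _ ≤ Real.log 4 * n / (Real.log n / 2) + 2 * n / Real.log n := by gcongr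
    _ = _ := by field_simp

lemma exists_root (k x : ℕ) (hk : 1 ≤ k) (h : 2 ^ k ≤ x) :
    ∃ Y : ℕ, 2 ≤ Y ∧ Y ^ k ≤ x ∧ x < (Y + 1) ^ k ∧
      k * Real.log Y ≤ Real.log x ∧ Real.log x ≤ 2 * k * Real.log Y := by
  classical
  have hne : ∃ n : ℕ, x < (n + 1) ^ k := ⟨x, by
    calc x < x + 1 := Nat.lt_succ_self x
      _ ≤ (x + 1) ^ k := Nat.le_self_pow (by omega) _⟩
  set Y := Nat.find hne with hY
  have h1 : x < (Y + 1) ^ k := Nat.find_spec hne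
  have h2 : 2 ≤ Y := by
    by_contra hcon
    have : (Y + 1) ^ k ≤ 2 ^ k := Nat.pow_le_pow_left (by omega) k
    omega
  have h3 : Y ^ k ≤ x := by
    have := Nat.find_min hne (show Y - 1 < Y by omega)
    rw [Nat.sub_add_cancel (by omega)] at this
    omega
  refine ⟨Y, h2, h3, h1, ?_, ?_⟩
  · rw [← Real.log_pow]
    exact Real.log_le_log (by positivity) (by exact_mod_cast h3)
  · have h4 : x ≤ Y ^ (2 * k) := by
      rw [pow_mul]
      exact h1.le.trans (Nat.pow_le_pow_left (by nlinarith) k)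
    have hx : 0 < x := lt_of_lt_of_le (by positivity) h
    have : Real.log x ≤ Real.log ((Y : ℝ) ^ (2 * k)) :=
      Real.log_le_log (by positivity) (by exact_mod_cast h4)
    rw [Real.log_pow] at this
    push_cast at this
    linarith

lemma sum_BB_inv : ∃ C : ℝ, 1 ≤ C ∧ ∀ t y : ℕ, 1 ≤ t →
    ∑ a ∈ BB 0 t y, 1 / (a : ℝ) ≤ C * (1 + Real.log t) := by
  obtain ⟨c, C, hc, hC, hW⟩ := WW_bounds
  obtain ⟨C', hC', h⟩ := EE_one_bound 0
  refine ⟨1 + C * C', by nlinarith [mul_pos hC (by linarith : 0 < C')], fun t y ht => ?_⟩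
  have hlt : 0 ≤ Real.log (t : ℝ) := Real.log_natCast_nonneg t
  have e : ∑ a ∈ BB 0 t y, 1 / (a : ℝ) = EE 0 t y (fun _ => 1) * WW 0 y := by
    unfold EE
    rw [div_mul_cancel₀ _ (WW_pos 0 y).ne']
  have hP0 : 0 ≤ EE 0 t y (fun _ => 1) := EE_nonneg fun _ _ => zero_le_one
  rw [e]
  rcases lt_or_ge y 2 with hy | hy
  · have : WW 0 y = 1 := by
      unfold WW
      apply Finset.prod_eq_one
      intro p hp
      rw [mem_PrI] at hp
      have := hp.2.two_le
      omega
    rw [this, mul_one]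
    refine (EE_one_le_one ht y).trans ?_
    nlinarith [mul_pos hC (by linarith : 0 < C')]
  · have h1 : Real.log (y : ℝ) ≤ Real.log (y + 1) :=
      Real.log_le_log (by positivity) (by linarith)
    calc _ ≤ EE 0 t y (fun _ => 1) * (C * Real.log (y + 1)) := by
          gcongr
          exact (hW y hy).2.trans (by gcongr)
      _ = C * (EE 0 t y (fun _ => 1) * Real.log (y + 1)) := by ring
      _ ≤ C * (C' * (1 + Real.log t)) := mul_le_mul_of_nonneg_left (h t y ht) hC.le
      _ ≤ _ := by nlinarith

lemma sum_BB_sq : ∃ C : ℝ, 1 ≤ C ∧ ∀ t y : ℕ, 1 ≤ t → 2 ≤ y →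
    ∑ a ∈ BB 0 t y, (Real.log a - VV 0 y) ^ 2 / (a : ℝ) ≤
      C * (1 + Real.log t) * Real.log y ^ 2 := by
  obtain ⟨c, C, hc, hC, hW⟩ := WW_bounds
  obtain ⟨C', hC', h⟩ := EE_sq_bound 0
  refine ⟨1 + C * C', by nlinarith [mul_pos hC (by linarith : 0 < C')], fun t y ht hy => ?_⟩
  have hlt : 0 ≤ Real.log (t : ℝ) := Real.log_natCast_nonneg t
  have hly : 0 < Real.log (y : ℝ) := Real.log_pos (by exact_mod_cast (by omega : 1 < y))
  have e : ∑ a ∈ BB 0 t y, (Real.log a - VV 0 y) ^ 2 / (a : ℝ) =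
      EE 0 t y (fun a => (Real.log a - VV 0 y) ^ 2) * WW 0 y := by
    unfold EE
    rw [div_mul_cancel₀ _ (WW_pos 0 y).ne']
  have hP0 : 0 ≤ EE 0 t y (fun a => (Real.log a - VV 0 y) ^ 2) :=
    EE_nonneg fun _ _ => by positivity
  rw [e]
  calc _ ≤ (C' * (1 + Real.log t) * Real.log y) * (C * Real.log y) := by
        gcongr
        · exact WW_pos 0 y |>.le
        · exact h t y ht hy
        · exact (hW y hy).2
    _ ≤ _ := by
      have : 0 ≤ (1 + Real.log t) * Real.log y ^ 2 := by positivity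
      nlinarith


/-! ### Upper bound for the number of dense integers -/

/-- The part of `n` composed of primes `≥ p`. -/
def rg (n p : ℕ) : ℕ := (n.primeFactorsList.filter (fun q => ¬ q < p)).prod

lemma sm_mul_rg {n : ℕ} (hn : n ≠ 0) (p : ℕ) : sm n p * rg n p = n := by
  unfold sm rg
  have := List.prod_map_filter_mul_prod_map_filter_not (fun q => q < p) (fun q => q)
    n.primeFactorsList
  simp only [List.map_id'] at this
  conv_rhs => rw [← Nat.prod_primeFactorsList hn, ← this]

lemma prime_dvd_sm {n p q : ℕ} (hp : p.Prime) (h : p ∣ sm n q) : p < q ∧ p ∣ n := by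
  unfold sm at h
  obtain ⟨r, hr, hpr⟩ := (hp.prime.dvd_prod_iff).1 h
  rw [List.mem_filter] at hr
  have hrp := Nat.prime_of_mem_primeFactorsList hr.1
  rw [(Nat.prime_dvd_prime_iff_eq hp hrp).1 hpr]
  exact ⟨by simpa using hr.2, Nat.dvd_of_mem_primeFactorsList hr.1⟩

lemma prime_dvd_rg {n p q : ℕ} (hp : p.Prime) (h : p ∣ rg n q) : q ≤ p ∧ p ∣ n := by
  unfold rg at h
  obtain ⟨r, hr, hpr⟩ := (hp.prime.dvd_prod_iff).1 h
  rw [List.mem_filter] at hr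
  have hrp := Nat.prime_of_mem_primeFactorsList hr.1
  rw [(Nat.prime_dvd_prime_iff_eq hp hrp).1 hpr]
  exact ⟨by simpa using hr.2, Nat.dvd_of_mem_primeFactorsList hr.1⟩

lemma rg_pos (n p : ℕ) : 0 < rg n p := by
  unfold rg
  apply List.prod_pos
  intro q hq
  exact Nat.pos_of_mem_primeFactorsList (List.mem_of_mem_filter hq)

lemma sm_succ_of_not {n q : ℕ} (h : ¬ (q.Prime ∧ q ∣ n)) : sm n (q + 1) = sm n q := by
  unfold sm
  congr 1
  apply List.filter_congr
  intro r hr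
  have : r ≠ q := by
    rintro rfl
    exact h ⟨Nat.prime_of_mem_primeFactorsList hr, Nat.dvd_of_mem_primeFactorsList hr⟩
  simp only [decide_eq_decide]
  omega

lemma sm_sm {n p q : ℕ} (hn : n ≠ 0) (h : p ≤ q) : sm (sm n q) p = sm n p := by
  conv_rhs => rw [← sm_mul_rg hn q]
  rw [sm_mul (sm_pos n q).ne' (rg_pos n q).ne', sm_eq_one (n := rg n q), mul_one]
  intro r hr hd
  exact h.trans (prime_dvd_rg hr hd).1

lemma dense_decomp {n s t : ℕ} (hsq : Squarefree n) (hd : Dns t n) (hs : 1 ≤ s) (h : s < n) :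
    ∃ q a b : ℕ, q.Prime ∧ n = a * q * b ∧ a ≤ s ∧ s < a * q ∧ a ∈ BB 0 t q ∧
      Squarefree b ∧ (∀ p : ℕ, p.Prime → p ∣ b → q < p) ∧ 0 < a ∧ 0 < b := by
  classical
  have hn : n ≠ 0 := by omega
  have hex : ∃ m, s < sm n m := ⟨n + 1, by
    rw [sm_eq_self hn]
    · exact h
    · intro q _ hq
      exact Nat.lt_succ_of_le (Nat.le_of_dvd (Nat.pos_of_ne_zero hn) hq)⟩
  obtain ⟨q, hq⟩ : ∃ q, Nat.find hex = q + 1 := by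
    refine ⟨Nat.find hex - 1, ?_⟩
    have : Nat.find hex ≠ 0 := by
      intro h0
      have := Nat.find_spec hex
      rw [h0, sm_eq_one (fun _ _ _ => Nat.zero_le _)] at this
      omega
    omega
  have h1 : s < sm n (q + 1) := hq ▸ Nat.find_spec hex
  have h2 : sm n q ≤ s := not_lt.1 (Nat.find_min hex (by omega))
  have h3 : q.Prime ∧ q ∣ n := by
    by_contra hcon
    rw [sm_succ_of_not hcon] at h1
    omega
  obtain ⟨c, hc⟩ := h3.2
  have hsq' := hsq
  rw [hc] at hsq'
  have hcop := Nat.squarefree_mul_iff.1 hsq'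
  have hc0 : c ≠ 0 := hcop.2.2.ne_zero
  have hqc : ¬ q ∣ c := (Nat.Prime.coprime_iff_not_dvd h3.1).1 hcop.1
  have hq0 := h3.1.ne_zero
  have e1 : sm n q = sm c q := by
    rw [hc, sm_mul hq0 hc0, sm_prime h3.1, if_neg (lt_irrefl q), one_mul]
  have e2 : sm n (q + 1) = q * sm c q := by
    rw [hc, sm_mul hq0 hc0, sm_prime h3.1, if_pos (Nat.lt_succ_self q),
      sm_succ_of_not (fun h => hqc h.2)]
  refine ⟨q, sm c q, rg c q, h3.1, ?_, ?_, ?_, ?_, ?_, ?_, sm_pos c q, rg_pos c q⟩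
  · rw [mul_comm _ q, mul_assoc, sm_mul_rg hc0, hc]
  · rw [← e1]; exact h2
  · rw [mul_comm, ← e2]; exact h1
  · rw [← e1, BB, Finset.mem_filter, mem_DD]
    refine ⟨⟨hsq.squarefree_of_dvd (sm_dvd hn q), fun p hp hpd => ⟨hp.pos,
      (prime_dvd_sm hp hpd).1.le⟩, fun p hp hpd => ?_⟩, hd q h3.1 h3.2⟩
    have h4 := prime_dvd_sm hp hpd
    rw [sm_sm hn h4.1.le]
    exact hd p hp h4.2
  · exact hcop.2.2.squarefree_of_dvd (Dvd.intro_left _ (sm_mul_rg hc0 q))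
  · intro p hp hpd
    have h4 := prime_dvd_rg hp hpd
    rcases h4.1.lt_or_eq with h5 | h5
    · exact h5
    · subst h5; exact absurd h4.2 hqc

/-- squarefree `t`-dense integers up to `x`. -/
noncomputable def SD (t x : ℕ) : Finset ℕ :=
  open Classical in
  (Finset.Icc 1 x).filter fun n => Squarefree n ∧ Dns t n

lemma mem_SD {t x n : ℕ} : n ∈ SD t x ↔ (1 ≤ n ∧ n ≤ x) ∧ Squarefree n ∧ Dns t n := by
  simp [SD]

lemma SD_card_le (t x : ℕ) : (SD t x).card ≤ x := by
  classical
  unfold SD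
  refine (Finset.card_filter_le _ _).trans ?_
  simp

/-- weighted count of the first partial products exceeding `√x`. -/
lemma pfx_bound : ∃ C : ℝ, ∃ x0 : ℕ, 0 < C ∧ ∀ x t q : ℕ, x0 ≤ x → 1 ≤ t → 2 ≤ q →
    ∑ a ∈ (BB 0 t q).filter (fun a => Nat.sqrt x < a * q), 1 / (a : ℝ) ≤
      C * (1 + Real.log t) * (Real.log q ^ 2 / Real.log x ^ 2) := by
  obtain ⟨C1, hC1, h1⟩ := sum_BB_inv
  obtain ⟨C2, hC2, h2⟩ := sum_BB_sq
  obtain ⟨R, hR1, hR⟩ := VV_bound 0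
  refine ⟨1024 * C1 + 16 * C2, 65536 + ⌈Real.exp (8 * R)⌉₊, by linarith, ?_⟩
  intro x t q hx ht hq
  have hx1 : 65536 ≤ x := le_trans (Nat.le_add_right _ _) hx
  have hx2 : ⌈Real.exp (8 * R)⌉₊ ≤ x := le_trans (Nat.le_add_left _ _) hx
  clear hx
  have hlt : 0 ≤ Real.log (t : ℝ) := Real.log_natCast_nonneg t
  obtain ⟨Y, hY2, -, -, hY5, hY6⟩ := exists_root 16 x (by norm_num) (by norm_num; exact hx1)
  have hx0 : 0 < x := by omega
  have hlx8 : 8 * R ≤ Real.log x := by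
    rw [Real.le_log_iff_exp_le (by exact_mod_cast hx0)]
    refine (Nat.le_ceil _).trans ?_
    exact_mod_cast hx2
  have hlx : 0 < Real.log (x : ℝ) := by linarith
  have hlq : 0 < Real.log (q : ℝ) := Real.log_pos (by exact_mod_cast (by omega : 1 < q))
  push_cast at hY5 hY6
  have hΛ : 0 ≤ (1 + Real.log (t : ℝ)) * (Real.log q ^ 2 / Real.log x ^ 2) := by positivity
  rcases le_or_gt q Y with h | h
  · have hqY : Real.log q ≤ Real.log Y := Real.log_le_log (by positivity) (by exact_mod_cast h)
    have h3 : ∑ a ∈ (BB 0 t q).filter (fun a => Nat.sqrt x < a * q), 1 / (a : ℝ) ≤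
        ∑ a ∈ (BB 0 t q).filter (fun a => Nat.sqrt x < a * q),
          (16 / Real.log x ^ 2) * ((Real.log a - VV 0 q) ^ 2 / (a : ℝ)) := by
      refine Finset.sum_le_sum fun a ha => ?_
      rw [Finset.mem_filter] at ha
      have ha0 := BB_pos ha.1
      have h4 : Real.log x / 2 ≤ Real.log a + Real.log q := by
        have : x ≤ (a * q) * (a * q) := by
          have h5 := Nat.lt_succ_sqrt x
          have h6 : Nat.succ (Nat.sqrt x) ≤ a * q := ha.2
          exact h5.le.trans (Nat.mul_le_mul h6 h6)
        have h7 : Real.log x ≤ Real.log (((a * q) * (a * q) : ℕ) : ℝ) :=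
          Real.log_le_log (by exact_mod_cast hx0) (by exact_mod_cast this)
        push_cast at h7
        rw [Real.log_mul (by positivity) (by positivity),
          Real.log_mul (by positivity) (by positivity)] at h7
        linarith
      have h8 := (abs_le.1 (hR q (by omega))).2
      have h9 : Real.log x / 4 ≤ Real.log a - VV 0 q := by linarith
      have h10 : (Real.log x / 4) ^ 2 ≤ (Real.log a - VV 0 q) ^ 2 := by
        apply pow_le_pow_left₀ (by positivity) h9
      have h11 : 1 ≤ (16 / Real.log x ^ 2) * (Real.log a - VV 0 q) ^ 2 := by
        rw [div_mul_eq_mul_div, le_div_iff₀ (by positivity)]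
        linarith
      rw [← mul_div_assoc]
      gcongr
    refine h3.trans ?_
    rw [← Finset.mul_sum]
    have h12 : ∑ a ∈ (BB 0 t q).filter (fun a => Nat.sqrt x < a * q),
        (Real.log a - VV 0 q) ^ 2 / (a : ℝ) ≤ C2 * (1 + Real.log t) * Real.log q ^ 2 :=
      le_trans (Finset.sum_le_sum_of_subset_of_nonneg (Finset.filter_subset _ _)
        fun a _ _ => by positivity) (h2 t q ht hq)
    calc _ ≤ (16 / Real.log x ^ 2) * (C2 * (1 + Real.log t) * Real.log q ^ 2) := by gcongr
      _ = 16 * C2 * ((1 + Real.log (t : ℝ)) * (Real.log q ^ 2 / Real.log x ^ 2)) := by ring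
      _ ≤ (1024 * C1 + 16 * C2) * ((1 + Real.log (t : ℝ)) * (Real.log q ^ 2 / Real.log x ^ 2)) := by
        gcongr; linarith
      _ = _ := by ring
  · have hqY : Real.log Y ≤ Real.log q := Real.log_le_log (by positivity) (by exact_mod_cast h.le)
    have h3 : 1 ≤ 1024 * (Real.log q ^ 2 / Real.log x ^ 2) := by
      rw [← mul_div_assoc, le_div_iff₀ (by positivity)]
      have : Real.log x ≤ 32 * Real.log q := by linarith
      nlinarith
    calc _ ≤ ∑ a ∈ BB 0 t q, 1 / (a : ℝ) :=
          Finset.sum_le_sum_of_subset_of_nonneg (Finset.filter_subset _ _)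
            fun a _ _ => by positivity
      _ ≤ C1 * (1 + Real.log t) * 1 := by rw [mul_one]; exact h1 t q ht
      _ ≤ C1 * (1 + Real.log t) * (1024 * (Real.log q ^ 2 / Real.log x ^ 2)) := by
        gcongr
      _ = 1024 * C1 * ((1 + Real.log (t : ℝ)) * (Real.log q ^ 2 / Real.log x ^ 2)) := by ring
      _ ≤ (1024 * C1 + 16 * C2) * ((1 + Real.log (t : ℝ)) * (Real.log q ^ 2 / Real.log x ^ 2)) := by
        gcongr; linarith
      _ = _ := by ring

/-- elements of the first type. -/
noncomputable def T1 (t x : ℕ) : Finset ℕ :=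
  (PrI 0 x).biUnion fun q => ((BB 0 t q).filter fun a => Nat.sqrt x < a * q).biUnion fun a =>
    if a * q * q ≤ x then (Phi (x / (a * q)) q).image fun b => a * q * b else ∅

lemma T1_card : ∃ C : ℝ, ∃ x0 : ℕ, 0 < C ∧ ∀ x t : ℕ, x0 ≤ x → 1 ≤ t →
    ((T1 t x).card : ℝ) ≤ C * x * (1 + Real.log t) / Real.log x := by
  obtain ⟨C, x0, hC, h⟩ := pfx_bound
  obtain ⟨C', hC', hS⟩ := sieve_bound
  obtain ⟨R, hR1, hM⟩ := mertens1
  refine ⟨C' * C * (1 + 2 * R), x0 + 2, by positivity, fun x t hx ht => ?_⟩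
  have hlt : 0 ≤ Real.log (t : ℝ) := Real.log_natCast_nonneg t
  have hlx : 1 / 2 ≤ Real.log (x : ℝ) := by
    have := Real.log_two_gt_d9
    have := Real.log_le_log (by norm_num) (show (2 : ℝ) ≤ x by exact_mod_cast (by omega : 2 ≤ x))
    linarith
  have h1 : ((T1 t x).card : ℝ) ≤ ∑ q ∈ PrI 0 x,
      ∑ a ∈ (BB 0 t q).filter (fun a => Nat.sqrt x < a * q), C' * x / (q * Real.log q) *
        (1 / (a : ℝ)) := by
    have : ((T1 t x).card : ℝ) ≤ ∑ q ∈ PrI 0 x,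
      ∑ a ∈ (BB 0 t q).filter (fun a => Nat.sqrt x < a * q),
        ((if a * q * q ≤ x then (Phi (x / (a * q)) q).image fun b => a * q * b else ∅).card : ℝ) := by
      unfold T1
      norm_cast
      exact Finset.card_biUnion_le.trans (Finset.sum_le_sum fun q _ => Finset.card_biUnion_le)
    refine this.trans (Finset.sum_le_sum fun q hq => Finset.sum_le_sum fun a ha => ?_)
    rw [mem_PrI] at hq
    rw [Finset.mem_filter] at ha
    have ha0 := BB_pos ha.1
    have hq2 := hq.2.two_le
    have hlq : 0 < Real.log (q : ℝ) := Real.log_pos (by exact_mod_cast (by omega : 1 < q))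
    split_ifs with hle
    · have h3 : q ≤ x / (a * q) := (Nat.le_div_iff_mul_le (by positivity)).2 (by linarith)
      calc _ ≤ ((Phi (x / (a * q)) q).card : ℝ) := by exact_mod_cast Finset.card_image_le
        _ ≤ C' * ((x / (a * q) : ℕ) : ℝ) / Real.log q := hS _ q hq2 h3
        _ ≤ C' * ((x : ℝ) / ((a * q : ℕ) : ℝ)) / Real.log q := by
          gcongr; exact Nat.cast_div_le
        _ = _ := by push_cast; field_simp
    · simp only [Finset.card_empty, Nat.cast_zero]
      positivity
  refine h1.trans ?_
  calc _ ≤ ∑ q ∈ PrI 0 x, (C' * C * x * (1 + Real.log t) / Real.log x ^ 2) *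
        (Real.log q / q) := by
        refine Finset.sum_le_sum fun q hq => ?_
        rw [mem_PrI] at hq
        have hq2 := hq.2.two_le
        have hlq : 0 < Real.log (q : ℝ) := Real.log_pos (by exact_mod_cast (by omega : 1 < q))
        rw [← Finset.mul_sum]
        calc _ ≤ C' * x / (q * Real.log q) *
              (C * (1 + Real.log t) * (Real.log q ^ 2 / Real.log x ^ 2)) := by
              gcongr
              exact h x t q (by omega) ht hq2
          _ = _ := by field_simp
    _ = (C' * C * x * (1 + Real.log t) / Real.log x ^ 2) * ∑ q ∈ PrI 0 x, Real.log q / q := by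
        rw [Finset.mul_sum]
    _ ≤ (C' * C * x * (1 + Real.log t) / Real.log x ^ 2) * ((1 + 2 * R) * Real.log x) := by
        gcongr
        have := (abs_le.1 (hM x (by omega))).2
        nlinarith
    _ = _ := by field_simp

/-- elements of the second type. -/
noncomputable def T2 (t x y : ℕ) : Finset ℕ :=
  ((BB 0 t y).filter fun a => a ≤ Nat.sqrt x).biUnion fun a => (PrI 0 (x / a)).image fun q => a * q

lemma log_sqrt_bound {x : ℕ} (hx : 4 ≤ x) : 2 ≤ Nat.sqrt x ∧
    Real.log x ≤ 4 * Real.log (Nat.sqrt x) := by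
  have h2 : 2 ≤ Nat.sqrt x := Nat.le_sqrt.2 hx
  refine ⟨h2, ?_⟩
  set s := Nat.sqrt x with hs
  have h1 : x ≤ s ^ 4 := by
    have h5 : x < (s + 1) * (s + 1) := Nat.lt_succ_sqrt x
    have h6 : s + 1 ≤ s * s := by nlinarith
    calc x ≤ (s + 1) * (s + 1) := h5.le
      _ ≤ (s * s) * (s * s) := Nat.mul_le_mul h6 h6
      _ = _ := by ring
  have : Real.log x ≤ Real.log ((s : ℝ) ^ 4) :=
    Real.log_le_log (by exact_mod_cast (by omega : 0 < x)) (by exact_mod_cast h1)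
  rw [Real.log_pow] at this
  exact_mod_cast this

lemma T2_card : ∃ C : ℝ, 0 < C ∧ ∀ x t y : ℕ, 4 ≤ x → 1 ≤ t →
    ((T2 t x y).card : ℝ) ≤ C * x * (1 + Real.log t) / Real.log x := by
  obtain ⟨C1, hC1, h1⟩ := sum_BB_inv
  obtain ⟨C, hC, hpi⟩ := pi_upper
  refine ⟨4 * C * C1, by positivity, fun x t y hx ht => ?_⟩
  have hlt : 0 ≤ Real.log (t : ℝ) := Real.log_natCast_nonneg t
  obtain ⟨hs2, hs⟩ := log_sqrt_bound hx
  have hls : 0 < Real.log (Nat.sqrt x : ℝ) :=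
    Real.log_pos (by exact_mod_cast (by omega : 1 < Nat.sqrt x))
  have hlx : 0 < Real.log (x : ℝ) := Real.log_pos (by exact_mod_cast (by omega : 1 < x))
  have h2 : ((T2 t x y).card : ℝ) ≤ ∑ a ∈ (BB 0 t y).filter (fun a => a ≤ Nat.sqrt x),
      (4 * C * x / Real.log x) * (1 / (a : ℝ)) := by
    have : ((T2 t x y).card : ℝ) ≤ ∑ a ∈ (BB 0 t y).filter (fun a => a ≤ Nat.sqrt x),
        (((PrI 0 (x / a)).image fun q => a * q).card : ℝ) := by
      unfold T2
      norm_cast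
      exact Finset.card_biUnion_le
    refine this.trans (Finset.sum_le_sum fun a ha => ?_)
    rw [Finset.mem_filter] at ha
    have ha0 := BB_pos ha.1
    have h3 : Nat.sqrt x ≤ x / a := (Nat.le_div_iff_mul_le ha0).2
      ((Nat.mul_le_mul_left _ ha.2).trans (Nat.sqrt_le x))
    have h4 : Real.log (Nat.sqrt x) ≤ Real.log ((x / a : ℕ) : ℝ) :=
      Real.log_le_log (by positivity) (by exact_mod_cast h3)
    calc _ ≤ ((PrI 0 (x / a)).card : ℝ) := by exact_mod_cast Finset.card_image_le
      _ ≤ C * ((x / a : ℕ) : ℝ) / Real.log ((x / a : ℕ) : ℝ) := hpi _ (by omega)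
      _ ≤ C * ((x : ℝ) / a) / (Real.log x / 4) := by
        gcongr
        · exact Nat.cast_div_le
        · linarith
      _ = _ := by field_simp
  refine h2.trans ?_
  rw [← Finset.mul_sum]
  calc _ ≤ (4 * C * x / Real.log x) * (C1 * (1 + Real.log t)) := by
        gcongr
        exact le_trans (Finset.sum_le_sum_of_subset_of_nonneg (Finset.filter_subset _ _)
            fun a _ _ => by positivity) (h1 t y ht)
    _ = _ := by ring

lemma SD_subset {t x y : ℕ} (hx : 1 ≤ x) (ht : 1 ≤ t) (hy1 : y ^ 3 ≤ x) (hy2 : x < (y + 1) ^ 3)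
    (htx : t ^ 6 ≤ x) :
    SD t x ⊆ Finset.Icc 1 (Nat.sqrt x) ∪ (T1 t x ∪ T2 t x y) := by
  intro n hn
  rw [mem_SD] at hn
  rw [Finset.mem_union, Finset.mem_union]
  rcases le_or_gt n (Nat.sqrt x) with h | h
  · exact Or.inl (Finset.mem_Icc.2 ⟨hn.1.1, h⟩)
  right
  have hs1 : 1 ≤ Nat.sqrt x := Nat.le_sqrt.2 (by omega)
  obtain ⟨q, a, b, hq, rfl, has, haq, haB, hb, hbq, ha0, hb0⟩ :=
    dense_decomp hn.2.1 hn.2.2 hs1 h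
  have hqx : q ≤ x := le_trans (Nat.le_of_dvd hn.1.1 ⟨a * b, by ring⟩) hn.1.2
  have haqx : a * q ≤ x := (Nat.le_mul_of_pos_right _ hb0).trans hn.1.2
  have haB' := haB
  rw [BB, Finset.mem_filter] at haB'
  rcases le_or_gt (a * q * q) x with hle | hgt
  · left
    unfold T1
    rw [Finset.mem_biUnion]
    refine ⟨q, mem_PrI.2 ⟨⟨hq.pos, hqx⟩, hq⟩, ?_⟩
    rw [Finset.mem_biUnion]
    refine ⟨a, Finset.mem_filter.2 ⟨haB, haq⟩, ?_⟩
    rw [if_pos hle, Finset.mem_image]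
    refine ⟨b, mem_Phi.2 ⟨⟨hb0, ?_⟩, hb, hbq⟩, rfl⟩
    rw [Nat.le_div_iff_mul_le (Nat.mul_pos ha0 hq.pos)]
    linarith [hn.1.2]
  · right
    have hb1 : b = 1 := by
      by_contra hne
      have h1 := hbq _ (Nat.minFac_prime hne) (Nat.minFac_dvd b)
      have h2 : q < b := lt_of_lt_of_le h1 (Nat.minFac_le hb0)
      have h3 : a * q * q ≤ a * q * b := Nat.mul_le_mul_left _ h2.le
      omega
    subst hb1
    rw [mul_one] at *
    unfold T2
    rw [Finset.mem_biUnion]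
    refine ⟨a, Finset.mem_filter.2 ⟨?_, has⟩, ?_⟩
    · have hD := mem_DD.1 haB'.1
      rw [BB, Finset.mem_filter, mem_DD]
      refine ⟨⟨hD.1, fun p hp hpd => ⟨hp.pos, ?_⟩, hD.2.2⟩, ?_⟩
      · by_contra hcon
        push Not at hcon
        have h1 := hD.2.2 p hp hpd
        have h2 : sm a p * p ∣ a := by
          apply Nat.Coprime.mul_dvd_of_dvd_of_dvd _ (sm_dvd ha0.ne' p) hpd
          apply Nat.Coprime.symm
          rw [Nat.Prime.coprime_iff_not_dvd hp]
          intro hcon2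
          exact lt_irrefl _ (prime_dvd_sm hp hcon2).1
        have h3 : sm a p * p ≤ a := Nat.le_of_dvd ha0 h2
        have h4 : p * p ≤ t * Nat.sqrt x := by
          calc p * p ≤ t * sm a p * p := Nat.mul_le_mul_right _ h1
            _ = t * (sm a p * p) := by ring
            _ ≤ _ := Nat.mul_le_mul_left _ (h3.trans has)
        have h5 : (p * p) * (p * p) ≤ t * t * x := by
          calc _ ≤ (t * Nat.sqrt x) * (t * Nat.sqrt x) := Nat.mul_le_mul h4 h4
            _ = t * t * (Nat.sqrt x * Nat.sqrt x) := by ring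
            _ ≤ _ := Nat.mul_le_mul_left _ (Nat.sqrt_le x)
        have h6 : (y + 1) ^ 3 ≤ p ^ 3 := Nat.pow_le_pow_left hcon 3
        have h7 : p < t * t := by
          have : p * p ^ 3 < t * t * p ^ 3 := by
            calc p * p ^ 3 = (p * p) * (p * p) := by ring
              _ ≤ t * t * x := h5
              _ < t * t * p ^ 3 := Nat.mul_lt_mul_of_pos_left (by omega) (Nat.mul_pos ht ht)
          exact lt_of_mul_lt_mul_right this (Nat.zero_le _)
        have h8 : p ^ 3 ≤ t ^ 6 := by
          calc p ^ 3 ≤ (t * t) ^ 3 := Nat.pow_le_pow_left h7.le 3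
            _ = _ := by ring
        omega
      · by_contra hcon
        push Not at hcon
        have h1 : a * q * q ≤ (t * a) ^ 3 := by
          calc a * q * q ≤ a * (t * a) * (t * a) :=
                Nat.mul_le_mul (Nat.mul_le_mul_left _ haB'.2) haB'.2
            _ ≤ t * (a * (t * a) * (t * a)) := Nat.le_mul_of_pos_left _ ht
            _ = _ := by ring
        have h2 : (t * a) ^ 3 ≤ y ^ 3 := Nat.pow_le_pow_left hcon.le 3
        omega
    · rw [Finset.mem_image]
      refine ⟨q, mem_PrI.2 ⟨⟨hq.pos, ?_⟩, hq⟩, rfl⟩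
      rw [Nat.le_div_iff_mul_le ha0]
      linarith

lemma SD_upper : ∃ C : ℝ, 1 ≤ C ∧ ∀ x t : ℕ, 2 ≤ x → 1 ≤ t →
    ((SD t x).card : ℝ) ≤ C * x * (1 + Real.log t) / Real.log x := by
  obtain ⟨C1, x1, hC1, h1⟩ := T1_card
  obtain ⟨C2, hC2, h2⟩ := T2_card
  set x0 := x1 + 8 with hx0
  refine ⟨C1 + C2 + 6 + Real.log x0, ?_, fun x t hx ht => ?_⟩
  · have := Real.log_natCast_nonneg x0
    linarith
  have hl0 := Real.log_natCast_nonneg x0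
  have hlt : 0 ≤ Real.log (t : ℝ) := Real.log_natCast_nonneg t
  have hlx : 0 < Real.log (x : ℝ) := Real.log_pos (by exact_mod_cast (by omega : 1 < x))
  have hxr : (0 : ℝ) < x := by exact_mod_cast (by omega : 0 < x)
  have htriv : ((SD t x).card : ℝ) ≤ x := by exact_mod_cast SD_card_le t x
  have hmain : ((SD t x).card : ℝ) * Real.log x ≤
      (C1 + C2 + 6 + Real.log x0) * x * (1 + Real.log t) := by
    rcases lt_or_ge x x0 with h | h
    · have h3 : Real.log x ≤ Real.log x0 :=
        Real.log_le_log hxr (by exact_mod_cast h.le)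
      calc _ ≤ x * Real.log x0 := by gcongr
        _ = (0 + Real.log x0) * x * (1 + 0) := by ring
        _ ≤ _ := by gcongr; positivity
    rcases lt_or_ge x (t ^ 6) with h6 | h6
    · have h3 : Real.log x ≤ Real.log ((t : ℝ) ^ 6) :=
        Real.log_le_log hxr (by exact_mod_cast h6.le)
      rw [Real.log_pow] at h3
      push_cast at h3
      calc _ ≤ x * (6 * Real.log t) := by gcongr
        _ = (0 + 6 + 0) * x * (0 + Real.log t) := by ring
        _ ≤ _ := by gcongr <;> positivity
    obtain ⟨y, hy2, hy3, hy4, -, -⟩ := exists_root 3 x (by norm_num) (by omega)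
    have hsub := Finset.card_le_card (SD_subset (by omega) ht hy3 hy4 h6)
    have hc : ((SD t x).card : ℝ) ≤ Nat.sqrt x + ((T1 t x).card + (T2 t x y).card) := by
      have h5 := Finset.card_union_le (Finset.Icc 1 (Nat.sqrt x)) (T1 t x ∪ T2 t x y)
      have h7 := Finset.card_union_le (T1 t x) (T2 t x y)
      rw [Nat.card_Icc, Nat.add_sub_cancel] at h5
      exact_mod_cast (by omega : (SD t x).card ≤ Nat.sqrt x + ((T1 t x).card + (T2 t x y).card))
    have h3 := h1 x t (by omega) ht
    have h4 := h2 x t y (by omega) ht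
    rw [le_div_iff₀ hlx] at h3 h4
    have h8 : (Nat.sqrt x : ℝ) * Real.log x ≤ 4 * x := by
      obtain ⟨hs2, hs⟩ := log_sqrt_bound (by omega : 4 ≤ x)
      have h9 : Real.log (Nat.sqrt x) ≤ Nat.sqrt x := by
        have := Real.log_le_sub_one_of_pos (show (0 : ℝ) < Nat.sqrt x by positivity)
        linarith
      have h10 : (Nat.sqrt x : ℝ) * Nat.sqrt x ≤ x := by exact_mod_cast Nat.sqrt_le x
      calc _ ≤ (Nat.sqrt x : ℝ) * (4 * Nat.sqrt x) := by gcongr; linarith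
        _ ≤ _ := by linarith
    calc _ ≤ (Nat.sqrt x + ((T1 t x).card + (T2 t x y).card)) * Real.log x := by gcongr
      _ ≤ 4 * x + C1 * x * (1 + Real.log t) + C2 * x * (1 + Real.log t) := by linarith
      _ ≤ 6 * x * (1 + Real.log t) + C1 * x * (1 + Real.log t) + C2 * x * (1 + Real.log t) := by
        nlinarith [mul_nonneg hxr.le hlt]
      _ ≤ _ := by nlinarith [mul_nonneg (mul_nonneg hxr.le hl0) (by linarith : 0 ≤ 1 + Real.log (t : ℝ))]
  rw [le_div_iff₀ hlx]
  exact hmain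


/-! ### Upper bound for `|𝒜(x)|` -/

noncomputable def AA (N : ℕ) : Finset ℕ :=
  open Classical in
  (Finset.Icc 1 N).filter fun n => ∀ p : ℕ, p.Prime → p ∣ n → p * n ≤ N * sm n p

lemma mem_AA {N n : ℕ} : n ∈ AA N ↔ (1 ≤ n ∧ n ≤ N) ∧
    ∀ p : ℕ, p.Prime → p ∣ n → p * n ≤ N * sm n p := by
  simp [AA]

lemma AA_card_le (N : ℕ) : (AA N).card ≤ N := by
  classical
  unfold AA
  refine (Finset.card_filter_le _ _).trans ?_
  simp

lemma sm_le {n : ℕ} (hn : n ≠ 0) (p : ℕ) : sm n p ≤ n :=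
  Nat.le_of_dvd (Nat.pos_of_ne_zero hn) (sm_dvd hn p)

lemma AA_subset (N : ℕ) : AA N ⊆ (Finset.range N).biUnion fun j =>
    (SD (2 ^ (j + 1)) (N / 2 ^ j)).biUnion fun s =>
      (Finset.Icc 1 (Nat.sqrt (2 ^ (j + 1)))).image fun m => m ^ 2 * s := by
  intro n hn
  rw [mem_AA] at hn
  obtain ⟨s, m, hsm, hs⟩ := Nat.sq_mul_squarefree n
  have hn0 : n ≠ 0 := by omega
  have hs0 : s ≠ 0 := hs.ne_zero
  have hm0 : m ≠ 0 := by rintro rfl; simp at hsm; omega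
  have hsn : s ≤ n := by rw [← hsm]; exact Nat.le_mul_of_pos_left _ (by positivity)
  have hsN : s ≤ N := hsn.trans hn.1.2
  set j := Nat.log 2 (N / s) with hj
  have hNs : 1 ≤ N / s := (Nat.le_div_iff_mul_le (by omega)).2 (by omega)
  have hj1 : 2 ^ j ≤ N / s := Nat.pow_log_le_self 2 (by omega)
  have hj2 : N / s < 2 ^ (j + 1) := Nat.lt_pow_succ_log_self (by norm_num) _
  have hN2 : N < 2 ^ (j + 1) * s := (Nat.div_lt_iff_lt_mul (by omega)).1 hj2
  rw [Finset.mem_biUnion]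
  refine ⟨j, ?_, ?_⟩
  · rw [Finset.mem_range]
    calc j < 2 ^ j := Nat.lt_two_pow_self
      _ ≤ N / s := hj1
      _ ≤ N := Nat.div_le_self _ _
  rw [Finset.mem_biUnion]
  refine ⟨s, ?_, ?_⟩
  · rw [mem_SD]
    refine ⟨⟨by omega, ?_⟩, hs, ?_⟩
    · rw [Nat.le_div_iff_mul_le (by positivity)]
      rw [Nat.le_div_iff_mul_le (by omega)] at hj1
      linarith
    · intro p hp hd
      have h1 := hn.2 p hp (by rw [← hsm]; exact hd.mul_left _)
      rw [← hsm, sm_mul (by positivity) hs0] at h1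
      have h2 : p * (m ^ 2 * s) ≤ N * (m ^ 2 * sm s p) :=
        h1.trans (Nat.mul_le_mul_left _ (Nat.mul_le_mul_right _ (sm_le (by positivity) p)))
      have h3 : m ^ 2 * (p * s) ≤ m ^ 2 * (N * sm s p) := by linarith
      have h4 : p * s ≤ N * sm s p := Nat.le_of_mul_le_mul_left h3 (by positivity)
      have h5 : p * s ≤ (2 ^ (j + 1) * sm s p) * s := by
        calc p * s ≤ N * sm s p := h4
          _ ≤ 2 ^ (j + 1) * s * sm s p := Nat.mul_le_mul_right _ hN2.le
          _ = _ := by ring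
      exact Nat.le_of_mul_le_mul_right h5 (by omega)
  · rw [Finset.mem_image]
    refine ⟨m, Finset.mem_Icc.2 ⟨by omega, ?_⟩, hsm⟩
    rw [Nat.le_sqrt]
    have : m ^ 2 ≤ N / s := by
      rw [Nat.le_div_iff_mul_le (by omega), hsm]; exact hn.1.2
    nlinarith

lemma SD_dyadic : ∃ C : ℝ, 0 < C ∧ ∀ N j : ℕ, 4 ≤ N →
    ((SD (2 ^ (j + 1)) (N / 2 ^ j)).card : ℝ) ≤ C * N / Real.log N * ((j + 2) / 2 ^ j) := by
  obtain ⟨C, hC, h⟩ := SD_upper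
  refine ⟨4 * C, by linarith, fun N j hN => ?_⟩
  have hlN : 0 < Real.log (N : ℝ) := Real.log_pos (by exact_mod_cast (by omega : 1 < N))
  have hl2 : Real.log 2 ≤ 1 := by have := Real.log_two_lt_d9; linarith
  have hl20 : 0 < Real.log 2 := Real.log_pos (by norm_num)
  have hz : ((N / 2 ^ j : ℕ) : ℝ) ≤ (N : ℝ) / 2 ^ j := by
    refine Nat.cast_div_le.trans ?_
    push_cast; exact le_rfl
  rcases le_or_gt (2 ^ j * 2 ^ j) N with h1 | h1
  · have h2 : Nat.sqrt N ≤ N / 2 ^ j := by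
      rw [Nat.le_div_iff_mul_le (by positivity)]
      exact (Nat.mul_le_mul_left _ (Nat.le_sqrt.2 h1)).trans (Nat.sqrt_le N)
    obtain ⟨hs2, hs⟩ := log_sqrt_bound hN
    have h3 : Real.log (Nat.sqrt N) ≤ Real.log ((N / 2 ^ j : ℕ) : ℝ) :=
      Real.log_le_log (by positivity) (by exact_mod_cast h2)
    have h4 := h (N / 2 ^ j) (2 ^ (j + 1)) (by omega) Nat.one_le_two_pow
    have h5 : Real.log ((2 ^ (j + 1) : ℕ) : ℝ) ≤ j + 1 := by
      push_cast
      rw [Real.log_pow]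
      push_cast
      nlinarith
    have h6 : 0 ≤ Real.log ((2 ^ (j + 1) : ℕ) : ℝ) := Real.log_natCast_nonneg _
    calc _ ≤ C * ((N / 2 ^ j : ℕ) : ℝ) * (1 + Real.log ((2 ^ (j + 1) : ℕ) : ℝ)) /
          Real.log ((N / 2 ^ j : ℕ) : ℝ) := h4
      _ ≤ C * ((N : ℝ) / 2 ^ j) * (1 + (j + 1)) / (Real.log N / 4) := by
        gcongr
        linarith
      _ = _ := by field_simp; ring
  · have h2 : Real.log N ≤ 2 * j := by
      have : Real.log N ≤ Real.log (((2 : ℝ)) ^ (2 * j)) := by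
        apply Real.log_le_log (by positivity)
        have : N ≤ 2 ^ (2 * j) := by
          rw [two_mul, pow_add]; exact h1.le
        exact_mod_cast this
      rw [Real.log_pow] at this
      push_cast at this
      nlinarith [(Nat.cast_nonneg j : (0 : ℝ) ≤ j)]
    have h3 : (1 : ℝ) ≤ 2 * j / Real.log N := by rw [le_div_iff₀ hlN]; linarith
    calc _ ≤ ((N / 2 ^ j : ℕ) : ℝ) := by exact_mod_cast SD_card_le _ _
      _ ≤ ((N : ℝ) / 2 ^ j) * 1 := by rw [mul_one]; exact hz
      _ ≤ ((N : ℝ) / 2 ^ j) * (2 * j / Real.log N) := by gcongr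
      _ = (2 * N / Real.log N) * (j / 2 ^ j) := by field_simp
      _ ≤ _ := by gcongr <;> linarith

lemma AA_upper : ∃ K : ℝ, 0 < K ∧ ∀ N : ℕ, 2 ≤ N → ((AA N).card : ℝ) ≤ K * N / Real.log N := by
  obtain ⟨C, hC, h⟩ := SD_dyadic
  refine ⟨192 * C + 2, by linarith, fun N hN => ?_⟩
  have hlN : 0 < Real.log (N : ℝ) := Real.log_pos (by exact_mod_cast (by omega : 1 < N))
  have hN0 : (0 : ℝ) < N := by exact_mod_cast (by omega : 0 < N)
  rcases lt_or_ge N 4 with h4 | h4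
  · have h1 : Real.log N ≤ 2 := by
      have := Real.log_le_sub_one_of_pos hN0
      have : (N : ℝ) ≤ 3 := by exact_mod_cast (by omega : N ≤ 3)
      linarith
    calc ((AA N).card : ℝ) ≤ N := by exact_mod_cast AA_card_le N
      _ ≤ (0 + 2) * N / Real.log N := by rw [le_div_iff₀ hlN]; nlinarith
      _ ≤ _ := by gcongr; linarith
  have hsq : ∀ j : ℕ, (Nat.sqrt (2 ^ (j + 1)) : ℝ) ≤ 2 * (3 / 2) ^ j := by
    intro j
    apply le_of_sq_le_sq _ (by positivity)
    have h1 : ((Nat.sqrt (2 ^ (j + 1)) : ℝ)) ^ 2 ≤ 2 ^ (j + 1) := by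
      exact_mod_cast Nat.sqrt_le' (2 ^ (j + 1))
    refine h1.trans ?_
    rw [mul_pow, ← pow_mul, mul_comm j 2, pow_mul, pow_succ]
    have : (2 : ℝ) ^ j ≤ ((3 / 2) ^ 2) ^ j := pow_le_pow_left₀ (by norm_num) (by norm_num) j
    nlinarith [pow_pos (show (0 : ℝ) < 2 by norm_num) j]
  have hj : ∀ j : ℕ, ((j : ℝ) + 2) ≤ 12 * (7 / 6) ^ j := by
    intro j
    have := one_add_mul_le_pow (show (-2 : ℝ) ≤ 1 / 6 by norm_num) j
    norm_num at this
    nlinarith [(Nat.cast_nonneg j : (0 : ℝ) ≤ j)]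
  have h1 : ((AA N).card : ℝ) ≤ ∑ j ∈ Finset.range N,
      ((SD (2 ^ (j + 1)) (N / 2 ^ j)).card : ℝ) * Nat.sqrt (2 ^ (j + 1)) := by
    have := Finset.card_le_card (AA_subset N)
    have h2 := this.trans (Finset.card_biUnion_le.trans (Finset.sum_le_sum fun j _ =>
      (Finset.card_biUnion_le.trans (Finset.sum_le_sum fun s _ => Finset.card_image_le))))
    simp only [Nat.card_Icc, Nat.add_sub_cancel, Finset.sum_const, smul_eq_mul] at h2
    exact_mod_cast h2
  refine h1.trans ?_
  calc _ ≤ ∑ j ∈ Finset.range N, (24 * C * N / Real.log N) * (7 / 8 : ℝ) ^ j := by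
        refine Finset.sum_le_sum fun j _ => ?_
        calc _ ≤ (C * N / Real.log N * ((12 * (7 / 6) ^ j) / 2 ^ j)) * (2 * (3 / 2) ^ j) := by
              gcongr
              · refine (h N j h4).trans ?_
                gcongr
                exact hj j
              · exact hsq j
          _ = (24 * C * N / Real.log N) * ((7 / 6) ^ j / 2 ^ j * (3 / 2) ^ j) := by ring
          _ = _ := by
            rw [← div_pow, ← mul_pow]; norm_num
    _ = (24 * C * N / Real.log N) * ∑ j ∈ Finset.range N, (7 / 8 : ℝ) ^ j := by
        rw [Finset.mul_sum]
    _ ≤ (24 * C * N / Real.log N) * 8 := by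
        gcongr
        rw [geom_sum_eq (by norm_num)]
        have : (0 : ℝ) < (7 / 8) ^ N := by positivity
        rw [div_le_iff_of_neg (by norm_num)]
        linarith
    _ = (192 * C + 0) * N / Real.log N := by ring
    _ ≤ _ := by gcongr; norm_num


/-! ### Lower bound for the number of dense integers -/

lemma exists_log_ge (B : ℝ) : ∃ y0 : ℕ, 2 ≤ y0 ∧ ∀ y : ℕ, y0 ≤ y → B ≤ Real.log y := by
  obtain ⟨n, hn⟩ := exists_nat_gt (Real.exp B)
  refine ⟨n + 2, by omega, fun y hy => ?_⟩
  have h1 : (n : ℝ) ≤ y := by exact_mod_cast (by omega : n ≤ y)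
  rw [Real.le_log_iff_exp_le (by have := Real.exp_pos B; linarith)]
  linarith

lemma aux_log1 {η ly la : ℝ} {h : ℕ} (hη : 0 < η) (hl : 0 < ly) (h5 : (1 + η / 2) * ly ≤ la)
    (hh : 2 / η < h) : ((h : ℝ) + 2 + 1) * ly ≤ (h + 2) * la := by
  rw [div_lt_iff₀ hη] at hh
  have h6 : 1 ≤ ((h : ℝ) + 2) * (η / 2) := by linarith
  calc ((h : ℝ) + 2 + 1) * ly = (h + 2) * ly + 1 * ly := by ring
    _ ≤ (h + 2) * ly + ((h : ℝ) + 2) * (η / 2) * ly := by gcongr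
    _ = (h + 2) * ((1 + η / 2) * ly) := by ring
    _ ≤ _ := by gcongr

set_option maxHeartbeats 1000000 in
lemma dense_sum_lower (w : ℕ) : ∃ t h K y0 : ℕ, ∃ c0 : ℝ, 1 ≤ t ∧ 2 ≤ h ∧ 1 ≤ K ∧ 0 < c0 ∧
    ∀ y : ℕ, y0 ≤ y → c0 ≤ ∑ a ∈ (BB w t y).filter (fun a => y ^ (h + 1) ≤ a ^ h ∧ a ≤ y ^ K),
      1 / (a : ℝ) := by
  classical
  obtain ⟨R, hR1, hR⟩ := VV_bound w
  obtain ⟨C1, hC1, hE1⟩ := EE_one_bound w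
  obtain ⟨C2, hC2, hE2⟩ := EE_sq_bound w
  obtain ⟨cW, CW, hcW, hCW, hW⟩ := WW_bounds
  obtain ⟨t0, ht02, ht0⟩ := exists_log_ge R
  obtain ⟨q, hq, hqp⟩ := Nat.exists_infinite_primes (w + 1)
  set t := max t0 q with ht
  have ht1 : 1 ≤ t := by have := le_max_left t0 q; omega
  have htR : R ≤ Real.log t := ht0 t (le_max_left _ _)
  have hV : 0 < VV w t := by
    unfold VV
    refine Finset.sum_pos' (fun p hp => ?_) ⟨q, mem_PrI.2 ⟨⟨by omega, le_max_right _ _⟩, hqp⟩, ?_⟩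
    · have := Real.log_natCast_nonneg p
      positivity
    · have : 0 < Real.log (q : ℝ) := Real.log_pos (by exact_mod_cast hqp.one_lt)
      positivity
  have hWt := WW_pos w t
  set z0 := VV w t / WW w t with hz0
  have hz0pos : 0 < z0 := div_pos hV hWt
  have hlt : 0 ≤ Real.log (t : ℝ) := Real.log_natCast_nonneg t
  set P0 := C1 * (1 + Real.log t) with hP0
  set Q0 := C2 * (1 + Real.log t) with hQ0
  have hP0pos : 0 < P0 := by positivity
  have hQ0pos : 0 < Q0 := by positivity
  set η := z0 / (4 * P0) with hη
  have hηpos : 0 < η := by positivity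
  set K0 := 4 * Q0 / z0 with hK0
  have hK0pos : 0 < K0 := by positivity
  obtain ⟨h, hh⟩ := exists_nat_gt (2 / η)
  obtain ⟨K, hK⟩ := exists_nat_gt (K0 + 2)
  obtain ⟨y1, hy12, hy1⟩ := exists_log_ge (max R (2 * R / η))
  have hWw := WW_pos 0 w
  have hK1 : 1 ≤ K := by
    have : (0 : ℝ) < K := by linarith
    exact_mod_cast this
  refine ⟨t, h + 2, K, max y1 (max (t + 1) (w + 2)), z0 * cW / (2 * K0 * WW 0 w), ht1, by omega, hK1,
    by positivity, fun y hy => ?_⟩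
  have hyy1 : y1 ≤ y := le_trans (le_max_left _ _) hy
  have hyt : t < y := le_trans (le_trans (le_max_left _ _) (le_max_right _ _)) hy
  have hyw : w + 2 ≤ y := le_trans (le_trans (le_max_right _ _) (le_max_right _ _)) hy
  have hlogy := hy1 y hyy1
  have hl1 : R ≤ Real.log y := le_trans (le_max_left _ _) hlogy
  have hl2 : 2 * R / η ≤ Real.log y := le_trans (le_max_right _ _) hlogy
  have hlpos : 0 < Real.log (y : ℝ) := by linarith
  have hl2' : R ≤ η / 2 * Real.log y := by
    rw [div_le_iff₀ hηpos] at hl2; linarith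
  have hz := EE_lower ht1 hR htR y hyt
  have h1 := hE1 t y ht1
  have h2 := hE2 t y ht1 (by omega)
  have hVy := abs_le.1 (hR y (by omega))
  set V := VV w y with hVdef
  let G : ℕ → Prop := fun a => η * Real.log y ≤ Real.log a - V ∧ Real.log a - V ≤ K0 * Real.log y
  have hmono : EE w t y (fun a => Real.log a - V) ≤ EE w t y (fun a =>
      (η * Real.log y) * (fun _ => (1:ℝ)) a + ((1 / (K0 * Real.log y)) * (Real.log a - V) ^ 2 +
        (K0 * Real.log y) * (if G a then 1 else 0))) := by
    refine EE_mono fun a ha => ?_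
    set f := Real.log a - V with hf
    have hKl : 0 < K0 * Real.log y := by positivity
    have hsq : 0 ≤ 1 / (K0 * Real.log y) * f ^ 2 := by positivity
    have hη0 : 0 < η * Real.log y := by positivity
    by_cases hG : G a
    · rw [if_pos hG]
      have := hG.2
      linarith
    · rw [if_neg hG]
      rcases lt_or_ge f (η * Real.log y) with h3 | h3
      · linarith
      · have h4 : K0 * Real.log y < f := by
          by_contra h5
          exact hG ⟨h3, not_lt.1 h5⟩
        have : f ≤ 1 / (K0 * Real.log y) * f ^ 2 := by
          rw [one_div_mul_eq_div, le_div_iff₀ hKl]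
          nlinarith
        simp only [mul_one, mul_zero, add_zero]
        linarith
  rw [EE_add, EE_add, EE_mul, EE_mul, EE_mul] at hmono
  have h1' : η * Real.log y * EE w t y (fun _ => 1) ≤ z0 / 4 := by
    have hP : 0 ≤ EE w t y (fun _ => 1) := EE_nonneg fun _ _ => zero_le_one
    have hle : Real.log y ≤ Real.log ((y:ℝ) + 1) :=
      Real.log_le_log (by have : 0 < y := by omega
                          positivity) (by linarith)
    calc η * Real.log y * EE w t y (fun _ => 1) ≤ η * (EE w t y (fun _ => 1) * Real.log (y + 1)) := by
          rw [mul_assoc, mul_comm (Real.log (y:ℝ))]; gcongr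
      _ ≤ η * P0 := by gcongr
      _ = z0 / 4 := by rw [hη]; field_simp
  have h2' : 1 / (K0 * Real.log y) * EE w t y (fun a => (Real.log a - V) ^ 2) ≤ z0 / 4 := by
    calc _ ≤ 1 / (K0 * Real.log y) * (Q0 * Real.log y) := by gcongr
      _ = z0 / 4 := by rw [hK0]; field_simp
  have h3 : z0 / 2 ≤ K0 * Real.log y * EE w t y (fun a => if G a then 1 else 0) := by linarith
  have hWy := WW_pos w y
  have hWW := WW_zero_mul (show w ≤ y by omega)
  have hWl := (hW y (by omega)).1
  have hEG : EE w t y (fun a => if G a then 1 else 0) =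
      (∑ a ∈ (BB w t y).filter G, 1 / (a : ℝ)) / WW w y := by
    unfold EE
    rw [Finset.sum_filter]
    congr 1
    refine Finset.sum_congr rfl fun a _ => ?_
    by_cases hG : G a
    · simp only [if_pos hG]
      exact (if_pos hG).symm
    · simp only [if_neg hG, zero_div]
      exact (if_neg hG).symm
  rw [hEG] at h3
  have hsub : ∑ a ∈ (BB w t y).filter G, 1 / (a : ℝ) ≤
      ∑ a ∈ (BB w t y).filter (fun a => y ^ (h + 2 + 1) ≤ a ^ (h + 2) ∧ a ≤ y ^ K), 1 / (a : ℝ) := by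
    refine Finset.sum_le_sum_of_subset_of_nonneg ?_ fun _ _ _ => by positivity
    intro a ha
    rw [Finset.mem_filter] at ha ⊢
    have hapos := BB_pos ha.1
    have hypos : 0 < y := by omega
    obtain ⟨hG1, hG2⟩ := ha.2
    refine ⟨ha.1, ?_, ?_⟩
    · have : Real.log ((y ^ (h + 2 + 1) : ℕ) : ℝ) ≤ Real.log ((a ^ (h + 2) : ℕ) : ℝ) := by
        push_cast
        rw [Real.log_pow, Real.log_pow]
        push_cast
        have h5 : (1 + η / 2) * Real.log y ≤ Real.log a := by linarith [hVy.1]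
        exact aux_log1 hηpos hlpos h5 hh
      have := (Real.log_le_log_iff (by positivity) (by positivity)).1 this
      exact_mod_cast this
    · have : Real.log (a : ℝ) ≤ Real.log ((y ^ K : ℕ) : ℝ) := by
        push_cast
        rw [Real.log_pow]
        have h6 : (K0 + 2) * Real.log y ≤ K * Real.log y := by gcongr
        linarith [hVy.2]
      have := (Real.log_le_log_iff (by positivity) (by positivity)).1 this
      exact_mod_cast this
  refine le_trans ?_ hsub
  rw [mul_div_assoc', le_div_iff₀ hWy] at h3
  rw [div_le_iff₀ (by positivity)]
  have h7 : cW * Real.log y ≤ WW 0 w * WW w y := by rw [← hWW]; exact hWl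
  have h8 : z0 / 2 * (cW * Real.log y) ≤ WW 0 w * (K0 * Real.log y *
     ∑ a ∈ (BB w t y).filter G, 1 / (a : ℝ)) := by
    calc _ ≤ z0 / 2 * (WW 0 w * WW w y) := by gcongr
      _ = WW 0 w * (z0 / 2 * WW w y) := by ring
      _ ≤ _ := by gcongr
  have h9 : (z0 * cW) * Real.log y ≤ ((∑ a ∈ (BB w t y).filter G, 1 / (a : ℝ)) * (2 * K0 * WW 0 w)) * Real.log y := by
    linarith
  exact le_of_mul_le_mul_right h9 hlpos

/-- injectivity of attaching a large prime -/
lemma mul_prime_inj {Y a a' p p' : ℕ} (ha' : ∀ q : ℕ, q.Prime → q ∣ a' → q ≤ Y)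
    (hp : p.Prime) (hp' : p'.Prime) (hpY : Y < p) (h : a * p = a' * p') : a = a' ∧ p = p' := by
  have h1 : p ∣ a' * p' := ⟨a, by rw [← h, mul_comm]⟩
  rcases hp.dvd_mul.1 h1 with h2 | h2
  · have := ha' p hp h2; omega
  · have h3 := (Nat.prime_dvd_prime_iff_eq hp hp').1 h2
    subst h3
    exact ⟨Nat.eq_of_mul_eq_mul_right hp.pos h, rfl⟩

lemma DD_mul_prime {w t Y a p : ℕ} (hw : w ≤ Y) (ha : a ∈ DD w t Y) (hp : p.Prime) (hpY : Y < p)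
    (hpt : p ≤ t * a) : a * p ∈ DD w t p := by
  have ha0 := DD_pos ha
  rw [mem_DD] at ha ⊢
  obtain ⟨hs, hb, hd⟩ := ha
  have hcop : Nat.Coprime a p := by
    rw [Nat.coprime_comm, hp.coprime_iff_not_dvd]
    intro h; have := (hb p hp h).2; omega
  refine ⟨(Nat.squarefree_mul hcop).2 ⟨hs, hp.prime.squarefree⟩, fun q hq hqd => ?_, fun q hq hqd => ?_⟩
  · rcases hq.dvd_mul.1 hqd with h | h
    · have := hb q hq h; omega
    · have := (Nat.prime_dvd_prime_iff_eq hq hp).1 h; omega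
  · rw [sm_mul ha0.ne' hp.ne_zero]
    rcases hq.dvd_mul.1 hqd with h | h
    · refine (hd q hq h).trans ?_
      exact Nat.mul_le_mul_left _ (Nat.le_mul_of_pos_right _ (sm_pos _ _))
    · have := (Nat.prime_dvd_prime_iff_eq hq hp).1 h
      subst this
      rw [sm_eq_self ha0.ne' (fun r hr hra => lt_of_le_of_lt (hb r hr hra).2 hpY)]
      exact hpt.trans (Nat.mul_le_mul_left _ (Nat.le_mul_of_pos_right _ (sm_pos _ _)))

/-- elements of `DD` in a given interval -/
def DI (w t Y α β : ℕ) : Finset ℕ := (DD w t Y).filter fun a => α ≤ a ∧ a ≤ β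

lemma step_sum {w t Y Y' α β : ℕ} (hw : w ≤ Y) (hY : Y' ≤ t * α) {s u : ℝ}
    (hs0 : 0 ≤ s)
    (hs : s ≤ ∑ a ∈ DI w t Y α β, 1 / (a : ℝ)) (hu0 : 0 ≤ u) (hu : u ≤ ∑ p ∈ PrI Y Y', 1 / (p : ℝ)) :
    s * u ≤ ∑ a ∈ DI w t Y' (α * Y) (β * Y'), 1 / (a : ℝ) := by
  classical
  calc s * u ≤ (∑ a ∈ DI w t Y α β, 1 / (a : ℝ)) * ∑ p ∈ PrI Y Y', 1 / (p : ℝ) :=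
        mul_le_mul hs hu hu0 (hs0.trans hs)
    _ = ∑ x ∈ DI w t Y α β ×ˢ PrI Y Y', 1 / ((x.1 * x.2 : ℕ) : ℝ) := by
        rw [Finset.sum_mul_sum, ← Finset.sum_product']
        refine Finset.sum_congr rfl fun x _ => ?_
        push_cast
        rw [one_div_mul_one_div]
    _ = ∑ b ∈ (DI w t Y α β ×ˢ PrI Y Y').image (fun x : ℕ × ℕ => x.1 * x.2), 1 / ((b : ℕ) : ℝ) := by
        rw [Finset.sum_image]
        rintro ⟨a, p⟩ h ⟨a', p'⟩ h' heq
        simp only [Finset.coe_product, Set.mem_prod, Finset.mem_coe, mem_PrI, DI, Finset.mem_filter,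
          mem_DD] at h h'
        have := mul_prime_inj (fun q hq hqa => (h'.1.1.2.1 q hq hqa).2) h.2.2 h'.2.2 h.2.1.1 heq
        exact Prod.ext this.1 this.2
    _ ≤ _ := by
        refine Finset.sum_le_sum_of_subset_of_nonneg ?_ fun _ _ _ => by positivity
        intro b hb
        rw [Finset.mem_image] at hb
        obtain ⟨⟨a, p⟩, hx, rfl⟩ := hb
        rw [Finset.mem_product, mem_PrI] at hx
        obtain ⟨h1, ⟨h2, h3⟩, h4⟩ := hx
        simp only at h1 h2 h3 h4
        rw [DI, Finset.mem_filter] at h1 ⊢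
        refine ⟨DD_mono w t h3 (DD_mul_prime hw h1.1 h4 h2 ?_), ?_, ?_⟩
        · exact h3.trans (hY.trans (Nat.mul_le_mul_left _ h1.2.1))
        · exact Nat.mul_le_mul h1.2.1 h2.le
        · exact Nat.mul_le_mul h1.2.2 h3

lemma PrI_pow_sum : ∃ R : ℝ, 1 ≤ R ∧ ∀ z m : ℕ, 2 ≤ z → 2 * R ≤ Real.log z →
    1 / (2 * ((m : ℝ) + 1)) ≤ ∑ p ∈ PrI (z ^ m) (z ^ (m + 1)), 1 / (p : ℝ) := by
  obtain ⟨R, hR1, hR⟩ := mertens1'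
  refine ⟨R, hR1, fun z m hz hl => ?_⟩
  have hz0 : 0 < z := by omega
  have h := (abs_le.1 (hR (z ^ m) (z ^ (m + 1)) (Nat.one_le_pow _ _ hz0)
    (Nat.pow_le_pow_right hz0 (by omega)))).1
  have e : (((z ^ (m + 1) : ℕ) : ℝ) / ((z ^ m : ℕ) : ℝ)) = z := by
    push_cast; rw [pow_succ]; field_simp
  rw [e] at h
  have hlz : 0 < Real.log (z : ℝ) := by linarith
  have h2 : ∑ p ∈ PrI (z ^ m) (z ^ (m + 1)), Real.log p / p ≤
      ∑ p ∈ PrI (z ^ m) (z ^ (m + 1)), (((m : ℝ) + 1) * Real.log z) * (1 / (p : ℝ)) := by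
    refine Finset.sum_le_sum fun p hp => ?_
    rw [mem_PrI] at hp
    have hp0 := hp.2.pos
    have : Real.log (p : ℝ) ≤ (m + 1) * Real.log z := by
      have := Real.log_le_log (by positivity) (show (p : ℝ) ≤ (z : ℝ) ^ (m + 1) by exact_mod_cast hp.1.2)
      rw [Real.log_pow] at this
      push_cast at this
      exact this
    rw [mul_one_div]
    gcongr
  rw [← Finset.mul_sum] at h2
  rw [div_le_iff₀ (by positivity)]
  have h3 : Real.log z / 2 ≤ ((m : ℝ) + 1) * Real.log z * ∑ p ∈ PrI (z ^ m) (z ^ (m + 1)), 1 / (p : ℝ) := by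
    linarith
  have h4 : 1 * Real.log z ≤ ((∑ p ∈ PrI (z ^ m) (z ^ (m + 1)), 1 / (p : ℝ)) * (2 * ((m:ℝ) + 1))) * Real.log z := by
    linarith
  exact le_of_mul_le_mul_right h4 hlz


lemma DI_mono {w t Y α β α' β' : ℕ} (h1 : α' ≤ α) (h2 : β ≤ β') :
    ∑ a ∈ DI w t Y α β, 1 / (a : ℝ) ≤ ∑ a ∈ DI w t Y α' β', 1 / (a : ℝ) := by
  refine Finset.sum_le_sum_of_subset_of_nonneg ?_ fun _ _ _ => by positivity
  intro a ha
  rw [DI, Finset.mem_filter] at ha ⊢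
  exact ⟨ha.1, h1.trans ha.2.1, ha.2.2.trans h2⟩

lemma multi_step {w t z M k K : ℕ} {c0 : ℝ} (hM : 1 ≤ M) (ht : 1 ≤ t) (hz : 2 ≤ z) (hwz : w ≤ z) (hc0 : 0 ≤ c0)
    (hpr : ∀ m : ℕ, 1 / (2 * ((m : ℝ) + 1)) ≤ ∑ p ∈ PrI (z ^ m) (z ^ (m + 1)), 1 / (p : ℝ))
    (h0 : c0 ≤ ∑ a ∈ DI w t (z ^ M) (z ^ (M + k)) (z ^ K), 1 / (a : ℝ)) (i : ℕ) (hi : i ≤ k) :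
    c0 * (1 / (2 * ((M : ℝ) + k + 1))) ^ i ≤
      ∑ a ∈ DI w t (z ^ (M + i)) (z ^ (M + k + i * M)) (z ^ (K + i * (M + k))), 1 / (a : ℝ) := by
  have hz0 : 0 < z := by omega
  induction i with
  | zero => simpa using h0
  | succ i ih =>
    have ih := ih (by omega)
    have h1 := step_sum (w := w) (t := t) (Y := z ^ (M + i)) (Y' := z ^ (M + i + 1))
      (α := z ^ (M + k + i * M)) (β := z ^ (K + i * (M + k)))
      (s := c0 * (1 / (2 * ((M : ℝ) + k + 1))) ^ i) (u := 1 / (2 * ((M : ℝ) + k + 1))) ?_ ?_ ?_ ih ?_ ?_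
    · rw [pow_succ, ← mul_assoc]
      refine h1.trans ?_
      rw [show M + (i + 1) = M + i + 1 by ring]
      refine DI_mono ?_ ?_
      · rw [← pow_add]
        refine Nat.pow_le_pow_right hz0 ?_
        rw [add_mul, one_mul]; omega
      · rw [← pow_add]
        refine Nat.pow_le_pow_right hz0 ?_
        rw [add_mul, one_mul]; omega
    · calc w ≤ z ^ 1 := by simpa using hwz
        _ ≤ _ := Nat.pow_le_pow_right hz0 (by omega)
    · calc z ^ (M + i + 1) ≤ 1 * z ^ (M + k + i * M) := by
            rw [one_mul]
            exact Nat.pow_le_pow_right hz0 (by omega)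
        _ ≤ _ := Nat.mul_le_mul_right _ ht
    · positivity
    · positivity
    · refine le_trans ?_ (hpr (M + i))
      have : ((M + i : ℕ) : ℝ) ≤ M + k := by exact_mod_cast (by omega : M + i ≤ M + k)
      gcongr

lemma pi_lower (n : ℕ) (hn : 100 ≤ n) : (n : ℝ) / (2 * Real.log n) ≤ ((PrI 0 n).card : ℝ) := by
  have h0 : (PrI 0 n).card = n.primeCounting := by
    rw [Nat.primeCounting, Nat.primeCounting', Nat.count_eq_card_filter_range]
    congr 1
    ext p
    rw [mem_PrI, Finset.mem_filter, Finset.mem_range]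
    constructor
    · rintro ⟨⟨_, h⟩, h'⟩; exact ⟨by omega, h'⟩
    · rintro ⟨h, h'⟩; exact ⟨⟨h'.pos, by omega⟩, h'⟩
  rw [h0]
  refine le_trans ?_ (Chebyshev.pi_ge n)
  have hn' : (100 : ℝ) ≤ n := by exact_mod_cast hn
  have hl : 0 < Real.log (n : ℝ) := Real.log_pos (by linarith)
  rw [div_le_div_iff₀ (by positivity) hl]
  have h2 := Real.log_two_gt_d9
  have h3 : Real.log ((n : ℝ) + 1) ≤ (n + 1) / 10 + 8 := by
    have e : (n : ℝ) + 1 = ((n + 1) / 10) * 10 := by ring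
    have h4 := Real.log_le_sub_one_of_pos (show (0 : ℝ) < ((n : ℝ) + 1) / 10 by positivity)
    have h5 := Real.log_le_sub_one_of_pos (show (0 : ℝ) < 10 by norm_num)
    rw [e, Real.log_mul (by positivity) (by norm_num)]
    linarith
  have : (n : ℝ) / 2 ≤ n * Real.log 2 - Real.log (n + 1) := by nlinarith
  nlinarith

/-- squarefree dense integers up to `N` with prime factors `> w`. -/
noncomputable def LL (w t N : ℕ) : Finset ℕ :=
  open Classical in
  (Finset.Icc 1 N).filter fun n => Squarefree n ∧ (∀ p : ℕ, p.Prime → p ∣ n → w < p) ∧ Dns t n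

lemma mem_LL {w t N n : ℕ} : n ∈ LL w t N ↔ (1 ≤ n ∧ n ≤ N) ∧
    Squarefree n ∧ (∀ p : ℕ, p.Prime → p ∣ n → w < p) ∧ Dns t n := by
  simp [LL]

lemma LL_card_lower_aux {w t z Y N : ℕ} {S : Finset ℕ} (hw : w ≤ Y) (ht : 1 ≤ t) (hz : 100 ≤ z) (hY0 : 0 < Y)
    (hzl : 4 * Real.log N ≤ z)
    (hS : S ⊆ DD w t Y) (hS1 : ∀ A ∈ S, N ≤ A * A) (hS2 : ∀ A ∈ S, A * (Y * z) ≤ N) :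
    (∑ A ∈ S, 1 / (A : ℝ)) * (N / (8 * Real.log N)) ≤ ((LL w t N).card : ℝ) := by
  classical
  have hcard : (S.sigma fun A => PrI Y (N / A)).card ≤ (LL w t N).card := by
    refine Finset.card_le_card_of_injOn (fun x => x.1 * x.2) ?_ ?_
    · rintro ⟨A, p⟩ h
      simp only [Finset.mem_coe, Finset.mem_sigma, mem_PrI] at h
      obtain ⟨hA, ⟨h1, h2⟩, h3⟩ := h
      have hA0 := DD_pos (hS hA)
      have hpA : A * p ≤ N := by
        rw [mul_comm]; exact (Nat.le_div_iff_mul_le hA0).1 h2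
      have hpA2 : p ≤ A := by
        have := hS1 A hA
        exact Nat.le_of_mul_le_mul_left (hpA.trans this) hA0
      have hD := DD_mul_prime hw (hS hA) h3 h1 (hpA2.trans (Nat.le_mul_of_pos_left _ ht))
      have h4 := mem_DD.1 hD
      rw [Finset.mem_coe, mem_LL]
      exact ⟨⟨DD_pos hD, hpA⟩, h4.1, fun q hq hqd => (h4.2.1 q hq hqd).1, h4.2.2⟩
    · rintro ⟨A, p⟩ h ⟨A', p'⟩ h' heq
      simp only [Finset.mem_coe, Finset.mem_sigma, mem_PrI] at h h'
      have h5 := mul_prime_inj (fun q hq hqa => ((mem_DD.1 (hS h'.1)).2.1 q hq hqa).2)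
        h.2.2 h'.2.2 h.2.1.1 heq
      obtain ⟨rfl, rfl⟩ := h5
      rfl
  rw [Finset.card_sigma] at hcard
  have hcard' : (∑ A ∈ S, ((PrI Y (N / A)).card : ℝ)) ≤ ((LL w t N).card : ℝ) := by exact_mod_cast hcard
  refine le_trans ?_ hcard'
  rw [Finset.sum_mul]
  refine Finset.sum_le_sum fun A hA => ?_
  have hA0 := DD_pos (hS hA)
  set u := N / A with hu
  have hu1 : Y * z ≤ u := by
    rw [hu, Nat.le_div_iff_mul_le hA0, mul_comm]; exact hS2 A hA
  have hu100 : 100 ≤ u := by nlinarith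
  have huN : u ≤ N := Nat.div_le_self _ _
  have hYu : Y ≤ u := by nlinarith
  have hpi := pi_lower u hu100
  have hun : (100 : ℝ) ≤ u := by exact_mod_cast hu100
  have hlu : 0 < Real.log (u : ℝ) := Real.log_pos (by linarith)
  have hlN : Real.log (u : ℝ) ≤ Real.log N := Real.log_le_log (by linarith) (by exact_mod_cast huN)
  have hsplit : (PrI 0 u).card ≤ Y + (PrI Y u).card := by
    have : PrI 0 u ⊆ Finset.Icc 1 Y ∪ PrI Y u := by
      intro p hp
      rw [mem_PrI] at hp
      rw [Finset.mem_union, Finset.mem_Icc, mem_PrI]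
      by_cases h : p ≤ Y
      · left; omega
      · right; exact ⟨⟨by omega, hp.1.2⟩, hp.2⟩
    refine (Finset.card_le_card this).trans ((Finset.card_union_le _ _).trans ?_)
    simp
  have hsplit' : ((PrI 0 u).card : ℝ) ≤ Y + ((PrI Y u).card : ℝ) := by exact_mod_cast hsplit
  have hlNpos : 0 < Real.log (N : ℝ) := by linarith
  have h6 : (u : ℝ) / (2 * Real.log N) ≤ u / (2 * Real.log u) := by gcongr
  have h7 : (Y : ℝ) ≤ u / (4 * Real.log N) := by
    rw [le_div_iff₀ (by positivity)]
    have : (Y : ℝ) * z ≤ u := by exact_mod_cast hu1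
    have : (Y : ℝ) * (4 * Real.log N) ≤ Y * z := by gcongr
    linarith
  have h8 : (N : ℝ) ≤ 2 * u * A := by
    have : N < (u + 1) * A := by
      rw [hu]; exact Nat.lt_mul_of_div_lt (Nat.lt_succ_self _) hA0
    have : N ≤ 2 * u * A := by nlinarith
    exact_mod_cast this
  have h9 : 1 / (A : ℝ) * (N / (8 * Real.log N)) ≤ u / (4 * Real.log N) := by
    rw [div_mul_div_comm, one_mul, div_le_div_iff₀ (by positivity) (by positivity)]
    have : (N : ℝ) * (4 * Real.log N) ≤ 2 * u * A * (4 * Real.log N) := by gcongr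
    linarith
  have h10 : (u : ℝ) / (2 * Real.log N) = u / (4 * Real.log N) + u / (4 * Real.log N) := by
    field_simp; ring
  linarith


lemma log_le_of_large (B z : ℕ) (h : (2 * B) ^ 2 ≤ z) : (B : ℝ) * Real.log z ≤ z := by
  rcases Nat.eq_zero_or_pos z with rfl | hz
  · simp
  have hz' : (0 : ℝ) < z := by exact_mod_cast hz
  have h1 : Real.log z ≤ 2 * Real.sqrt z := by
    have h2 := Real.log_le_sub_one_of_pos (Real.sqrt_pos.2 hz')
    rw [Real.log_sqrt hz'.le] at h2
    linarith
  have h3 : (2 * B : ℝ) ≤ Real.sqrt z := by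
    apply Real.le_sqrt_of_sq_le
    exact_mod_cast h
  have h4 := Real.mul_self_sqrt hz'.le
  have h5 := Real.sqrt_nonneg (z : ℝ)
  calc (B : ℝ) * Real.log z ≤ B * (2 * Real.sqrt z) := by gcongr
    _ = (2 * B) * Real.sqrt z := by ring
    _ ≤ Real.sqrt z * Real.sqrt z := by gcongr
    _ = z := h4

lemma dense_count (w : ℕ) : ∃ t N0 : ℕ, ∃ δ : ℝ, 1 ≤ t ∧ 2 ≤ N0 ∧ 0 < δ ∧ ∀ N : ℕ, N0 ≤ N →
    δ * N / Real.log N ≤ ((LL w t N).card : ℝ) := by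
  classical
  obtain ⟨t, h, K, y0, c0, ht, hh, hK, hc0, hsum⟩ := dense_sum_lower w
  obtain ⟨R, hR1, hR⟩ := PrI_pow_sum
  obtain ⟨y1, hy12, hy1⟩ := exists_log_ge (2 * R)
  obtain ⟨k, hk⟩ : ∃ k, k = 2 * K := ⟨_, rfl⟩
  obtain ⟨M, hM⟩ : ∃ M, M = h * k := ⟨_, rfl⟩
  have hk1 : 2 ≤ k := by omega
  have hM1 : 1 ≤ M := by rw [hM]; nlinarith
  obtain ⟨E, hE⟩ : ∃ E, E + 1 = 2 * (M + k + k * M) := ⟨2 * (M + k + k * M) - 1, by omega⟩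
  have hE1 : 1 ≤ E := by omega
  have hexp : M * K + k * (M + k) + (M + k + 1) ≤ E := by
    have : M * K + k * k ≤ k * M := by
      rw [hM, hk]; nlinarith [Nat.mul_le_mul_right (K * K) hh]
    have : k * (M + k) = k * M + k * k := by ring
    omega
  obtain ⟨e2, he2⟩ : ∃ e2 : ℕ, e2 = 2 ^ E := ⟨_, rfl⟩
  obtain ⟨z1, hz1⟩ : ∃ z1, z1 = y0 + y1 + w + 100 + e2 + (2 * (4 * (E + 1))) ^ 2 := ⟨_, rfl⟩
  obtain ⟨c1, hc1⟩ : ∃ c1, c1 = c0 * (1 / (2 * ((M : ℝ) + k + 1))) ^ k := ⟨_, rfl⟩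
  have hc1pos : 0 < c1 := by rw [hc1]; positivity
  refine ⟨t, (z1 + 1) ^ E + 2, c1 / 8, ht, by omega, by positivity, fun N hN => ?_⟩
  obtain ⟨z, hz2, hzN, hNz, -, -⟩ := exists_root E N hE1 (by
    calc 2 ^ E ≤ (z1 + 1) ^ E := Nat.pow_le_pow_left (by omega) _
      _ ≤ N := by omega)
  have hzz : z1 ≤ z := by
    by_contra hcon
    have : (z + 1) ^ E ≤ (z1 + 1) ^ E := Nat.pow_le_pow_left (by omega) _
    omega
  have hz0 : 0 < z := by omega
  have hpr : ∀ m : ℕ, 1 / (2 * ((m : ℝ) + 1)) ≤ ∑ p ∈ PrI (z ^ m) (z ^ (m + 1)), 1 / (p : ℝ) :=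
    fun m => hR z m hz2 (hy1 z (by omega))
  have hzM : z ≤ z ^ M := Nat.le_self_pow (by omega) z
  have hbase : c0 ≤ ∑ a ∈ DI w t (z ^ M) (z ^ (M + k)) (z ^ (M * K)), 1 / (a : ℝ) := by
    refine (hsum (z ^ M) (by omega)).trans ?_
    refine Finset.sum_le_sum_of_subset_of_nonneg ?_ fun _ _ _ => by positivity
    intro a ha
    rw [Finset.mem_filter, BB, Finset.mem_filter] at ha
    rw [DI, Finset.mem_filter]
    refine ⟨ha.1.1, ?_, ?_⟩
    · have h1 := ha.2.1
      rw [← pow_mul, show M * (h + 1) = (M + k) * h by rw [hM]; ring, pow_mul] at h1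
      exact (Nat.pow_le_pow_iff_left (by omega)).1 h1
    · rw [pow_mul]; exact ha.2.2
  have hms := multi_step hM1 ht hz2 (by omega) hc0.le hpr hbase k le_rfl
  rw [← hc1] at hms
  have hNE : N ≤ z ^ (E + 1) := by
    calc N ≤ (z + 1) ^ E := hNz.le
      _ ≤ (2 * z) ^ E := Nat.pow_le_pow_left (by omega) _
      _ = 2 ^ E * z ^ E := mul_pow _ _ _
      _ ≤ z * z ^ E := Nat.mul_le_mul_right _ (by rw [← he2]; omega)
      _ = z ^ (E + 1) := by rw [pow_succ, mul_comm]
  have hN0 : 0 < N := by omega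
  have hlogN : Real.log N ≤ (E + 1) * Real.log z := by
    have := Real.log_le_log (show (0:ℝ) < N by exact_mod_cast hN0)
      (show (N : ℝ) ≤ (z : ℝ) ^ (E + 1) by exact_mod_cast hNE)
    rw [Real.log_pow] at this
    push_cast at this
    exact this
  have hmain := LL_card_lower_aux (w := w) (t := t) (z := z) (Y := z ^ (M + k)) (N := N)
    (S := DI w t (z ^ (M + k)) (z ^ (M + k + k * M)) (z ^ (M * K + k * (M + k)))) ?_ ht (by omega)
    (by positivity) ?_ (Finset.filter_subset _ _) ?_ ?_
  · refine le_trans ?_ hmain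
    have hlN : 0 ≤ Real.log (N : ℝ) := Real.log_natCast_nonneg N
    calc c1 / 8 * N / Real.log N = c1 * (N / (8 * Real.log N)) := by ring
      _ ≤ _ := by gcongr
  · calc w ≤ z := by omega
      _ ≤ z ^ (M + k) := Nat.le_self_pow (by omega) z
  · have := log_le_of_large (4 * (E + 1)) z (by omega)
    push_cast at this
    linarith
  · intro A hA
    rw [DI, Finset.mem_filter] at hA
    calc N ≤ z ^ (E + 1) := hNE
      _ = z ^ (M + k + k * M) * z ^ (M + k + k * M) := by rw [← pow_add]; congr 1; omega
      _ ≤ A * A := Nat.mul_le_mul hA.2.1 hA.2.1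
  · intro A hA
    rw [DI, Finset.mem_filter] at hA
    calc A * (z ^ (M + k) * z) ≤ z ^ (M * K + k * (M + k)) * (z ^ (M + k) * z) :=
          Nat.mul_le_mul_right _ hA.2.2
      _ = z ^ (M * K + k * (M + k) + (M + k + 1)) := by rw [← pow_succ, ← pow_add]
      _ ≤ z ^ E := Nat.pow_le_pow_right hz0 hexp
      _ ≤ N := hzN


lemma exists_pow_between {G b : ℕ} (hb : 0 < b) (hbG : b ≤ G) : ∃ a : ℕ, G < b * 2 ^ a ∧ b * 2 ^ a ≤ 2 * G := by
  classical
  have hex : ∃ a : ℕ, G < b * 2 ^ a := ⟨G, lt_of_lt_of_le Nat.lt_two_pow_self (Nat.le_mul_of_pos_left _ hb)⟩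
  refine ⟨Nat.find hex, Nat.find_spec hex, ?_⟩
  rcases h : Nat.find hex with _ | a
  · have := Nat.find_spec hex
    rw [h] at this; simp at this; omega
  · have := Nat.find_min hex (m := a) (by omega)
    rw [pow_succ, ← mul_assoc]; omega

lemma three_two_inj {i j a b : ℕ} (h : 3 ^ i * 2 ^ a = 3 ^ j * 2 ^ b) : i = j := by
  have h1 := congrArg (fun n => n.factorization 3) h
  have e : ∀ i a : ℕ, (3 ^ i * 2 ^ a).factorization 3 = i := by
    intro i a
    rw [Nat.factorization_mul (by positivity) (by positivity),
      Nat.Prime.factorization_pow Nat.prime_three, Nat.Prime.factorization_pow Nat.prime_two]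
    simp
  simp only [e] at h1
  exact h1

lemma three_two_smooth {i a q : ℕ} (hq : q.Prime) (h : q ∣ 3 ^ i * 2 ^ a) : q < 4 := by
  rcases hq.dvd_mul.1 h with h | h
  · have := (Nat.prime_dvd_prime_iff_eq hq Nat.prime_three).1 (hq.dvd_of_dvd_pow h); omega
  · have := (Nat.prime_dvd_prime_iff_eq hq Nat.prime_two).1 (hq.dvd_of_dvd_pow h); omega

lemma sm4_mul {g m : ℕ} (hg : g ≠ 0) (hm : m ≠ 0) (h1 : ∀ q : ℕ, q.Prime → q ∣ g → q < 4)
    (h2 : ∀ q : ℕ, q.Prime → q ∣ m → 3 < q) : sm (g * m) 4 = g := by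
  rw [sm_mul hg hm, sm_eq_self hg h1, sm_eq_one (fun q hq hqm => h2 q hq hqm), mul_one]

lemma connectors : ∃ t L s G0 : ℕ, ∃ g m : ℕ → ℕ, 1 ≤ t ∧ 1 ≤ L ∧ 2 ≤ G0 ∧ 3 ≤ s ∧
    ∀ i : ℕ, (G0 < g i ∧ g i ≤ 2 * G0) ∧ (∀ q : ℕ, q.Prime → q ∣ g i → q < 4) ∧
      1 ≤ m i ∧ (∀ q : ℕ, q.Prime → q ∣ m i → 3 < q) ∧ Dns t (m i) ∧
      g i * m i ≤ L * Nat.nth Nat.Prime (s + i) ∧ t * m i < Nat.nth Nat.Prime (s + i) ∧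
      ∀ j : ℕ, g i * m i = g j * m j → i = j := by
  classical
  obtain ⟨t, N0, δ, ht, hN0, hδ, hLL⟩ := dense_count 3
  obtain ⟨Cp, hCp, hpi⟩ := pi_upper
  obtain ⟨J, hJ⟩ := exists_nat_gt (4 * t * Cp / δ)
  have hJ1 : 1 ≤ J := by
    have : (0 : ℝ) < J := lt_of_le_of_lt (by positivity) hJ
    exact_mod_cast this
  obtain ⟨L, hL⟩ : ∃ L, L = 3 ^ J := ⟨_, rfl⟩
  have hL3 : 3 ≤ L := by rw [hL]; exact Nat.le_self_pow (by omega) 3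
  obtain ⟨G0, hG0⟩ : ∃ G0, G0 = L * t := ⟨_, rfl⟩
  have hG02 : 3 ≤ G0 := by rw [hG0]; nlinarith
  have hex : ∀ i : Fin J, ∃ a : ℕ, G0 < 3 ^ (i : ℕ) * 2 ^ a ∧ 3 ^ (i : ℕ) * 2 ^ a ≤ 2 * G0 := fun i =>
    exists_pow_between (by positivity) (by
      rw [hG0, hL]
      exact (Nat.pow_le_pow_right (by norm_num) i.2.le).trans (Nat.le_mul_of_pos_right _ ht))
  choose a ha1 ha2 using hex
  let gg : Fin J → ℕ := fun i => 3 ^ (i : ℕ) * 2 ^ (a i)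
  have hgg0 : ∀ i, gg i ≠ 0 := fun i => by simp [gg]
  have hggs : ∀ i, ∀ q : ℕ, q.Prime → q ∣ gg i → q < 4 := fun i q hq hqd => three_two_smooth hq hqd
  let V : ℕ → Prop := fun c => ∃ i : Fin J, ∃ m : ℕ, 1 ≤ m ∧ (∀ q : ℕ, q.Prime → q ∣ m → 3 < q) ∧
    Dns t m ∧ c = gg i * m
  have hcount : ∀ N : ℕ, 2 * t * N0 ≤ N → (PrI 0 N).card ≤ Nat.count V (L * N + 1) := by
    intro N hN
    have hinj : (Finset.univ (α := Fin J) ×ˢ LL 3 t (N / (2 * t))).card ≤ Nat.count V (L * N + 1) := by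
      rw [Nat.count_eq_card_filter_range]
      refine Finset.card_le_card_of_injOn (fun x => gg x.1 * x.2) ?_ ?_
      · rintro ⟨i, m⟩ h
        simp only [Finset.coe_product, Set.mem_prod, Finset.mem_coe, mem_LL] at h
        rw [Finset.mem_coe, Finset.mem_filter, Finset.mem_range]
        obtain ⟨-, ⟨h1, h2⟩, h3, h4, h5⟩ := h
        refine ⟨?_, i, m, h1, h4, h5, rfl⟩
        have h6 : m * (2 * t) ≤ N := (Nat.le_div_iff_mul_le (by omega)).1 h2
        calc gg i * m ≤ (2 * G0) * m := Nat.mul_le_mul_right _ (ha2 i)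
          _ = L * (m * (2 * t)) := by rw [hG0]; ring
          _ ≤ L * N := Nat.mul_le_mul_left _ h6
          _ < L * N + 1 := Nat.lt_succ_self _
      · rintro ⟨i, m⟩ h ⟨j, m'⟩ h' heq
        simp only [Finset.coe_product, Set.mem_prod, Finset.mem_coe, mem_LL] at h h' heq
        have e1 := sm4_mul (hgg0 i) (m := m) (by omega) (hggs i) h.2.2.2.1
        have e2 := sm4_mul (hgg0 j) (m := m') (by omega) (hggs j) h'.2.2.2.1
        rw [heq, e2] at e1
        have hij : j = i := Fin.ext (three_two_inj e1)
        subst hij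
        have := Nat.eq_of_mul_eq_mul_left (Nat.pos_of_ne_zero (hgg0 _)) heq
        rw [this]
    rw [Finset.card_product, Finset.card_univ, Fintype.card_fin] at hinj
    refine le_trans ?_ hinj
    set N' := N / (2 * t) with hN'
    have hNN' : N0 ≤ N' := by
      rw [hN', Nat.le_div_iff_mul_le (by omega)]; linarith
    have h1 := hLL N' hNN'
    have hNbig : N ≤ 4 * t * N' := by
      have : N < (N' + 1) * (2 * t) := by
        rw [hN']; exact Nat.lt_mul_of_div_lt (Nat.lt_succ_self _) (by omega)
      have h3 : 1 ≤ N' := by omega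
      nlinarith
    have hNle : N' ≤ N := Nat.div_le_self _ _
    have hN2 : 2 ≤ N := by omega
    have h2 := hpi N hN2
    have hl' : 0 < Real.log (N' : ℝ) := Real.log_pos (by exact_mod_cast (by omega : 1 < N'))
    have hll : Real.log (N' : ℝ) ≤ Real.log N :=
      Real.log_le_log (by exact_mod_cast (by omega : 0 < N')) (by exact_mod_cast hNle)
    have hNbig' : (N : ℝ) ≤ 4 * t * N' := by exact_mod_cast hNbig
    have hJ' : 4 * t * Cp ≤ J * δ := by
      rw [div_lt_iff₀ hδ] at hJ; exact hJ.le
    have hfin : ((PrI 0 N).card : ℝ) ≤ ((J * (LL 3 t N').card : ℕ) : ℝ) := by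
      push_cast
      calc ((PrI 0 N).card : ℝ) ≤ Cp * N / Real.log N := h2
        _ ≤ Cp * (4 * t * N') / Real.log N' := by gcongr
        _ = (4 * t * Cp) * N' / Real.log N' := by ring
        _ ≤ (J * δ) * N' / Real.log N' := by gcongr
        _ = J * (δ * N' / Real.log N') := by ring
        _ ≤ _ := by gcongr
    exact_mod_cast hfin
  obtain ⟨s, hs⟩ : ∃ s, s = 2 * t * N0 + 3 := ⟨_, rfl⟩
  have hnlt : ∀ n : ℕ, s ≤ n → n < Nat.count V (L * Nat.nth Nat.Prime n + 1) := by
    intro n hn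
    have h1 : n + 2 ≤ Nat.nth Nat.Prime n := Nat.add_two_le_nth_prime n
    refine lt_of_lt_of_le ?_ (hcount _ (by omega))
    have h0 : (PrI 0 (Nat.nth Nat.Prime n)).card = Nat.count Nat.Prime (Nat.nth Nat.Prime n + 1) := by
      rw [Nat.count_eq_card_filter_range]
      congr 1
      ext p
      rw [mem_PrI, Finset.mem_filter, Finset.mem_range]
      constructor
      · rintro ⟨⟨_, h⟩, h'⟩; exact ⟨by omega, h'⟩
      · rintro ⟨h, h'⟩; exact ⟨⟨h'.pos, by omega⟩, h'⟩
    rw [h0, Nat.count_succ, Nat.count_nth_of_infinite Nat.infinite_setOfPred_prime,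
      if_pos (Nat.nth_mem_of_infinite Nat.infinite_setOfPred_prime n)]
    omega
  have hVinf : (Set.ofPred V).Infinite := by
    intro hf
    obtain ⟨n, hn⟩ : ∃ n, n = hf.toFinset.card := ⟨_, rfl⟩
    have h1 := hnlt (s + n) (by omega)
    have h2 := Nat.count_le_card hf (L * Nat.nth Nat.Prime (s + n) + 1)
    have h3 : Nat.count V (L * Nat.nth Nat.Prime (s + n) + 1) ≤ n := by
      exact h2.trans hn.ge
    omega
  have hmem : ∀ i, V (Nat.nth V (s + i)) := fun i => Nat.nth_mem_of_infinite hVinf _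
  choose I m hm1 hm2 hm3 hm4 using hmem
  refine ⟨t, L, s, G0, fun i => gg (I i), m, ht, by omega, by omega, by omega, fun i => ?_⟩
  have hle : gg (I i) * m i ≤ L * Nat.nth Nat.Prime (s + i) := by
    rw [← hm4 i]
    have := Nat.nth_lt_of_lt_count (hnlt (s + i) (by omega))
    omega
  refine ⟨⟨ha1 _, ha2 _⟩, hggs _, hm1 i, hm2 i, hm3 i, hle, ?_, ?_⟩
  · have h1 : G0 * m i < gg (I i) * m i := Nat.mul_lt_mul_of_pos_right (ha1 _) (hm1 i)
    rw [hG0, mul_assoc] at h1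
    exact Nat.lt_of_mul_lt_mul_left (lt_of_lt_of_le h1 hle)
  · intro j hij
    rw [← hm4 i, ← hm4 j] at hij
    have := Nat.nth_injective hVinf hij
    omega


/-! ### The path -/

def conn (p : ℕ → ℕ) (a j : ℕ) : List (ℕ × ℕ) :=
  if j = 0 then [] else [(a * p j, 2 * j), (a, 2 * j), (a * p (j + 1), 2 * j + 1)]

/-- The path through the tree rooted at `a` with primes `p 1, …, p j` (without the final vertex). -/
def FF (p : ℕ → ℕ) (T N : ℕ) : ℕ → ℕ → List (ℕ × ℕ)
  | 0, a => [(a, 1)]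
  | j + 1, a => if T * (a * p (j + 1) ^ 2) ≤ N then
      FF p T N j a ++ (conn p a j ++ (FF p T N j (a * p (j + 1)) ++ [(a * p (j + 1), 0)]))
    else FF p T N j a

lemma mem_conn {p : ℕ → ℕ} {a j : ℕ} {x : ℕ × ℕ} : x ∈ conn p a j ↔ j ≠ 0 ∧
    (x = (a * p j, 2 * j) ∨ x = (a, 2 * j) ∨ x = (a * p (j + 1), 2 * j + 1)) := by
  unfold conn
  split_ifs with h <;> simp [h]

lemma mem_FF {p : ℕ → ℕ} {T N : ℕ} (hp : ∀ i, (p i).Prime) (hmono : StrictMono p) {j a : ℕ} {x : ℕ × ℕ}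
    (hx : x ∈ FF p T N j a) : ∃ b : ℕ, x.1 = a * b ∧ (∀ q : ℕ, q.Prime → q ∣ b → q ≤ p j) ∧
      x.2 < 2 * max j 1 ∧ (b = 1 → x.2 ≠ 0) := by
  induction j generalizing a x with
  | zero =>
    simp only [FF, List.mem_singleton] at hx
    subst hx
    exact ⟨1, by simp, fun q hq h => absurd (Nat.dvd_one.1 h) hq.one_lt.ne', by simp, by simp⟩
  | succ j ih =>
    have hlt : p j < p (j + 1) := hmono (Nat.lt_succ_self j)
    have hone : ∀ q : ℕ, q.Prime → q ∣ 1 → q ≤ p (j + 1) :=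
      fun q hq h => absurd (Nat.dvd_one.1 h) hq.one_lt.ne'
    have hpr : ∀ i ≤ j + 1, ∀ q : ℕ, q.Prime → q ∣ p i → q ≤ p (j + 1) := fun i hi q hq h => by
      rw [(Nat.prime_dvd_prime_iff_eq hq (hp i)).1 h]
      exact hmono.monotone hi
    have hne : ∀ i, p i = 1 → False := fun i h => (hp i).one_lt.ne' h
    have caseA : ∀ a x, x ∈ FF p T N j a → ∃ b : ℕ, x.1 = a * b ∧ (∀ q : ℕ, q.Prime → q ∣ b → q ≤ p (j + 1)) ∧
      x.2 < 2 * max (j + 1) 1 ∧ (b = 1 → x.2 ≠ 0) := by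
      intro a x hx
      obtain ⟨b, h1, h2, h3, h4⟩ := ih hx
      refine ⟨b, h1, fun q hq hqb => (h2 q hq hqb).trans hlt.le, ?_, h4⟩
      omega
    rw [FF] at hx
    split_ifs at hx with hc
    · simp only [List.mem_append, mem_conn, List.mem_singleton] at hx
      rcases hx with hx | ⟨hj, hx | hx | hx⟩ | hx | hx
      · exact caseA _ _ hx
      · subst hx; exact ⟨p j, rfl, hpr j (by omega), by simp, fun h => (hne _ h).elim⟩
      · subst hx; exact ⟨1, by simp, hone, by simp, fun _ => by simpa using hj⟩
      · subst hx; exact ⟨p (j + 1), rfl, hpr (j + 1) le_rfl, by simp; omega, fun h => (hne _ h).elim⟩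
      · obtain ⟨b, h1, h2, h3, h4⟩ := caseA _ _ hx
        refine ⟨p (j + 1) * b, by rw [h1, mul_assoc], ?_, h3, fun h => (hne _ (Nat.dvd_one.1 ⟨b, h.symm⟩)).elim⟩
        intro q hq hqd
        rcases hq.dvd_mul.1 hqd with h | h
        · exact hpr (j + 1) le_rfl q hq h
        · exact h2 q hq h
      · subst hx
        exact ⟨p (j + 1), rfl, hpr (j + 1) le_rfl, by simp, fun h => (hne _ h).elim⟩
    · exact caseA _ _ hx

lemma FF_gamma_nodup {p : ℕ → ℕ} {T N : ℕ} (hp : ∀ i, (p i).Prime) (hmono : StrictMono p) {j a : ℕ}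
    (ha : 0 < a) (h : (FF p T N j a).Nodup) : (FF p T N j a ++ [(a, 0)]).Nodup := by
  rw [List.nodup_append]
  refine ⟨h, by simp, ?_⟩
  intro x hx y hy hxy
  simp only [List.mem_singleton] at hy
  subst hy
  subst hxy
  obtain ⟨b, h1, -, -, h4⟩ := mem_FF hp hmono hx
  refine h4 ?_ rfl
  simp only at h1
  exact (Nat.eq_of_mul_eq_mul_left ha (by rw [mul_one]; exact h1)).symm

lemma FF_nodup {p : ℕ → ℕ} {T N : ℕ} (hp : ∀ i, (p i).Prime) (hmono : StrictMono p) (j : ℕ) {a : ℕ}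
    (ha : 0 < a) : (FF p T N j a).Nodup := by
  induction j generalizing a with
  | zero => simp [FF]
  | succ j ih =>
    rw [FF]
    split_ifs with hc
    swap
    · exact ih ha
    have hap : 0 < a * p (j + 1) := Nat.mul_pos ha (hp _).pos
    rw [List.nodup_append, List.nodup_append]
    refine ⟨ih ha, ⟨?_, FF_gamma_nodup hp hmono hap (ih hap), ?_⟩, ?_⟩
    · unfold conn
      split_ifs with h
      · simp
      · have := (hp j).one_lt
        have h1 : a * p j ≠ a := by
          intro h2
          have : p j = 1 := Nat.eq_of_mul_eq_mul_left ha (by rw [mul_one]; exact h2)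
          omega
        simp only [List.nodup_cons, List.mem_cons, Prod.mk.injEq, List.not_mem_nil, or_false]
        refine ⟨?_, ?_, ?_, List.nodup_nil⟩
        · rintro (⟨h2, -⟩ | ⟨-, h2⟩)
          · exact h1 h2
          · omega
        · rintro ⟨-, h2⟩; omega
        · exact not_false
    · intro x hx y hy hxy
      subst hxy
      rw [mem_conn] at hx
      obtain ⟨hj, hx⟩ := hx
      have h2 : 2 * j ≤ x.2 := by
        rcases hx with rfl | rfl | rfl <;> simp
      rw [List.mem_append, List.mem_singleton] at hy
      rcases hy with hy | hy
      · obtain ⟨b, -, -, h3, -⟩ := mem_FF hp hmono hy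
        omega
      · rw [hy] at h2; simp at h2; omega
    · intro x hx y hy hxy
      subst hxy
      obtain ⟨b, h1, h2, h3, h4⟩ := mem_FF hp hmono hx
      have hgam : a * p (j + 1) ∣ x.1 → False := by
        rintro ⟨d, hd⟩
        rw [hd, mul_assoc] at h1
        have h5 := Nat.eq_of_mul_eq_mul_left ha h1
        have := h2 (p (j + 1)) (hp _) ⟨d, h5.symm⟩
        have hlt : p j < p (j + 1) := hmono (Nat.lt_succ_self j)
        omega
      rw [List.mem_append, mem_conn, List.mem_append, List.mem_singleton] at hy
      rcases hy with ⟨hj, hy⟩ | hy | hy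
      · have h2 : 2 * j ≤ x.2 := by
          rcases hy with rfl | rfl | rfl <;> simp
        omega
      · obtain ⟨d, h5, -⟩ := mem_FF hp hmono hy
        exact hgam ⟨d, h5⟩
      · rw [hy] at hgam; exact hgam dvd_rfl

/-- value of a coded pair -/
def vl (cf : ℕ → ℕ) (x : ℕ × ℕ) : ℕ := x.1 * cf x.2

def Rl (cf : ℕ → ℕ) (x y : ℕ × ℕ) : Prop := vl cf x ∣ vl cf y ∨ vl cf y ∣ vl cf x

lemma FF_head {p : ℕ → ℕ} {T N : ℕ} (j a : ℕ) : (FF p T N j a).head? = some (a, 1) := by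
  induction j generalizing a with
  | zero => simp [FF]
  | succ j ih =>
    rw [FF]
    split_ifs
    · rw [List.head?_append, ih]; rfl
    · exact ih a

lemma FF_last {p : ℕ → ℕ} {T N : ℕ} (j a : ℕ) : (FF p T N j a).getLast? = some (a, 1) ∨
    ∃ b, (FF p T N j a).getLast? = some (a * b, 0) := by
  induction j generalizing a with
  | zero => simp [FF]
  | succ j ih =>
    rw [FF]
    split_ifs
    · right
      exact ⟨p (j + 1), by simp [← List.append_assoc]⟩
    · exact ih a

lemma FF_last' {p : ℕ → ℕ} {T N : ℕ} (j a : ℕ) (h : T * (a * p (j + 1) ^ 2) ≤ N) :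
    (FF p T N (j + 1) a).getLast? = some (a * p (j + 1), 0) := by
  rw [FF, if_pos h]
  simp [← List.append_assoc]

lemma FF_gamma_chain {p : ℕ → ℕ} {T N : ℕ} {cf : ℕ → ℕ} (h0 : cf 0 = 1) (j a : ℕ)
    (h : (FF p T N j a).IsChain (Rl cf)) : (FF p T N j a ++ [(a, 0)]).IsChain (Rl cf) := by
  rw [List.isChain_append]
  refine ⟨h, List.isChain_singleton _, ?_⟩
  intro x hx y hy
  simp only [List.head?_cons, Option.mem_def, Option.some.injEq] at hy
  subst hy
  right
  rw [Option.mem_def] at hx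
  rcases FF_last (p := p) (T := T) (N := N) j a with h1 | ⟨b, h1⟩
  · rw [h1, Option.some.injEq] at hx
    subst hx
    simp [vl, h0]
  · rw [h1, Option.some.injEq] at hx
    subst hx
    simp [vl, h0]

lemma FF_chain {p : ℕ → ℕ} {T N : ℕ} {cf : ℕ → ℕ} (hmono : StrictMono p)
    (h0 : cf 0 = 1) (h1 : cf 1 = 2) (h2 : ∀ j, cf (2 * j + 1) = 2 * cf (2 * j)) (j a : ℕ) :
    (FF p T N j a).IsChain (Rl cf) := by
  induction j generalizing a with
  | zero => simp [FF]
  | succ j ih =>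
    rw [FF]
    split_ifs with hc
    swap
    · exact ih a
    have hg := FF_gamma_chain h0 j (a * p (j + 1)) (ih (a * p (j + 1)))
    have hhead : (FF p T N j (a * p (j + 1)) ++ [(a * p (j + 1), 0)]).head? = some (a * p (j + 1), 1) := by
      rw [List.head?_append, FF_head]; rfl
    rcases Nat.eq_zero_or_pos j with hj | hj
    · subst hj
      rw [List.isChain_append]
      refine ⟨ih a, by simpa [conn] using hg, ?_⟩
      intro x hx y hy
      simp only [conn, if_true, List.nil_append] at hy
      rw [hhead] at hy
      simp only [FF, List.getLast?_singleton, Option.mem_def, Option.some.injEq] at hx hy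
      subst hx; subst hy
      left
      simp only [vl]
      exact Nat.mul_dvd_mul (dvd_mul_right _ _) dvd_rfl
    · obtain ⟨i, rfl⟩ : ∃ i, j = i + 1 := ⟨j - 1, by omega⟩
      have hlast := FF_last' (p := p) (T := T) (N := N) i a (by
        refine le_trans ?_ hc
        have : p (i + 1) ≤ p (i + 1 + 1) := hmono.monotone (by omega)
        gcongr)
      rw [List.isChain_append, List.isChain_append]
      refine ⟨ih a, ⟨?_, hg, ?_⟩, ?_⟩
      · rw [conn, if_neg (by omega)]
        simp only [List.isChain_cons_cons, List.isChain_singleton, and_true]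
        constructor
        · right
          simp only [vl]
          exact Nat.mul_dvd_mul (dvd_mul_right _ _) dvd_rfl
        · left
          simp only [vl, h2]
          exact Nat.mul_dvd_mul (dvd_mul_right _ _) (dvd_mul_left _ _)
      · intro x hx y hy
        rw [hhead] at hy
        simp only [conn, Nat.succ_ne_zero, if_false, Option.mem_def, Option.some.injEq] at hx hy
        simp at hx
        subst hx; subst hy
        right
        simp only [vl, h2, h1]
        exact Nat.mul_dvd_mul dvd_rfl (dvd_mul_right _ _)
      · intro x hx y hy
        rw [hlast] at hx
        simp only [conn, Nat.succ_ne_zero, if_false, Option.mem_def, Option.some.injEq, List.head?_append,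
          List.head?_cons, Option.some_or] at hx hy
        subst hx; subst hy
        left
        simp only [vl, h0]
        exact Nat.mul_dvd_mul dvd_rfl (one_dvd _)


lemma dense_part_unique_aux {t A A' m m' : ℕ} (ht : 1 ≤ t) (hA : 0 < A) (hA' : 0 < A') (hm : 0 < m) (hm' : 0 < m')
    (hd' : Dns t m')
    (h1 : ∀ q : ℕ, q.Prime → q ∣ A → t * m < q) (h2 : ∀ q : ℕ, q.Prime → q ∣ A' → t * m' < q)
    (h : A * m = A' * m') (hle : m ≤ m') : m = m' := by
  have hm1 : m ≤ t * m' := hle.trans (Nat.le_mul_of_pos_left _ ht)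
  have hm2 : m' ≤ t * m' := Nat.le_mul_of_pos_left _ ht
  have e1 : sm (A' * m') (t * m' + 1) = m' := by
    rw [sm_mul hA'.ne' hm'.ne', sm_eq_one (fun q hq hqa => h2 q hq hqa), one_mul]
    exact sm_eq_self hm'.ne' fun q hq hqd => by
      have := Nat.le_of_dvd hm' hqd; omega
  have e2 : sm (A * m) (t * m' + 1) = sm A (t * m' + 1) * m := by
    rw [sm_mul hA.ne' hm.ne']
    congr 1
    exact sm_eq_self hm.ne' fun q hq hqd => by
      have := Nat.le_of_dvd hm hqd; omega
  rw [h, e1] at e2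
  set r := sm A (t * m' + 1) with hr
  have hrpos : 0 < r := sm_pos _ _
  by_cases hr1 : r = 1
  · rw [hr1, one_mul] at e2; exact e2.symm
  exfalso
  have hq := Nat.minFac_prime hr1
  set q := r.minFac with hqdef
  have hqr : q ∣ r := Nat.minFac_dvd r
  have hqA : q ∣ A := hqr.trans (sm_dvd hA.ne' _)
  have h3 := hd' q hq (by rw [e2]; exact hqr.mul_right _)
  have h4 := h1 q hq hqA
  rw [e2, sm_mul hrpos.ne' hm.ne', sm_eq_one (fun s hs hsr => Nat.minFac_le_of_dvd hs.two_le hsr),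
    one_mul] at h3
  have h5 : t * sm m q ≤ t * m := Nat.mul_le_mul_left _ (sm_le hm.ne' q)
  omega

lemma dense_part_unique {t A A' m m' : ℕ} (ht : 1 ≤ t) (hA : 0 < A) (hA' : 0 < A') (hm : 0 < m) (hm' : 0 < m')
    (hd : Dns t m) (hd' : Dns t m')
    (h1 : ∀ q : ℕ, q.Prime → q ∣ A → t * m < q) (h2 : ∀ q : ℕ, q.Prime → q ∣ A' → t * m' < q)
    (h : A * m = A' * m') : m = m' := by
  rcases le_total m m' with hle | hle
  · exact dense_part_unique_aux ht hA hA' hm hm' hd' h1 h2 h hle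
  · exact (dense_part_unique_aux ht hA' hA hm' hm hd h2 h1 h.symm hle).symm

lemma valid_AA {t N A γ m : ℕ} (hA : 0 < A) (hγ : 0 < γ) (hm : 0 < m)
    (hγs : ∀ q : ℕ, q.Prime → q ∣ γ → q < 4) (hms : ∀ q : ℕ, q.Prime → q ∣ m → 3 < q) (hd : Dns t m)
    (hAs : ∀ q : ℕ, q.Prime → q ∣ A → 3 < q ∧ m < q)
    (hcore : ∀ q : ℕ, q.Prime → q ∣ A → q * A ≤ N * sm A q)
    (h1 : t * (A * m) ≤ N) (h2 : 3 * (A * (γ * m)) ≤ N) : A * (γ * m) ∈ AA N := by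
  have hγm : 0 < γ * m := Nat.mul_pos hγ hm
  have hn : 0 < A * (γ * m) := Nat.mul_pos hA hγm
  rw [mem_AA]
  refine ⟨⟨hn, by omega⟩, fun q hq hqd => ?_⟩
  rcases hq.dvd_mul.1 hqd with h | h
  · obtain ⟨h3, h4⟩ := hAs q hq h
    rw [sm_mul hA.ne' hγm.ne', sm_mul hγ.ne' hm.ne',
      sm_eq_self hγ.ne' (fun r hr hrd => by have := hγs r hr hrd; omega),
      sm_eq_self hm.ne' (fun r hr hrd => by have := Nat.le_of_dvd hm hrd; omega)]
    calc q * (A * (γ * m)) = (q * A) * (γ * m) := by ring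
      _ ≤ (N * sm A q) * (γ * m) := Nat.mul_le_mul_right _ (hcore q hq h)
      _ = _ := by ring
  · rcases hq.dvd_mul.1 h with h | h
    · have h3 := hγs q hq h
      calc q * (A * (γ * m)) ≤ 3 * (A * (γ * m)) := Nat.mul_le_mul_right _ (by omega)
        _ ≤ N := h2
        _ ≤ _ := Nat.le_mul_of_pos_right _ (sm_pos _ _)
    · have h3 := hms q hq h
      rw [sm_mul hA.ne' hγm.ne', sm_mul hγ.ne' hm.ne',
        sm_eq_self hγ.ne' (fun r hr hrd => by have := hγs r hr hrd; omega)]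
      calc q * (A * (γ * m)) ≤ (t * sm m q) * (A * (γ * m)) := Nat.mul_le_mul_right _ (hd q hq h)
        _ = (t * (A * m)) * (γ * sm m q) := by ring
        _ ≤ N * (γ * sm m q) := Nat.mul_le_mul_right _ h1
        _ ≤ (N * sm A q) * (γ * sm m q) := Nat.mul_le_mul_right _ (Nat.le_mul_of_pos_right _ (sm_pos _ _))
        _ = _ := by ring

/-- Data for the connectors. -/
structure CD where
  (t L G0 T : ℕ)
  (p g m : ℕ → ℕ)
  ht : 1 ≤ t
  hL : 1 ≤ L
  hG : 2 ≤ G0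
  hT : T = 6 * L
  hp : ∀ i, (p i).Prime
  hmono : StrictMono p
  hp3 : ∀ i, 3 < p i
  hg1 : ∀ i, G0 < g i
  hg2 : ∀ i, g i ≤ 2 * G0
  hgs : ∀ i, ∀ q : ℕ, q.Prime → q ∣ g i → q < 4
  hm : ∀ i, 1 ≤ m i
  hms : ∀ i, ∀ q : ℕ, q.Prime → q ∣ m i → 3 < q
  hd : ∀ i, Dns t (m i)
  hgm : ∀ i, g i * m i ≤ L * p i
  htm : ∀ i, t * m i < p i
  hinj : ∀ i j, g i * m i = g j * m j → i = j
  hall : ∀ q : ℕ, q.Prime → p 0 < q → ∃ i, 1 ≤ i ∧ q = p i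

namespace CD

variable (D : CD)

def gam (k : ℕ) : ℕ := (k % 2 + 1) * (if k / 2 = 0 then 1 else D.g (k / 2))
def mm (k : ℕ) : ℕ := if k / 2 = 0 then 1 else D.m (k / 2)
def cf (k : ℕ) : ℕ := D.gam k * D.mm k

lemma cf_zero : D.cf 0 = 1 := by simp [cf, gam, mm]
lemma cf_one : D.cf 1 = 2 := by simp [cf, gam, mm]
lemma cf_odd (j : ℕ) : D.cf (2 * j + 1) = 2 * D.cf (2 * j) := by
  have h1 : (2 * j + 1) / 2 = j := by omega
  have h2 : (2 * j) / 2 = j := by omega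
  have h3 : (2 * j + 1) % 2 = 1 := by omega
  have h4 : (2 * j) % 2 = 0 := by omega
  simp only [cf, gam, mm, h1, h2, h3, h4]
  ring

lemma mm_pos (k : ℕ) : 0 < D.mm k := by
  unfold mm; split_ifs
  · norm_num
  · exact D.hm _

lemma gam_pos (k : ℕ) : 0 < D.gam k := by
  unfold gam
  have : 0 < D.g (k / 2) := lt_of_le_of_lt (Nat.zero_le _) (D.hg1 _)
  split_ifs <;> positivity

lemma gam_s (k q : ℕ) (hq : q.Prime) (h : q ∣ D.gam k) : q < 4 := by
  unfold gam at h
  rcases hq.dvd_mul.1 h with h | h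
  · have := Nat.le_of_dvd (by omega) h; omega
  · split_ifs at h
    · exact absurd (Nat.dvd_one.1 h) hq.one_lt.ne'
    · exact D.hgs _ q hq h

lemma mm_s (k q : ℕ) (hq : q.Prime) (h : q ∣ D.mm k) : 3 < q := by
  unfold mm at h
  split_ifs at h
  · exact absurd (Nat.dvd_one.1 h) hq.one_lt.ne'
  · exact D.hms _ q hq h

lemma mm_d (k : ℕ) : Dns D.t (D.mm k) := by
  unfold mm
  split_ifs
  · exact fun q hq h => absurd (Nat.dvd_one.1 h) hq.one_lt.ne'
  · exact D.hd _

/-- admissible pairs -/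
def Ok (x : ℕ × ℕ) : Prop := 0 < x.1 ∧ (∀ q : ℕ, q.Prime → q ∣ x.1 → 3 < q) ∧
  (x.2 / 2 ≠ 0 → ∀ q : ℕ, q.Prime → q ∣ x.1 → D.p (x.2 / 2) ≤ q)

lemma vl_inj {x y : ℕ × ℕ} (hx : D.Ok x) (hy : D.Ok y) (h : vl D.cf x = vl D.cf y) : x = y := by
  obtain ⟨A, k⟩ := x
  obtain ⟨A', k'⟩ := y
  obtain ⟨hA, hA3, hAk⟩ := hx
  obtain ⟨hA', hA3', hAk'⟩ := hy
  simp only [vl, cf] at hA hA3 hAk hA' hA3' hAk' h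
  have key : ∀ A k : ℕ, 0 < A → (∀ q : ℕ, q.Prime → q ∣ A → 3 < q) →
      sm (A * (D.gam k * D.mm k)) 4 = D.gam k := by
    intro A k hA hA3
    rw [show A * (D.gam k * D.mm k) = D.gam k * (A * D.mm k) by ring]
    have := D.mm_pos k
    refine sm4_mul (D.gam_pos k).ne' (by positivity) (D.gam_s k) fun q hq hqd => ?_
    rcases hq.dvd_mul.1 hqd with h | h
    · exact hA3 q hq h
    · exact D.mm_s k q hq h
  have e1 := key A k hA hA3
  have e2 := key A' k' hA' hA3'
  rw [h, e2] at e1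
  have h' : A * D.mm k = A' * D.mm k' := by
    refine Nat.eq_of_mul_eq_mul_left (D.gam_pos k) ?_
    calc D.gam k * (A * D.mm k) = A * (D.gam k * D.mm k) := by ring
      _ = A' * (D.gam k' * D.mm k') := h
      _ = D.gam k * (A' * D.mm k') := by rw [e1]; ring
  have hG := D.hG
  have g1 := D.hg1 (k / 2)
  have g2 := D.hg2 (k / 2)
  have g1' := D.hg1 (k' / 2)
  have g2' := D.hg2 (k' / 2)
  have hk2 : k % 2 = 0 ∨ k % 2 = 1 := by omega
  have hk2' : k' % 2 = 0 ∨ k' % 2 = 1 := by omega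
  by_cases hk : k / 2 = 0
  · by_cases hk' : k' / 2 = 0
    · simp only [mm, hk, hk', if_true, mul_one] at h'
      simp only [gam, hk, hk', if_true, mul_one] at e1
      rw [h', show k = k' by omega]
    · exfalso
      simp only [gam, hk, hk', if_true, if_false] at e1
      rcases hk2 with a | a <;> rcases hk2' with b | b <;> rw [a, b] at e1 <;> omega
  · by_cases hk' : k' / 2 = 0
    · exfalso
      simp only [gam, hk, hk', if_true, if_false] at e1
      rcases hk2 with a | a <;> rcases hk2' with b | b <;> rw [a, b] at e1 <;> omega
    · have hpar : k % 2 = k' % 2 ∧ D.g (k / 2) = D.g (k' / 2) := by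
        simp only [gam, hk, hk', if_false] at e1
        rcases hk2 with a | a <;> rcases hk2' with b | b <;> rw [a, b] at e1 ⊢ <;> omega
      simp only [mm, hk, hk', if_false] at h'
      have hmeq := dense_part_unique D.ht hA hA' (D.hm _) (D.hm _) (D.hd _) (D.hd _)
        (fun q hq hqd => lt_of_lt_of_le (D.htm _) (hAk hk q hq hqd))
        (fun q hq hqd => lt_of_lt_of_le (D.htm _) (hAk' hk' q hq hqd)) h'
      have hii := D.hinj (k / 2) (k' / 2) (by rw [hpar.2, hmeq])
      rw [hmeq] at h'
      have hAA := Nat.eq_of_mul_eq_mul_right (D.hm _) h'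
      rw [hAA, show k = k' by omega]

lemma vl_valid {N : ℕ} {A k : ℕ} (hok : D.Ok (A, k))
    (hcore : ∀ q : ℕ, q.Prime → q ∣ A → q * A ≤ N * sm A q) (hTA : D.T * A ≤ N)
    (hk : k / 2 ≠ 0 → D.T * (A * D.p (k / 2)) ≤ N) : vl D.cf (A, k) ∈ AA N := by
  obtain ⟨hA, hA3, hAk⟩ := hok
  simp only at hA hA3 hAk
  have hL := D.hL
  have hk2 : k % 2 + 1 ≤ 2 := by omega
  rw [D.hT] at hTA hk
  show A * (D.gam k * D.mm k) ∈ AA N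
  by_cases hk0 : k / 2 = 0
  · have hmm : D.mm k = 1 := by simp [mm, hk0]
    have hgm : D.gam k ≤ 2 := by simp only [gam, hk0, if_true]; omega
    refine valid_AA (t := 1) hA (D.gam_pos k) (D.mm_pos k) (D.gam_s k) (D.mm_s k) ?_ ?_ hcore ?_ ?_
    · rw [hmm]; exact fun q hq h => absurd (Nat.dvd_one.1 h) hq.one_lt.ne'
    · rw [hmm]; exact fun q hq h => ⟨hA3 q hq h, hq.one_lt⟩
    · rw [hmm]; nlinarith
    · rw [hmm]; nlinarith
  · have hmm : D.mm k = D.m (k / 2) := by simp [mm, hk0]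
    have hgm : D.gam k * D.mm k ≤ 2 * (D.L * D.p (k / 2)) := by
      simp only [gam, mm, hk0, if_false]
      calc (k % 2 + 1) * D.g (k / 2) * D.m (k / 2) = (k % 2 + 1) * (D.g (k / 2) * D.m (k / 2)) := by ring
        _ ≤ 2 * (D.L * D.p (k / 2)) := Nat.mul_le_mul hk2 (D.hgm _)
    have hk := hk hk0
    have htm := D.htm (k / 2)
    have hmt : D.m (k / 2) ≤ D.t * D.m (k / 2) := Nat.le_mul_of_pos_left _ D.ht
    refine valid_AA (t := D.t) hA (D.gam_pos k) (D.mm_pos k) (D.gam_s k) (D.mm_s k) (D.mm_d k) ?_ hcore ?_ ?_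
    · intro q hq h
      refine ⟨hA3 q hq h, ?_⟩
      have := hAk hk0 q hq h
      rw [hmm]; omega
    · rw [hmm]
      calc D.t * (A * D.m (k / 2)) = A * (D.t * D.m (k / 2)) := by ring
        _ ≤ A * D.p (k / 2) := Nat.mul_le_mul_left _ htm.le
        _ ≤ 6 * D.L * (A * D.p (k / 2)) := Nat.le_mul_of_pos_left _ (by omega)
        _ ≤ N := hk
    · calc 3 * (A * (D.gam k * D.mm k)) ≤ 3 * (A * (2 * (D.L * D.p (k / 2)))) := by gcongr
        _ = 6 * D.L * (A * D.p (k / 2)) := by ring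
        _ ≤ N := hk

end CD


def Core (T N a : ℕ) : Prop := ∀ q : ℕ, q.Prime → q ∣ a → T * (q * a) ≤ N * sm a q

lemma core_mul {T N a P : ℕ} (hP : P.Prime) (ha : 0 < a) (hap : ∀ q : ℕ, q.Prime → q ∣ a → P < q)
    (hc : T * (a * P ^ 2) ≤ N) (h : Core T N a) : Core T N (a * P) := by
  intro q hq hqd
  rw [sm_mul ha.ne' hP.ne_zero]
  rcases hq.dvd_mul.1 hqd with h1 | h1
  · rw [sm_prime hP, if_pos (hap q hq h1)]
    calc T * (q * (a * P)) = (T * (q * a)) * P := by ring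
      _ ≤ (N * sm a q) * P := Nat.mul_le_mul_right _ (h q hq h1)
      _ = _ := by ring
  · have := (Nat.prime_dvd_prime_iff_eq hq hP).1 h1
    subst this
    calc T * (q * (a * q)) = T * (a * q ^ 2) := by ring
      _ ≤ N := hc
      _ ≤ _ := Nat.le_mul_of_pos_right _ (Nat.mul_pos (sm_pos _ _) (sm_pos _ _))

namespace CD

variable (D : CD)

lemma T_pos : 1 ≤ D.T := by have := D.hT; have := D.hL; omega

lemma core_one {N A : ℕ} (h : Core D.T N A) : ∀ q : ℕ, q.Prime → q ∣ A → q * A ≤ N * sm A q :=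
  fun q hq hqd => (Nat.le_mul_of_pos_left _ D.T_pos).trans (h q hq hqd)

lemma FF_ok {N : ℕ} (j : ℕ) {a : ℕ} (ha : 0 < a) (hcore : Core D.T N a) (hTa : D.T * a ≤ N)
    (hap : ∀ q : ℕ, q.Prime → q ∣ a → D.p j < q) :
    ∀ x ∈ FF D.p D.T N j a, D.Ok x ∧ vl D.cf x ∈ AA N := by
  have hlow : ∀ i q : ℕ, D.p i ≤ q → 3 < q := fun i q h => lt_of_lt_of_le (D.hp3 i) h
  induction j generalizing a with
  | zero =>
    intro x hx
    simp only [FF, List.mem_singleton] at hx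
    subst hx
    have hok : D.Ok (a, 1) := ⟨ha, fun q hq hqd => hlow 0 q (hap q hq hqd).le, by simp⟩
    exact ⟨hok, D.vl_valid hok (D.core_one hcore) hTa (by simp)⟩
  | succ j ih =>
    have hlt : D.p j < D.p (j + 1) := D.hmono (Nat.lt_succ_self j)
    have ihA := ih ha hcore hTa (fun q hq hqd => hlt.trans (hap q hq hqd))
    intro x hx
    rw [FF] at hx
    split_ifs at hx with hc
    swap
    · exact ihA x hx
    have hP := D.hp (j + 1)
    have hPj := D.hp j
    have ha1 : 0 < a * D.p (j + 1) := Nat.mul_pos ha hP.pos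
    have hcore1 := core_mul hP ha hap hc hcore
    have hpr1 : ∀ q : ℕ, q.Prime → q ∣ a * D.p (j + 1) → D.p j < q := by
      intro q hq hqd
      rcases hq.dvd_mul.1 hqd with h | h
      · exact hlt.trans (hap q hq h)
      · rw [(Nat.prime_dvd_prime_iff_eq hq hP).1 h]; exact hlt
    have hTa1 : D.T * (a * D.p (j + 1)) ≤ N := by
      refine le_trans ?_ hc
      gcongr
      exact Nat.le_self_pow (by norm_num) _
    simp only [List.mem_append, mem_conn, List.mem_singleton] at hx
    have d1 : (2 * j) / 2 = j := by omega
    have d2 : (2 * j + 1) / 2 = j := by omega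
    have hprod : D.T * (a * D.p (j + 1) * D.p j) ≤ N := by
      refine le_trans ?_ hc
      rw [pow_two, mul_assoc]
      gcongr
    rcases hx with hx | ⟨hj, hx | hx | hx⟩ | hx | hx
    · exact ihA x hx
    · subst hx
      have hcj : D.T * (a * D.p j ^ 2) ≤ N := by
        refine le_trans ?_ hc
        gcongr
      have hprj : ∀ q : ℕ, q.Prime → q ∣ a * D.p j → D.p j ≤ q := by
        intro q hq hqd
        rcases hq.dvd_mul.1 hqd with h | h
        · exact (hlt.trans (hap q hq h)).le
        · rw [(Nat.prime_dvd_prime_iff_eq hq hPj).1 h]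
      have hok : D.Ok (a * D.p j, 2 * j) := ⟨Nat.mul_pos ha hPj.pos,
        fun q hq hqd => hlow j q (hprj q hq hqd), fun _ => by simpa only [d1] using hprj⟩
      refine ⟨hok, D.vl_valid hok (D.core_one (core_mul hPj ha
        (fun q hq hqd => hlt.trans (hap q hq hqd)) hcj hcore)) ?_ ?_⟩
      · refine le_trans ?_ hcj
        gcongr
        exact Nat.le_self_pow (by norm_num) _
      · intro _
        rw [d1, mul_assoc, ← pow_two]; exact hcj
    · subst hx
      have hpra : ∀ q : ℕ, q.Prime → q ∣ a → D.p j ≤ q := fun q hq hqd => (hlt.trans (hap q hq hqd)).le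
      have hok : D.Ok (a, 2 * j) := ⟨ha,
        fun q hq hqd => hlow j q (hpra q hq hqd), fun _ => by simpa only [d1] using hpra⟩
      refine ⟨hok, D.vl_valid hok (D.core_one hcore) hTa ?_⟩
      intro _
      rw [d1]
      refine le_trans ?_ hTa1
      gcongr
    · subst hx
      have hok : D.Ok (a * D.p (j + 1), 2 * j + 1) := ⟨ha1,
        fun q hq hqd => hlow j q (hpr1 q hq hqd).le, fun _ => by
          simpa only [d2] using fun q hq hqd => (hpr1 q hq hqd).le⟩
      refine ⟨hok, D.vl_valid hok (D.core_one hcore1) hTa1 ?_⟩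
      intro _
      rw [d2]; exact hprod
    · exact ih ha1 hcore1 hTa1 hpr1 x hx
    · subst hx
      have hok : D.Ok (a * D.p (j + 1), 0) := ⟨ha1,
        fun q hq hqd => hlow j q (hpr1 q hq hqd).le, by simp⟩
      exact ⟨hok, D.vl_valid hok (D.core_one hcore1) hTa1 (by simp)⟩

lemma FF_core {N : ℕ} (j : ℕ) {a b : ℕ} (ha : 0 < a) (hb : Squarefree b)
    (hap : ∀ q : ℕ, q.Prime → q ∣ a → D.p j < q)
    (hbp : ∀ q : ℕ, q.Prime → q ∣ b → ∃ i, 1 ≤ i ∧ i ≤ j ∧ q = D.p i)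
    (hcore : Core D.T N (a * b)) : (a * b, 0) ∈ FF D.p D.T N j a ++ [(a, 0)] := by
  induction j generalizing a b with
  | zero =>
    have hb1 : b = 1 := by
      by_contra h
      obtain ⟨i, h1, h2, -⟩ := hbp _ (Nat.minFac_prime h) (Nat.minFac_dvd b)
      omega
    simp [hb1]
  | succ j ih =>
    have hlt : D.p j < D.p (j + 1) := D.hmono (Nat.lt_succ_self j)
    have hP := D.hp (j + 1)
    by_cases hd : D.p (j + 1) ∣ b
    · obtain ⟨b', rfl⟩ := hd
      have hb'0 : b' ≠ 0 := by
        rintro rfl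
        simp at hb
      have hcop : Nat.Coprime (D.p (j + 1)) b' := Nat.coprime_of_squarefree_mul hb
      have hb'p : ∀ q : ℕ, q.Prime → q ∣ b' → ∃ i, 1 ≤ i ∧ i ≤ j ∧ q = D.p i := by
        intro q hq hqd
        obtain ⟨i, h1, h2, h3⟩ := hbp q hq (hqd.mul_left _)
        refine ⟨i, h1, ?_, h3⟩
        rcases Nat.lt_or_ge j i with h | h
        · exfalso
          have : i = j + 1 := by omega
          subst this
          rw [h3] at hqd
          exact (hP.coprime_iff_not_dvd.1 hcop) hqd
        · exact h
      have hc : D.T * (a * D.p (j + 1) ^ 2) ≤ N := by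
        have h1 := hcore (D.p (j + 1)) hP ((dvd_mul_right _ _).mul_left _)
        have h2 : sm (a * (D.p (j + 1) * b')) (D.p (j + 1)) = b' := by
          rw [sm_mul ha.ne' (Nat.mul_ne_zero hP.ne_zero hb'0), sm_mul hP.ne_zero hb'0,
            sm_eq_one (fun q hq hqd => (hap q hq hqd).le), sm_prime hP, if_neg (lt_irrefl _),
            sm_eq_self hb'0 ?_]
          · ring
          · intro q hq hqd
            obtain ⟨i, h1, h2, h3⟩ := hb'p q hq hqd
            rw [h3]; exact D.hmono (by omega)
        rw [h2] at h1
        refine le_of_mul_le_mul_right (a := b') ?_ (Nat.pos_of_ne_zero hb'0)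
        calc D.T * (a * D.p (j + 1) ^ 2) * b' = D.T * (D.p (j + 1) * (a * (D.p (j + 1) * b'))) := by ring
          _ ≤ _ := h1
      rw [FF, if_pos hc]
      have := ih (a := a * D.p (j + 1)) (b := b') (Nat.mul_pos ha hP.pos)
        (hb.squarefree_of_dvd (dvd_mul_left _ _)) ?_ hb'p (by rw [mul_assoc]; exact hcore)
      · rw [← mul_assoc]
        simp only [List.mem_append] at this ⊢
        tauto
      · intro q hq hqd
        rcases hq.dvd_mul.1 hqd with h | h
        · exact hlt.trans (hap q hq h)
        · rw [(Nat.prime_dvd_prime_iff_eq hq hP).1 h]; exact hlt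
    · have := ih (a := a) (b := b) ha hb (fun q hq hqd => hlt.trans (hap q hq hqd)) ?_ hcore
      · rw [FF]
        split_ifs
        · simp only [List.mem_append] at this ⊢
          tauto
        · exact this
      · intro q hq hqd
        obtain ⟨i, h1, h2, h3⟩ := hbp q hq hqd
        refine ⟨i, h1, ?_, h3⟩
        rcases Nat.lt_or_ge j i with h | h
        · exfalso
          have : i = j + 1 := by omega
          subst this
          rw [h3] at hqd
          exact hd hqd
        · exact h

lemma chain_exists {N : ℕ} (hN : D.T ≤ N) {S : Finset ℕ}
    (hS : ∀ b ∈ S, Squarefree b ∧ b ≤ N ∧ (∀ q : ℕ, q.Prime → q ∣ b → D.p 0 < q) ∧ Core D.T N b) :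
    ∃ l : List ℕ, l.Nodup ∧ (∀ n ∈ l, n ∈ AA N) ∧ l.IsChain (fun a b => a ∣ b ∨ b ∣ a) ∧
      S.card ≤ l.length := by
  classical
  set l0 := FF D.p D.T N N 1 ++ [(1, 0)] with hl0
  have hone : ∀ (P : ℕ → Prop), ∀ q : ℕ, q.Prime → q ∣ 1 → P q :=
    fun P q hq h => absurd (Nat.dvd_one.1 h) hq.one_lt.ne'
  have hc1 : Core D.T N 1 := hone _
  have hok : ∀ x ∈ l0, D.Ok x ∧ vl D.cf x ∈ AA N := by
    intro x hx
    rw [hl0, List.mem_append, List.mem_singleton] at hx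
    rcases hx with hx | hx
    · exact D.FF_ok N one_pos hc1 (by simpa using hN) (hone _) x hx
    · subst hx
      have h1 : D.Ok (1, 0) := ⟨one_pos, hone _, by simp⟩
      exact ⟨h1, D.vl_valid h1 (D.core_one hc1) (by simpa using hN) (by simp)⟩
  have hnd : l0.Nodup := FF_gamma_nodup D.hp D.hmono one_pos (FF_nodup D.hp D.hmono N one_pos)
  refine ⟨l0.map (vl D.cf), ?_, ?_, ?_, ?_⟩
  · exact List.Nodup.map_on (fun x hx y hy h => D.vl_inj (hok x hx).1 (hok y hy).1 h) hnd
  · intro n hn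
    obtain ⟨x, hx, rfl⟩ := List.mem_map.1 hn
    exact (hok x hx).2
  · rw [List.isChain_map]
    exact FF_gamma_chain D.cf_zero N 1 (FF_chain D.hmono D.cf_zero D.cf_one D.cf_odd N 1)
  · rw [List.length_map, ← List.toFinset_card_of_nodup hnd]
    refine Finset.card_le_card_of_injOn (fun b => (b, 0)) ?_ ?_
    · intro b hb
      obtain ⟨h1, h2, h3, h4⟩ := hS b hb
      rw [Finset.mem_coe, List.mem_toFinset]
      have := D.FF_core (N := N) N (a := 1) (b := b) one_pos h1 (hone _) ?_ (by rw [one_mul]; exact h4)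
      · rw [one_mul] at this; exact this
      · intro q hq hqd
        obtain ⟨i, hi1, hi2⟩ := D.hall q hq (h3 q hq hqd)
        refine ⟨i, hi1, ?_, hi2⟩
        have h5 : i ≤ D.p i := D.hmono.le_apply
        have h6 := Nat.le_of_dvd (Nat.pos_of_ne_zero h1.ne_zero) hqd
        omega
    · intro b _ b' _ h
      exact (Prod.mk.inj h).1

end CD

lemma exists_CD : Nonempty CD := by
  obtain ⟨t, L, s, G0, g, m, ht, hL, hG, hs, h⟩ := connectors
  have hinf := Nat.infinite_setOfPred_prime
  refine ⟨⟨t, L, G0, 6 * L, fun i => Nat.nth Nat.Prime (s + i), g, m, ht, hL, hG, rfl,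
    fun i => Nat.nth_mem_of_infinite hinf _, fun i j hij => Nat.nth_strictMono hinf (by omega), ?_,
    fun i => (h i).1.1, fun i => (h i).1.2, fun i => (h i).2.1, fun i => (h i).2.2.1,
    fun i => (h i).2.2.2.1, fun i => (h i).2.2.2.2.1, fun i => (h i).2.2.2.2.2.1,
    fun i => (h i).2.2.2.2.2.2.1, fun i => (h i).2.2.2.2.2.2.2, ?_⟩⟩
  · intro i
    have := Nat.add_two_le_nth_prime (s + i)
    show 3 < Nat.nth Nat.Prime (s + i)
    omega
  · intro q hq hlt
    have h1 : Nat.nth Nat.Prime (Nat.count Nat.Prime q) = q := Nat.nth_count hq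
    have h2 : s + 0 < Nat.count Nat.Prime q := by
      rw [← h1] at hlt
      exact (Nat.nth_strictMono hinf).lt_iff_lt.1 hlt
    refine ⟨Nat.count Nat.Prime q - s, by omega, ?_⟩
    show q = Nat.nth Nat.Prime (s + (Nat.count Nat.Prime q - s))
    rw [show s + (Nat.count Nat.Prime q - s) = Nat.count Nat.Prime q by omega, h1]

lemma chain_lower : ∃ N1 : ℕ, ∃ c : ℝ, 2 ≤ N1 ∧ 0 < c ∧ ∀ N : ℕ, N1 ≤ N →
    ∃ l : List ℕ, l.Nodup ∧ (∀ n ∈ l, n ∈ AA N) ∧ l.IsChain (fun a b => a ∣ b ∨ b ∣ a) ∧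
      c * N / Real.log N ≤ (l.length : ℝ) := by
  obtain ⟨D⟩ := exists_CD
  obtain ⟨t, N0, δ, ht, hN0, hδ, hLL⟩ := dense_count (D.p 0)
  have hT := D.T_pos
  obtain ⟨Q, hQ⟩ : ∃ Q, Q = D.T * t := ⟨_, rfl⟩
  have hQ1 : 1 ≤ Q := by rw [hQ]; exact Nat.mul_pos hT ht
  have hTQ : D.T ≤ Q := by rw [hQ]; exact Nat.le_mul_of_pos_right _ ht
  have hN1 : Q ≤ Q * N0 ∧ N0 ≤ Q * N0 :=
    ⟨Nat.le_mul_of_pos_right _ (by omega), Nat.le_mul_of_pos_left _ hQ1⟩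
  refine ⟨Q * N0, δ / (2 * Q), by omega, by positivity, fun N hN => ?_⟩
  have hNN : N0 ≤ N / Q := by rw [Nat.le_div_iff_mul_le hQ1, mul_comm]; exact hN
  obtain ⟨l, h1, h2, h3, h4⟩ := D.chain_exists (N := N) (S := LL (D.p 0) t (N / Q)) (by omega) (by
    intro b hb
    rw [mem_LL] at hb
    obtain ⟨⟨hb1, hb2⟩, hb3, hb4, hb5⟩ := hb
    refine ⟨hb3, hb2.trans (Nat.div_le_self _ _), hb4, fun q hq hqd => ?_⟩
    have h6 : b * Q ≤ N := (Nat.le_div_iff_mul_le hQ1).1 hb2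
    calc D.T * (q * b) ≤ D.T * ((t * sm b q) * b) := by
          gcongr; exact hb5 q hq hqd
      _ = (b * Q) * sm b q := by rw [hQ]; ring
      _ ≤ N * sm b q := Nat.mul_le_mul_right _ h6)
  refine ⟨l, h1, h2, h3, le_trans ?_ (show ((LL (D.p 0) t (N / Q)).card : ℝ) ≤ l.length by exact_mod_cast h4)⟩
  refine le_trans ?_ (hLL (N / Q) hNN)
  set N' := N / Q with hN'
  have hNbig : N ≤ 2 * Q * N' := by
    have : N < (N' + 1) * Q := by
      rw [hN']; exact Nat.lt_mul_of_div_lt (Nat.lt_succ_self _) hQ1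
    have h3 : 1 ≤ N' := by omega
    nlinarith
  have hNle : N' ≤ N := Nat.div_le_self _ _
  have hl' : 0 < Real.log (N' : ℝ) := Real.log_pos (by exact_mod_cast (by omega : 1 < N'))
  have hll : Real.log (N' : ℝ) ≤ Real.log N :=
    Real.log_le_log (by exact_mod_cast (by omega : 0 < N')) (by exact_mod_cast hNle)
  have hNbig' : (N : ℝ) ≤ 2 * Q * N' := by exact_mod_cast hNbig
  have hQ' : (0 : ℝ) < Q := by exact_mod_cast hQ1
  calc δ / (2 * Q) * N / Real.log N ≤ δ / (2 * Q) * (2 * Q * N') / Real.log N' := by gcongr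
    _ = δ * N' / Real.log N' := by field_simp


/-! ### Final assembly -/

lemma foldr_max_le (l : List ℕ) (N : ℕ) : l.foldr max 1 ≤ N ↔ 1 ≤ N ∧ ∀ a ∈ l, a ≤ N := by
  induction l with
  | nil => simp
  | cons b l ih =>
    rw [List.foldr_cons, max_le_iff, ih]
    simp only [List.mem_cons, forall_eq_or_imp]
    tauto

lemma SS_le_iff (n N : ℕ) : SS n ≤ N ↔ 1 ≤ N ∧ ∀ A B : List ℕ, ∀ p : ℕ,
    n.primeFactorsList = A ++ p :: B → p * (p * B.prod) ≤ N := by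
  unfold SS
  rw [foldr_max_le]
  refine and_congr_right fun _ => ⟨fun h A B p hl => ?_, fun h a ha => ?_⟩
  · have := h (((n.primeFactorsList.drop A.length)).headI *
      (n.primeFactorsList.drop A.length).prod) (List.mem_map.2 ⟨A.length, ?_, rfl⟩)
    · rw [hl, List.drop_left] at this
      simpa using this
    · rw [hl]; simp
  · obtain ⟨j, hj, rfl⟩ := List.mem_map.1 ha
    rw [List.mem_range] at hj
    have h1 := List.drop_eq_getElem_cons hj
    have h2 := h (n.primeFactorsList.take j) (n.primeFactorsList.drop (j + 1))
      (n.primeFactorsList[j]) (by rw [← h1, List.take_append_drop])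
    rw [h1, List.headI_cons, List.prod_cons]
    exact h2

lemma SS_le_iff_mem {n N : ℕ} (hn : 1 ≤ n) : SS n ≤ N ↔ n ∈ AA N := by
  have hn0 : n ≠ 0 := by omega
  have hsort := Nat.primeFactorsList_sorted n
  rw [SS_le_iff, mem_AA]
  constructor
  · rintro ⟨hN, h⟩
    refine ⟨⟨hn, ?_⟩, ?_⟩
    · rcases hl : n.primeFactorsList with _ | ⟨p, B⟩
      · have := Nat.prod_primeFactorsList hn0
        rw [hl] at this
        simp at this
        omega
      · have h1 := h [] B p (by simpa using hl)
        have h2 := Nat.prod_primeFactorsList hn0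
        rw [hl, List.prod_cons] at h2
        rw [h2] at h1
        have h3 : 0 < p := Nat.pos_of_mem_primeFactorsList (n := n) (by rw [hl]; simp)
        nlinarith
    · intro p hp hpn
      have hmem : p ∈ n.primeFactorsList := (Nat.mem_primeFactorsList hn0).2 ⟨hp, hpn⟩
      obtain ⟨A, B, hl, hA⟩ := List.eq_append_cons_of_mem hmem
      have h1 := h A B p hl
      have h2 := Nat.prod_primeFactorsList hn0
      have hs : sm n p = A.prod := by
        unfold sm
        have hsort' := hsort.pairwise
        rw [hl, List.pairwise_append] at hsort'
        obtain ⟨-, hs2, hs3⟩ := hsort'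
        rw [hl, List.filter_append, List.filter_eq_self.2, List.filter_eq_nil_iff.2, List.append_nil]
        · intro q hq
          rcases List.mem_cons.1 hq with rfl | hq
          · simp
          · simpa using (List.pairwise_cons.1 hs2).1 q hq
        · intro q hq
          have h4 := hs3 q hq p (by simp)
          have h5 : q ≠ p := fun h => hA (h ▸ hq)
          simpa using lt_of_le_of_ne h4 h5
      rw [hs]
      rw [hl, List.prod_append, List.prod_cons] at h2
      calc p * n = (p * (p * B.prod)) * A.prod := by rw [← h2]; ring
        _ ≤ N * A.prod := Nat.mul_le_mul_right _ h1
  · rintro ⟨⟨-, hnN⟩, h⟩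
    refine ⟨hn.trans hnN, ?_⟩
    intro A B p hl
    have hmem : p ∈ n.primeFactorsList := by rw [hl]; simp
    have h1 := h p (Nat.prime_of_mem_primeFactorsList hmem) (Nat.dvd_of_mem_primeFactorsList hmem)
    have h2 := Nat.prod_primeFactorsList hn0
    rw [hl, List.prod_append, List.prod_cons] at h2
    have hApos : 0 < A.prod := by
      rcases Nat.eq_zero_or_pos A.prod with h0 | h0
      · rw [h0, zero_mul] at h2; omega
      · exact h0
    have hs : sm n p ≤ A.prod := by
      unfold sm
      have hsort' := hsort.pairwise
      rw [hl, List.pairwise_append] at hsort'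
      obtain ⟨-, hs2, hs3⟩ := hsort'
      rw [hl, List.filter_append, (List.filter_eq_nil_iff (l := p :: B)).2, List.append_nil]
      · exact Nat.le_of_dvd hApos (List.filter_sublist).prod_dvd_prod
      · intro q hq
        rcases List.mem_cons.1 hq with rfl | hq
        · simp
        · simpa using (List.pairwise_cons.1 hs2).1 q hq
    refine le_of_mul_le_mul_right (a := A.prod) ?_ hApos
    calc p * (p * B.prod) * A.prod = p * n := by rw [← h2]; ring
      _ ≤ N * sm n p := h1
      _ ≤ N * A.prod := Nat.mul_le_mul_left _ hs

lemma SS_real_le_iff {n : ℕ} {x : ℝ} (hx : 0 ≤ x) (hn : 1 ≤ n) : (SS n : ℝ) ≤ x ↔ n ∈ AA ⌊x⌋₊ := by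
  rw [← SS_le_iff_mem hn, Nat.le_floor_iff hx]

lemma chain_length_le {x : ℝ} (hx : 0 ≤ x) {l : List ℕ} (hl : IsDivChain l)
    (h : ∀ n ∈ l, 1 ≤ n ∧ (SS n : ℝ) ≤ x) : l.length ≤ (AA ⌊x⌋₊).card := by
  rw [← List.toFinset_card_of_nodup hl.1]
  refine Finset.card_le_card fun n hn => ?_
  rw [List.mem_toFinset] at hn
  exact (SS_real_le_iff hx (h n hn).1).1 (h n hn).2

lemma fa_le {x : ℝ} (hx : 0 ≤ x) : fa x ≤ (AA ⌊x⌋₊).card := by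
  unfold fa
  refine csSup_le ⟨0, [], ?_, ?_, ?_⟩ ?_
  · exact ⟨List.nodup_nil, by simp, List.isChain_nil⟩
  · simp
  · rfl
  · rintro L ⟨l, hl, h, rfl⟩
    exact chain_length_le hx hl h

lemma le_fa {x : ℝ} (hx : 0 ≤ x) {l : List ℕ} (h1 : l.Nodup) (h2 : ∀ n ∈ l, n ∈ AA ⌊x⌋₊)
    (h3 : l.IsChain (fun a b => a ∣ b ∨ b ∣ a)) : l.length ≤ fa x := by
  unfold fa
  refine le_csSup ⟨(AA ⌊x⌋₊).card, ?_⟩ ⟨l, ⟨h1, ?_, h3⟩, ?_, rfl⟩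
  · rintro L ⟨l, hl, h, rfl⟩
    exact chain_length_le hx hl h
  · intro n hn
    exact (mem_AA.1 (h2 n hn)).1.1
  · intro n hn
    have := (mem_AA.1 (h2 n hn)).1.1
    exact ⟨this, (SS_real_le_iff hx this).2 (h2 n hn)⟩

/-- There exist reals `c` and `K` with `K > c > 0` such that for all `x ≥ 2`,
`c·x/log x ≤ f_a(x) ≤ K·x/log x`. -/
theorem stmt_2 : ∃ c K : ℝ, 0 < c ∧ c < K ∧ ∀ x : ℝ, 2 ≤ x →
    c * x / Real.log x ≤ (fa x : ℝ) ∧ (fa x : ℝ) ≤ K * x / Real.log x := by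
  obtain ⟨K, hK, hup⟩ := AA_upper
  obtain ⟨N1, c, hN1, hc, hlow⟩ := chain_lower
  have hl2 : 0 < Real.log 2 := Real.log_pos (by norm_num)
  set c' : ℝ := min (c / 2) (Real.log 2 / (N1 + 1)) with hc'
  have hN1' : (0 : ℝ) < N1 + 1 := by positivity
  have hc'0 : 0 < c' := lt_min (by positivity) (by positivity)
  refine ⟨c', 2 * K + c', hc'0, by linarith, ?_⟩
  intro x hx
  have hx0 : (0 : ℝ) ≤ x := by linarith
  have hlx : 0 < Real.log x := Real.log_pos (by linarith)
  have hN2 : 2 ≤ ⌊x⌋₊ := Nat.le_floor (by exact_mod_cast hx)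
  have hNx : ((⌊x⌋₊ : ℕ) : ℝ) ≤ x := Nat.floor_le hx0
  have hxN : x < (⌊x⌋₊ : ℝ) + 1 := Nat.lt_floor_add_one x
  set N := ⌊x⌋₊ with hN
  have hN2' : (2 : ℝ) ≤ N := by exact_mod_cast hN2
  have hlN : 0 < Real.log N := Real.log_pos (by linarith)
  have hlNx : Real.log N ≤ Real.log x := Real.log_le_log (by linarith) hNx
  constructor
  · rw [div_le_iff₀ hlx]
    by_cases hb : N1 ≤ N
    · obtain ⟨l, h1, h2, h3, h4⟩ := hlow N hb
      have h5 : (l.length : ℝ) ≤ fa x := by exact_mod_cast le_fa hx0 h1 h2 h3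
      rw [div_le_iff₀ hlN] at h4
      have h6 : c' ≤ c / 2 := min_le_left _ _
      calc c' * x ≤ c / 2 * x := mul_le_mul_of_nonneg_right h6 hx0
        _ ≤ c * N := by nlinarith
        _ ≤ l.length * Real.log N := h4
        _ ≤ fa x * Real.log x := mul_le_mul h5 hlNx hlN.le (by positivity)
    · have h1 : ([1] : List ℕ).length ≤ fa x := by
        refine le_fa hx0 (by simp) ?_ (by simp)
        intro n hn
        rw [List.mem_singleton] at hn
        subst hn
        refine mem_AA.2 ⟨⟨le_rfl, by omega⟩, fun p hp hd => ?_⟩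
        exact absurd (Nat.dvd_one.1 hd) hp.one_lt.ne'
      have h1' : (1 : ℝ) ≤ fa x := by exact_mod_cast h1
      have h2 : x ≤ N1 + 1 := by
        have : (N : ℝ) + 1 ≤ N1 := by exact_mod_cast (by omega : N + 1 ≤ N1)
        linarith
      have h6 : c' ≤ Real.log 2 / (N1 + 1) := min_le_right _ _
      calc c' * x ≤ Real.log 2 / (N1 + 1) * (N1 + 1) := mul_le_mul h6 h2 hx0 (by positivity)
        _ = Real.log 2 := by field_simp
        _ ≤ Real.log x := Real.log_le_log (by norm_num) hx
        _ ≤ fa x * Real.log x := by nlinarith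
  · have h1 : (fa x : ℝ) ≤ (AA N).card := by exact_mod_cast fa_le hx0
    have h2 := hup N hN2
    have h3 : Real.log x ≤ 2 * Real.log N := by
      rw [← Real.log_rpow (by linarith)]
      refine Real.log_le_log (by linarith) ?_
      norm_num
      nlinarith
    have h4 : K * N / Real.log N ≤ 2 * K * x / Real.log x := by
      rw [div_le_div_iff₀ hlN hlx]
      calc K * N * Real.log x ≤ K * x * (2 * Real.log N) := by
            refine mul_le_mul ?_ h3 hlx.le (by positivity)
            exact mul_le_mul_of_nonneg_left hNx hK.le
        _ = _ := by ring
    have h5 : 2 * K * x / Real.log x ≤ (2 * K + c') * x / Real.log x := by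
      refine div_le_div_of_nonneg_right ?_ hlx.le
      nlinarith
    linarith
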